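/- arXiv:q-alg/9412003 — 4 statements merged into one kernel-verified Lean document; each statement's English description precedes it below -/
import Mathlib

section
/- In a braided quantum group, the pentagonal relations (id⊗φ)σ = (τ⊗id)(id⊗σ)(φ⊗id), (φ⊗id)σ = (id⊗σ)(τ⊗id)(id⊗φ), and (id⊗φ)σ = (σ⊗id)(id⊗τ)(φ⊗id) hold, where τ is the secondary braiding. -/
open TensorProduct LinearMap

noncomputable section

variable (A : Type*) [Ring A] [Algebra ℂ A]

/-- Two-fold tensor product of `A` with itself. -/
abbrev T2 := A ⊗[ℂ] A
/-- Three-fold tensor product (right associated). -/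
abbrev T3 := A ⊗[ℂ] (A ⊗[ℂ] A)
/-- Four-fold tensor product (right associated). -/
abbrev T4 := A ⊗[ℂ] (A ⊗[ℂ] (A ⊗[ℂ] A))

variable {A}

/-- The multiplication of `A` as a linear map. -/
def mA : T2 A →ₗ[ℂ] A := LinearMap.mul' ℂ A

/-- `f ⊗ id` : a map of `T2` acting on the factors 1,2 of `T3`. -/
def op12 (f : T2 A →ₗ[ℂ] T2 A) : T3 A →ₗ[ℂ] T3 A :=
  (TensorProduct.assoc ℂ A A A).toLinearMap ∘ₗ f.rTensor A ∘ₗ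
    (TensorProduct.assoc ℂ A A A).symm.toLinearMap

/-- `id ⊗ f` : a map of `T2` acting on the factors 2,3 of `T3`. -/
def op23 (f : T2 A →ₗ[ℂ] T2 A) : T3 A →ₗ[ℂ] T3 A := f.lTensor A

/-- `f ⊗ id ⊗ id` : a map of `T2` acting on the factors 1,2 of `T4`. -/
def op12_4 (f : T2 A →ₗ[ℂ] T2 A) : T4 A →ₗ[ℂ] T4 A :=
  (TensorProduct.assoc ℂ A A (T2 A)).toLinearMap ∘ₗ f.rTensor (T2 A) ∘ₗ
    (TensorProduct.assoc ℂ A A (T2 A)).symm.toLinearMap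

/-- `id ⊗ f ⊗ id` : a map of `T2` acting on the factors 2,3 of `T4`. -/
def op23_4 (f : T2 A →ₗ[ℂ] T2 A) : T4 A →ₗ[ℂ] T4 A := (op12 f).lTensor A

/-- `id ⊗ id ⊗ f` : a map of `T2` acting on the factors 3,4 of `T4`. -/
def op34_4 (f : T2 A →ₗ[ℂ] T2 A) : T4 A →ₗ[ℂ] T4 A := (f.lTensor A).lTensor A

/-- `m ⊗ id : T3 → T2`. -/
def m12 : T3 A →ₗ[ℂ] T2 A :=
  (mA (A := A)).rTensor A ∘ₗ (TensorProduct.assoc ℂ A A A).symm.toLinearMap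

/-- `id ⊗ m : T3 → T2`. -/
def m23 : T3 A →ₗ[ℂ] T2 A := (mA (A := A)).lTensor A

/-- `m ⊗ m : T4 → T2`. -/
def mm : T4 A →ₗ[ℂ] T2 A := m12 ∘ₗ ((mA (A := A)).lTensor A).lTensor A

/-- A braided quantum group structure on the algebra `A` (Đurđević).
`φ` is the coproduct, `ε` the counit, `κ` the antipode, `σ` the braiding
(with given inverse `σ'`). -/
structure BQG (A : Type*) [Ring A] [Algebra ℂ A] where
  φ : A →ₗ[ℂ] T2 A
  ε : A →ₗ[ℂ] ℂ
  κ : A →ₗ[ℂ] A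
  σ : T2 A →ₗ[ℂ] T2 A
  σ' : T2 A →ₗ[ℂ] T2 A
  σ_comp : σ ∘ₗ σ' = LinearMap.id
  comp_σ : σ' ∘ₗ σ = LinearMap.id
  κ_bij : Function.Bijective κ
  /-- coassociativity `(φ⊗id)φ = (id⊗φ)φ` -/
  coassoc : (TensorProduct.assoc ℂ A A A).toLinearMap ∘ₗ φ.rTensor A ∘ₗ φ = φ.lTensor A ∘ₗ φ
  /-- `(ε⊗id)φ = id` -/
  counit_left : (TensorProduct.lid ℂ A).toLinearMap ∘ₗ ε.rTensor A ∘ₗ φ = LinearMap.id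
  /-- `(id⊗ε)φ = id` -/
  counit_right : (TensorProduct.rid ℂ A).toLinearMap ∘ₗ ε.lTensor A ∘ₗ φ = LinearMap.id
  /-- `σ(m⊗id) = (id⊗m)(σ⊗id)(id⊗σ)` -/
  braid_mul_left : σ ∘ₗ m12 = m23 ∘ₗ op12 σ ∘ₗ op23 σ
  /-- `σ(id⊗m) = (m⊗id)(id⊗σ)(σ⊗id)` -/
  braid_mul_right : σ ∘ₗ m23 = m12 ∘ₗ op23 σ ∘ₗ op12 σ
  /-- `φm = (m⊗m)(id⊗σ⊗id)(φ⊗φ)` -/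
  comul_mul : φ ∘ₗ mA = mm ∘ₗ op23_4 σ ∘ₗ
      (TensorProduct.assoc ℂ A A (T2 A)).toLinearMap ∘ₗ φ.rTensor (T2 A) ∘ₗ φ.lTensor A
  /-- `(σ⊗id²)(id⊗φ⊗id)(σ⁻¹⊗id)(id⊗φ) = (id²⊗σ)(id⊗φ⊗id)(id⊗σ⁻¹)(φ⊗id)` -/
  mixed_coassoc :
    op12_4 σ ∘ₗ ((TensorProduct.assoc ℂ A A A).toLinearMap ∘ₗ φ.rTensor A).lTensor A ∘ₗ
        op12 σ' ∘ₗ φ.lTensor A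
      = op34_4 σ ∘ₗ ((TensorProduct.assoc ℂ A A A).toLinearMap ∘ₗ φ.rTensor A).lTensor A ∘ₗ
        op23 σ' ∘ₗ (TensorProduct.assoc ℂ A A A).toLinearMap ∘ₗ φ.rTensor A
  /-- `m(κ⊗id)φ = 1ε` -/
  antipode_left : mA ∘ₗ κ.rTensor A ∘ₗ φ = Algebra.linearMap ℂ A ∘ₗ ε
  /-- `m(id⊗κ)φ = 1ε` -/
  antipode_right : mA ∘ₗ κ.lTensor A ∘ₗ φ = Algebra.linearMap ℂ A ∘ₗ ε

namespace BQG

variable {A : Type*} [Ring A] [Algebra ℂ A] (G : BQG A)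

/-- `φ ⊗ id : T2 → T3`. -/
def φ1 : T2 A →ₗ[ℂ] T3 A := (TensorProduct.assoc ℂ A A A).toLinearMap ∘ₗ G.φ.rTensor A

/-- `id ⊗ φ : T2 → T3`. -/
def φ2 : T2 A →ₗ[ℂ] T3 A := G.φ.lTensor A

/-- `id² ⊗ ε : T3 → T2`. -/
def ε3r : T3 A →ₗ[ℂ] T2 A :=
  ((TensorProduct.rid ℂ A).toLinearMap ∘ₗ G.ε.lTensor A).lTensor A

/-- `ε ⊗ id² : T3 → T2`. -/
def ε3l : T3 A →ₗ[ℂ] T2 A :=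
  (TensorProduct.lid ℂ (T2 A)).toLinearMap ∘ₗ G.ε.rTensor (T2 A)

/-- The secondary braiding `τ = (id²⊗ε)(id⊗σ⁻¹)(φ⊗id)σ`. -/
def τ : T2 A →ₗ[ℂ] T2 A := G.ε3r ∘ₗ op23 G.σ' ∘ₗ G.φ1 ∘ₗ G.σ

/-- `ε ⊗ ε : T2 → ℂ`. -/
def εε : T2 A →ₗ[ℂ] ℂ :=
  (TensorProduct.lid ℂ ℂ).toLinearMap ∘ₗ G.ε.rTensor ℂ ∘ₗ G.ε.lTensor A

end BQG

universe u

/-- Abstract strand calculus: an add-one-strand operation `F` on modules with natural families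
of structure maps acting on the outermost strands. -/
structure Sys where
  F : ModuleCat.{u} ℂ → ModuleCat.{u} ℂ
  L : ∀ {X Y : ModuleCat.{u} ℂ}, (X →ₗ[ℂ] Y) → (F X →ₗ[ℂ] F Y)
  L_comp : ∀ {X Y Z : ModuleCat.{u} ℂ} (f : Y →ₗ[ℂ] Z) (g : X →ₗ[ℂ] Y) (x : F X),
    L (f ∘ₗ g) x = L f (L g x)
  L_id : ∀ {X : ModuleCat.{u} ℂ} (x : F X), L (LinearMap.id : X →ₗ[ℂ] X) x = x
  P : ∀ {X : ModuleCat.{u} ℂ}, F X →ₗ[ℂ] F (F X)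
  S : ∀ {X : ModuleCat.{u} ℂ}, F (F X) →ₗ[ℂ] F (F X)
  S' : ∀ {X : ModuleCat.{u} ℂ}, F (F X) →ₗ[ℂ] F (F X)
  M : ∀ {X : ModuleCat.{u} ℂ}, F (F X) →ₗ[ℂ] F X
  E : ∀ {X : ModuleCat.{u} ℂ}, F X →ₗ[ℂ] X
  U : ∀ {X : ModuleCat.{u} ℂ}, X →ₗ[ℂ] F X
  K : ∀ {X : ModuleCat.{u} ℂ}, F X →ₗ[ℂ] F X
  K' : ∀ {X : ModuleCat.{u} ℂ}, F X →ₗ[ℂ] F X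
  P_nat : ∀ {X Y : ModuleCat.{u} ℂ} (g : X →ₗ[ℂ] Y) (x : F X), P (L g x) = L (L g) (P x)
  S_nat : ∀ {X Y : ModuleCat.{u} ℂ} (g : X →ₗ[ℂ] Y) (x : F (F X)),
    S (L (L g) x) = L (L g) (S x)
  S'_nat : ∀ {X Y : ModuleCat.{u} ℂ} (g : X →ₗ[ℂ] Y) (x : F (F X)),
    S' (L (L g) x) = L (L g) (S' x)
  M_nat : ∀ {X Y : ModuleCat.{u} ℂ} (g : X →ₗ[ℂ] Y) (x : F (F X)),
    M (L (L g) x) = L g (M x)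
  E_nat : ∀ {X Y : ModuleCat.{u} ℂ} (g : X →ₗ[ℂ] Y) (x : F X), E (L g x) = g (E x)
  U_nat : ∀ {X Y : ModuleCat.{u} ℂ} (g : X →ₗ[ℂ] Y) (x : X), U (g x) = L g (U x)
  K_nat : ∀ {X Y : ModuleCat.{u} ℂ} (g : X →ₗ[ℂ] Y) (x : F X), K (L g x) = L g (K x)
  SS' : ∀ {X : ModuleCat.{u} ℂ} (x : F (F X)), S (S' x) = x
  S'S : ∀ {X : ModuleCat.{u} ℂ} (x : F (F X)), S' (S x) = x
  KK' : ∀ {X : ModuleCat.{u} ℂ} (x : F X), K (K' x) = x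
  K'K : ∀ {X : ModuleCat.{u} ℂ} (x : F X), K' (K x) = x
  coassoc : ∀ {X : ModuleCat.{u} ℂ} (x : F X), P (P x) = L P (P x)
  EP : ∀ {X : ModuleCat.{u} ℂ} (x : F X), E (P x) = x
  LEP : ∀ {X : ModuleCat.{u} ℂ} (x : F X), L E (P x) = x
  MU : ∀ {X : ModuleCat.{u} ℂ} (x : F X), M (U x) = x
  MLU : ∀ {X : ModuleCat.{u} ℂ} (x : F X), M (L U x) = x
  assocM : ∀ {X : ModuleCat.{u} ℂ} (x : F (F (F X))), M (L M x) = M (M x)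
  hexL : ∀ {X : ModuleCat.{u} ℂ} (x : F (F (F X))), S (M x) = L M (S (L S x))
  hexR : ∀ {X : ModuleCat.{u} ℂ} (x : F (F (F X))), S (L M x) = M (L S (S x))
  comul_mul : ∀ {X : ModuleCat.{u} ℂ} (x : F (F X)),
    P (M x) = M (L (L M) (L S (P (L P x))))
  mixed : ∀ {X : ModuleCat.{u} ℂ} (x : F (F X)),
    S (L P (S' (L P x))) = L (L S) (L P (L S' (P x)))
  antL : ∀ {X : ModuleCat.{u} ℂ} (x : F X), M (K (P x)) = U (E x)
  antR : ∀ {X : ModuleCat.{u} ℂ} (x : F X), M (L K (P x)) = U (E x)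

namespace Sys

variable (s : Sys.{u}) {X Y Z W V Y' Z' : ModuleCat.{u} ℂ}

lemma sh20 {f : Y →ₗ[ℂ] X} {g : X →ₗ[ℂ] Y} (h : ∀ x, f (g x) = x) (x : s.F X) :
    s.L f (s.L g x) = x := by
  rw [← s.L_comp, show f ∘ₗ g = LinearMap.id from LinearMap.ext h, s.L_id]

lemma sh21 {f : Y →ₗ[ℂ] Z} {g : X →ₗ[ℂ] Y} {k : X →ₗ[ℂ] Z}
    (h : ∀ x, f (g x) = k x) (x : s.F X) : s.L f (s.L g x) = s.L k x := by
  rw [← s.L_comp, show f ∘ₗ g = k from LinearMap.ext h]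

lemma sh22 {f : Y →ₗ[ℂ] Z} {g : X →ₗ[ℂ] Y} {f' : Y' →ₗ[ℂ] Z} {g' : X →ₗ[ℂ] Y'}
    (h : ∀ x, f (g x) = f' (g' x)) (x : s.F X) :
    s.L f (s.L g x) = s.L f' (s.L g' x) := by
  rw [← s.L_comp, show f ∘ₗ g = f' ∘ₗ g' from LinearMap.ext h, s.L_comp]

lemma sh32 {f : Z →ₗ[ℂ] W} {f1 : Y →ₗ[ℂ] Z} {g : X →ₗ[ℂ] Y}
    {f' : Y' →ₗ[ℂ] W} {g' : X →ₗ[ℂ] Y'}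
    (h : ∀ x, f (f1 (g x)) = f' (g' x)) (x : s.F X) :
    s.L f (s.L f1 (s.L g x)) = s.L f' (s.L g' x) := by
  rw [← s.L_comp f1]
  exact s.sh22 (g := f1 ∘ₗ g) h x

lemma sh31 {f : Z →ₗ[ℂ] W} {f1 : Y →ₗ[ℂ] Z} {g : X →ₗ[ℂ] Y} {k : X →ₗ[ℂ] W}
    (h : ∀ x, f (f1 (g x)) = k x) (x : s.F X) :
    s.L f (s.L f1 (s.L g x)) = s.L k x := by
  rw [← s.L_comp f1]
  exact s.sh21 (g := f1 ∘ₗ g) h x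

lemma S'hex (x : s.F (s.F (s.F X))) : s.S' (s.M x) = s.L s.M (s.S' (s.L s.S' x)) := by
  have h := s.hexR (s.S' (s.L s.S' x))
  rw [s.SS', s.sh20 s.SS'] at h
  rw [← h, s.S'S]

lemma S'U (x : s.F X) : s.S' (s.U x) = s.L s.U x := by
  have key : ∀ z : s.F (s.F X), s.M (s.L s.S (s.L (s.L s.U) z)) = z := by
    intro z
    have h := s.hexR (s.L (s.L s.U) (s.S' z))
    rw [s.sh20 s.MLU, s.SS', s.S_nat, s.SS'] at h
    exact h.symm
  have h := key (s.U x)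
  rw [← s.U_nat, ← s.U_nat, s.MU] at h
  rw [← h, s.S'S]

/-- `(εm ⊗ id)(id ⊗ σ)(φ ⊗ id) = id ⊗ ε`. -/
lemma E1 (y : s.F (s.F X)) : s.E (s.M (s.L s.S (s.P y))) = s.L s.E y := by
  have step : ∀ {Y : ModuleCat.{u} ℂ} (x : s.F (s.F Y)),
      s.M x = s.M (s.E (s.M (s.L s.S (s.P (s.L s.P x))))) := by
    intro Y x
    have h := congrArg s.E (s.comul_mul x)
    rw [s.EP, s.M_nat, s.E_nat] at h
    exact h
  have h := congrArg s.M (step (s.L (s.L s.K) (s.L s.P y)))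
  rw [← s.assocM, s.sh32 s.antR, s.sh21 (k := s.U ∘ₗ s.E) (fun _ => rfl), s.L_comp, s.MLU] at h
  rw [h, ← s.assocM]
  have nat : ∀ {Y Z : ModuleCat.{u} ℂ} (g : Y →ₗ[ℂ] Z) (x : s.F (s.F Y)),
      s.E (s.M (s.L s.S (s.P (s.L (s.L g) x)))) = s.L g (s.E (s.M (s.L s.S (s.P x)))) := by
    intro Y Z g x
    rw [s.P_nat, s.sh22 (s.S_nat g), s.M_nat, s.E_nat]
  rw [← nat]
  have e : s.L (s.L s.M) (s.L s.P (s.L (s.L s.K) (s.L s.P y))) = s.L (s.L s.U) y := by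
    rw [s.sh22 (s.P_nat s.K), s.sh22 s.coassoc,
      s.sh32 (s.sh32 s.antR), s.sh20 s.LEP]
  rw [e, nat, s.MLU]

/-- `(id ⊗ εm)(σ ⊗ id)(id ⊗ φ) = ε ⊗ id`. -/
lemma E2 (y : s.F (s.F X)) : s.L s.E (s.L s.M (s.S (s.L s.P y))) = s.E y := by
  obtain ⟨r, hr⟩ : ∃ r : s.F (s.F X) →ₗ[ℂ] s.F X,
    r = s.L s.E ∘ₗ s.L s.M ∘ₗ s.S ∘ₗ s.L s.P := ⟨_, rfl⟩
  have step : ∀ x : s.F (s.F X), s.M (s.L r (s.P x)) = s.M x := by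
    intro x
    have h := congrArg (s.L s.E) (s.comul_mul x)
    rw [s.LEP, ← s.M_nat, s.P_nat] at h
    rw [hr]
    simpa only [s.L_comp] using h.symm
  have h := s.assocM (s.K (s.P y))
  rw [s.antL, s.MU, ← s.sh31 step, s.assocM, s.M_nat, ← s.K_nat, ← s.coassoc, s.antL, s.EP,
    ← s.U_nat, s.MU, hr] at h
  exact h

/-- `α = (ε ⊗ id²)(σ⁻¹ ⊗ id)(id ⊗ φ)`. -/
def α : s.F (s.F X) →ₗ[ℂ] s.F (s.F X) := s.E ∘ₗ s.S' ∘ₗ s.L s.P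

/-- `β = (id² ⊗ ε)(id ⊗ σ⁻¹)(φ ⊗ id)`. -/
def β : s.F (s.F X) →ₗ[ℂ] s.F (s.F X) := s.L (s.L s.E) ∘ₗ s.L s.S' ∘ₗ s.P

lemma α_def (x : s.F (s.F X)) : s.α x = s.E (s.S' (s.L s.P x)) := rfl
lemma β_def (x : s.F (s.F X)) : s.β x = s.L (s.L s.E) (s.L s.S' (s.P x)) := rfl

lemma αβ (x : s.F (s.F X)) : s.α x = s.β x := by
  have h := congrArg (s.L s.E) (congrArg (s.L s.M) (s.mixed x))
  rw [s.E2] at h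
  rw [α_def, h, β_def, ← s.L_comp s.M, ← s.L_comp s.E, ← s.L_comp _ s.P,
    show (s.E ∘ₗ s.M ∘ₗ s.L s.S) ∘ₗ s.P = s.L (s.E (X := X)) from LinearMap.ext s.E1]

lemma α_nat (g : X →ₗ[ℂ] Y) (x : s.F (s.F X)) : s.α (s.L (s.L g) x) = s.L (s.L g) (s.α x) := by
  rw [α_def, α_def, s.sh22 (s.P_nat g), s.S'_nat, s.E_nat]

/-- `φ₁ α = α₂₃ φ₁`. -/
lemma Pα (x : s.F (s.F X)) : s.P (s.α x) = s.L s.α (s.P x) := by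
  rw [show (s.α : s.F (s.F X) →ₗ[ℂ] _) = s.β from LinearMap.ext s.αβ, β_def, s.P_nat, s.P_nat,
    s.coassoc, β, s.L_comp, s.L_comp]

/-- `φ₂ α = α₁₂ φ₂`. -/
lemma LPα (x : s.F (s.F X)) : s.L s.P (s.α x) = s.α (s.L s.P x) := by
  rw [α_def, α_def, ← s.E_nat, ← s.S'_nat, s.sh22 s.coassoc]

/-- The inverse form of the mixed relation. -/
lemma mixed' (x : s.F (s.F X)) :
    s.L (s.L s.S') (s.L s.P (s.S' (s.L s.P x))) = s.S' (s.L s.P (s.L s.S' (s.P x))) := by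
  have h := congrArg (s.L (s.L s.S')) (congrArg s.S' (s.mixed x))
  rw [s.S'S, s.S'_nat, s.sh20 (s.sh20 s.S'S)] at h
  exact h

lemma vα (x : s.F (s.F X)) : s.L s.S' (s.P (s.α x)) = s.α (s.L s.S' (s.P x)) := by
  have h := congrArg s.E (s.mixed' x)
  rw [s.E_nat, s.E_nat] at h
  exact h

lemma wα (x : s.F (s.F X)) : s.S' (s.L s.P (s.α x)) = s.L s.α (s.S' (s.L s.P x)) := by
  have h := congrArg (s.L (s.L (s.L s.E))) (s.mixed' x)
  rw [s.sh31 (k := s.α) (fun y => by rw [s.αβ, β_def]), ← s.S'_nat, ← s.sh22 (s.P_nat s.E),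
    ← s.β_def, ← s.αβ] at h
  exact h.symm

/-- Key computation for cancelling `(id ⊗ σ⁻¹)(φ ⊗ id)`. -/
lemma core (x : s.F (s.F X)) :
    s.L (s.L s.M) (s.L s.S' (s.P (s.L s.S' (s.L s.K (s.P x))))) = s.L (s.L s.U) x := by
  rw [s.P_nat, s.P_nat, s.coassoc, s.sh32 (f' := s.S' ∘ₗ s.M) (g' := LinearMap.id)
    (fun y => (s.S'hex y).symm), s.L_id, s.L_comp, s.sh32 s.antR, s.LEP, s.sh21 s.S'U]

/-- `T = (ε ⊗ id) σ⁻¹`. -/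
def T : s.F (s.F X) →ₗ[ℂ] s.F X := s.E ∘ₗ s.S'

lemma T_def (x : s.F (s.F X)) : s.T x = s.E (s.S' x) := rfl

lemma T_eq (x : s.F (s.F X)) : s.T x = s.L s.E (s.α x) := by
  rw [T_def, α_def, ← s.E_nat, ← s.S'_nat, s.sh20 s.LEP]

lemma T_nat (g : X →ₗ[ℂ] Y) (x : s.F (s.F X)) : s.T (s.L (s.L g) x) = s.L g (s.T x) := by
  rw [T_def, T_def, s.S'_nat, s.E_nat]

lemma PT (x : s.F (s.F X)) : s.P (s.T x) = s.L s.T (s.P x) := by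
  rw [T_eq, s.P_nat, s.Pα, s.sh21 (k := s.T) (fun y => (s.T_eq y).symm)]

lemma KvS (y : s.F (s.F X)) : s.L s.M (s.S' (s.K (s.L s.S' (s.P y)))) = s.L s.U (s.E y) := by
  rw [s.K_nat, ← s.S'hex, s.antL, s.S'U]

lemma TKα (x : s.F (s.F X)) : s.T (s.K (s.α x)) = s.L s.E (s.K x) := by
  have main : ∀ {Y : ModuleCat.{u} ℂ} (x : s.F (s.F Y)),
      s.M (s.T (s.K (s.α (s.L s.S' (s.P x))))) = s.M (s.L s.E (s.K (s.L s.S' (s.P x)))) := by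
    intro Y x
    rw [← s.vα, T_def, ← s.E_nat, s.KvS, s.E_nat, ← s.K_nat,
      s.sh21 (k := s.T) (fun y => (s.T_def y).symm), ← s.PT, s.antL, s.T_eq, s.E_nat]
  have h := congrArg s.M (main (s.L s.S' (s.L s.K (s.P x))))
  rw [← s.assocM, ← s.assocM, ← s.T_nat, ← s.K_nat, ← s.α_nat, s.core, s.α_nat, s.K_nat, s.T_nat,
    s.MLU] at h
  rw [h, ← s.sh22 (s.E_nat s.M), ← s.K_nat, s.core, s.K_nat, s.sh22 (s.E_nat s.U),
    s.MLU]

lemma αKα (x : s.F (s.F X)) : s.α (s.K (s.α x)) = s.K x := by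
  rw [s.α_def (s.K (s.α x)), ← s.T_def, ← s.K_nat, s.LPα, s.TKα, ← s.K_nat, s.sh20 s.EP]

/-- The inverse of `α`. -/
def a : s.F (s.F X) →ₗ[ℂ] s.F (s.F X) := s.K' ∘ₗ s.α ∘ₗ s.K

lemma a_def (x : s.F (s.F X)) : s.a x = s.K' (s.α (s.K x)) := rfl

lemma aα (x : s.F (s.F X)) : s.a (s.α x) = x := by
  rw [a_def, s.αKα, s.K'K]

lemma α_right (x : s.F (s.F X)) : s.α (s.K (s.α (s.K' x))) = x := by
  rw [s.αKα, s.KK']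

lemma a_eq (x : s.F (s.F X)) : s.a x = s.K (s.α (s.K' x)) := by
  conv_lhs => rw [← s.α_right x]
  rw [s.aα]

lemma αa (x : s.F (s.F X)) : s.α (s.a x) = x := by
  rw [s.a_eq, s.α_right]

lemma Ka (x : s.F (s.F X)) : s.K (s.a x) = s.α (s.K x) := by
  rw [a_def, s.KK']

lemma Kα (x : s.F (s.F X)) : s.K (s.α x) = s.a (s.K x) := by
  rw [a_eq, s.K'K]

lemma LPa (x : s.F (s.F X)) : s.L s.P (s.a x) = s.a (s.L s.P x) := by
  rw [← s.aα (s.L s.P (s.a x)), ← s.LPα, s.αa]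

lemma wa (x : s.F (s.F X)) : s.S' (s.L s.P (s.a x)) = s.L s.a (s.S' (s.L s.P x)) := by
  conv_rhs => rw [← s.αa x, s.wα, s.sh20 s.aα]

lemma Eα (y : s.F (s.F X)) : s.E (s.α y) = s.L s.E (s.S' y) := by
  rw [s.αβ, β_def, s.E_nat, s.E_nat, s.EP]

lemma G2 (x : s.F (s.F X)) :
    s.L s.S' (s.L s.K (s.S' (s.L s.P x))) = s.P (s.S' (s.K (s.α x))) := by
  have main : ∀ {Y : ModuleCat.{u} ℂ} (x : s.F (s.F Y)),
      s.L (s.L s.M) (s.L s.S' (s.L s.K (s.S' (s.L s.P (s.L s.S' (s.P x)))))) =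
      s.L (s.L s.M) (s.P (s.S' (s.K (s.α (s.L s.S' (s.P x)))))) := by
    intro Y x
    rw [← s.vα, ← s.P_nat, s.KvS, s.P_nat, ← s.E_nat, s.LPα, s.Eα, ← s.mixed']
    generalize s.S' (s.L s.P x) = w
    have h := fun w => s.sh22 (f := s.L s.M ∘ₗ s.S' ∘ₗ s.K ∘ₗ s.L s.S') (g := s.P)
      (f' := s.L s.U) (g' := s.E) (s.KvS (X := Y)) w
    simp only [s.L_comp] at h
    exact h w
  have h := congrArg (s.L (s.L s.M)) (main (s.L s.S' (s.L s.K (s.P x))))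
  rw [← s.sh22 (s.sh22 s.assocM), ← s.sh22 (s.sh22 s.assocM), ← s.sh22 (s.S'_nat s.M), ← s.sh22 (s.K_nat (s.L s.M)),
    ← s.S'_nat, ← s.sh22 (s.P_nat s.M), s.core, s.sh22 (s.P_nat s.U), s.S'_nat,
    s.sh22 (s.K_nat (s.L s.U)), s.sh22 (s.S'_nat s.U), s.sh20 (s.sh20 s.MLU),
    ← s.P_nat (s.L s.M), ← s.S'_nat, ← s.K_nat (s.L s.M), ← s.α_nat, s.core, s.α_nat, s.K_nat, s.S'_nat,
    s.P_nat, s.sh20 (s.sh20 s.MLU)] at h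
  exact h

lemma w_S' (y : s.F (s.F X)) : s.L (s.L s.E) (s.S' (s.L s.P y)) = s.S' y := by
  rw [← s.S'_nat, s.sh20 s.LEP]

lemma TK (y : s.F (s.F X)) : s.T (s.K y) = s.K (s.L s.E (s.a y)) := by
  rw [T_eq, ← s.Ka, s.K_nat]

lemma KS_aux (x : s.F (s.F X)) : s.L s.K (s.S' (s.a x)) = s.S' (s.a (s.K x)) := by
  have h := congrArg (s.L s.E) (s.G2 x)
  rw [s.LEP, s.Kα, s.sh21 (k := s.T) (fun y => (s.T_def y).symm),
    s.sh22 (f' := s.K ∘ₗ s.L s.E) (g' := s.a) s.TK, ← s.wa, s.L_comp, s.w_S'] at h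
  exact h

lemma KS (y : s.F (s.F X)) : s.L s.K (s.S' y) = s.S' (s.a (s.a (s.K y))) := by
  have h := s.KS_aux (s.α y)
  rw [s.aα, s.Kα] at h
  exact h

lemma R1 (y : s.F (s.F X)) : s.P (s.S' (s.α y)) = s.L s.S' (s.S' (s.L s.P y)) := by
  have h := s.G2 (s.K' (s.α (s.α y)))
  rw [s.KS, s.K_nat, ← s.LPa, ← s.LPa, s.Kα, s.KK', s.aα, s.aα] at h
  exact h.symm

lemma P0 (x : s.F (s.F X)) : s.L s.P (s.a (s.S x)) = s.S (s.L s.S (s.P x)) := by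
  have h := s.R1 (s.a (s.S x))
  rw [s.αa, s.S'S] at h
  rw [h, s.sh20 s.SS', s.SS']

lemma P1 (x : s.F (s.F X)) : s.L s.P (s.S x) = s.α (s.S (s.L s.S (s.P x))) := by
  rw [← s.P0, ← s.LPα, s.αa]

lemma P3 (x : s.F (s.F X)) : s.L s.P (s.S x) = s.S (s.L s.α (s.L s.S (s.P x))) := by
  have h := congrArg s.S' (s.P0 x)
  rw [s.S'S] at h
  rw [← h, ← s.wα, s.SS', s.αa]

end Sys

namespace BQG

section Left

variable {A : Type u} [Ring A] [Algebra ℂ A] (G : BQG A)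
variable {X Y Z W : Type u} [AddCommMonoid X] [Module ℂ X] [AddCommMonoid Y] [Module ℂ Y]
  [AddCommMonoid Z] [Module ℂ Z] [AddCommMonoid W] [Module ℂ W]

/-- The inverse of the antipode. -/
def κ' : A →ₗ[ℂ] A := (LinearEquiv.ofBijective G.κ G.κ_bij).symm.toLinearMap

lemma κκ' (x : A) : G.κ (G.κ' x) = x :=
  (LinearEquiv.ofBijective G.κ G.κ_bij).apply_symm_apply x

lemma κ'κ (x : A) : G.κ' (G.κ x) = x :=
  (LinearEquiv.ofBijective G.κ G.κ_bij).symm_apply_apply x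

/-- Apply a map behind the first strand. -/
def lL (g : X →ₗ[ℂ] Y) : A ⊗[ℂ] X →ₗ[ℂ] A ⊗[ℂ] Y := g.lTensor A

/-- `φ` on the first strand. -/
def lP : A ⊗[ℂ] X →ₗ[ℂ] A ⊗[ℂ] (A ⊗[ℂ] X) :=
  (TensorProduct.assoc ℂ A A X).toLinearMap ∘ₗ G.φ.rTensor X

/-- A two strand map on the first two strands. -/
def lS (f : T2 A →ₗ[ℂ] T2 A) : A ⊗[ℂ] (A ⊗[ℂ] X) →ₗ[ℂ] A ⊗[ℂ] (A ⊗[ℂ] X) :=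
  (TensorProduct.assoc ℂ A A X).toLinearMap ∘ₗ f.rTensor X ∘ₗ
    (TensorProduct.assoc ℂ A A X).symm.toLinearMap

/-- `m` on the first two strands. -/
def lM : A ⊗[ℂ] (A ⊗[ℂ] X) →ₗ[ℂ] A ⊗[ℂ] X :=
  (mA (A := A)).rTensor X ∘ₗ (TensorProduct.assoc ℂ A A X).symm.toLinearMap

/-- `ε` on the first strand. -/
def lE : A ⊗[ℂ] X →ₗ[ℂ] X := (TensorProduct.lid ℂ X).toLinearMap ∘ₗ G.ε.rTensor X

/-- The unit as a new first strand. -/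
def lU : X →ₗ[ℂ] A ⊗[ℂ] X := TensorProduct.mk ℂ A X 1

/-- A one strand map on the first strand. -/
def lK (f : A →ₗ[ℂ] A) : A ⊗[ℂ] X →ₗ[ℂ] A ⊗[ℂ] X := f.rTensor X

/-- Insert a tail. -/
def li (t : X) : A →ₗ[ℂ] A ⊗[ℂ] X := (TensorProduct.mk ℂ A X).flip t

lemma lL_tmul (g : X →ₗ[ℂ] Y) (a : A) (x : X) : lL g (a ⊗ₜ[ℂ] x) = a ⊗ₜ[ℂ] g x := rfl

lemma li_def (t : X) (a : A) : li t a = a ⊗ₜ[ℂ] t := rfl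

lemma lL_comp (f : Y →ₗ[ℂ] Z) (g : X →ₗ[ℂ] Y) (x : A ⊗[ℂ] X) :
    lL (f ∘ₗ g) x = lL f (lL g x) := LinearMap.lTensor_comp_apply A f g x

lemma lL_id (x : A ⊗[ℂ] X) : lL (LinearMap.id : X →ₗ[ℂ] X) x = x :=
  LinearMap.lTensor_id_apply A X x

lemma lsh {f : Y →ₗ[ℂ] Z} {g : X →ₗ[ℂ] Y} {f' : W →ₗ[ℂ] Z} {g' : X →ₗ[ℂ] W}
    (h : ∀ x, f (g x) = f' (g' x)) (x : A ⊗[ℂ] X) : lL f (lL g x) = lL f' (lL g' x) := by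
  rw [← lL_comp, show f ∘ₗ g = f' ∘ₗ g' from LinearMap.ext h, lL_comp]

lemma assoc_tail (t : X) (z : T2 A) :
    TensorProduct.assoc ℂ A A X (z ⊗ₜ[ℂ] t) = lL (li t) z := by
  induction z using TensorProduct.induction_on with
  | zero => simp
  | tmul a b => rfl
  | add x y hx hy => rw [TensorProduct.add_tmul, map_add, map_add, hx, hy]

lemma assoc_symm_tail (t : X) (z : T2 A) :
    (TensorProduct.assoc ℂ A A X).symm (lL (li t) z) = z ⊗ₜ[ℂ] t := by
  rw [← assoc_tail, LinearEquiv.symm_apply_apply]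

lemma ext1 {f g : A ⊗[ℂ] X →ₗ[ℂ] Y} (h : ∀ t a, f (li t a) = g (li t a)) (x : A ⊗[ℂ] X) :
    f x = g x := by
  rw [show f = g from TensorProduct.ext' fun a t => h t a]

lemma ext2 {f g : A ⊗[ℂ] (A ⊗[ℂ] X) →ₗ[ℂ] Y}
    (h : ∀ t z, f (lL (li t) z) = g (lL (li t) z)) (x : A ⊗[ℂ] (A ⊗[ℂ] X)) :
    f x = g x := by
  rw [show f = g from TensorProduct.ext_threefold' fun a b t => h t (a ⊗ₜ b)]

lemma ext3 {f g : A ⊗[ℂ] (A ⊗[ℂ] (A ⊗[ℂ] X)) →ₗ[ℂ] Y}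
    (h : ∀ t z, f (lL (lL (li t)) z) = g (lL (lL (li t)) z))
    (x : A ⊗[ℂ] (A ⊗[ℂ] (A ⊗[ℂ] X))) : f x = g x := by
  refine ext1 (fun y a => ?_) x
  refine ext2 (f := f ∘ₗ TensorProduct.mk ℂ A _ a) (g := g ∘ₗ TensorProduct.mk ℂ A _ a)
    (fun t z => ?_) y
  exact h t (a ⊗ₜ z)

lemma lP_tail (t : X) (a : A) : G.lP (li t a) = lL (li t) (G.φ a) := assoc_tail t (G.φ a)

lemma lS_tail (f : T2 A →ₗ[ℂ] T2 A) (t : X) (z : T2 A) :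
    lS f (lL (li t) z) = lL (li t) (f z) := by
  simp only [lS, LinearMap.comp_apply, LinearEquiv.coe_coe, assoc_symm_tail,
    LinearMap.rTensor_tmul, assoc_tail]

lemma lM_tail (t : X) (z : T2 A) : lM (lL (li t) z) = li t (mA z) := by
  simp only [lM, LinearMap.comp_apply, LinearEquiv.coe_coe, assoc_symm_tail,
    LinearMap.rTensor_tmul, li_def]

lemma lE_tail (t : X) (a : A) : G.lE (li t a) = G.ε a • t := by
  simp [lE, li_def]

lemma lU_tail (t : X) : lU t = li t (1 : A) := rfl

lemma lK_tail (f : A →ₗ[ℂ] A) (t : X) (a : A) : lK f (li t a) = li t (f a) := rfl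

lemma lL_li (g : X →ₗ[ℂ] Y) (t : X) (a : A) : lL g (li t a) = li (g t) a := rfl

lemma lLL_li (g : X →ₗ[ℂ] Y) (t : X) (z : T2 A) : lL (lL g) (lL (li t) z) = lL (li (g t)) z := by
  rw [← lL_comp]; rfl

lemma lP_nat (g : X →ₗ[ℂ] Y) (x : A ⊗[ℂ] X) : G.lP (lL g x) = lL (lL g) (G.lP x) := by
  have key := ext1 (f := G.lP ∘ₗ lL g) (g := lL (lL g) ∘ₗ G.lP) (fun t a => by
      simp only [LinearMap.comp_apply, lL_li, lP_tail, lLL_li]) x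
  simpa only [LinearMap.comp_apply, LinearMap.id_apply] using key

lemma lS_nat (f : T2 A →ₗ[ℂ] T2 A) (g : X →ₗ[ℂ] Y) (x : A ⊗[ℂ] (A ⊗[ℂ] X)) :
    lS f (lL (lL g) x) = lL (lL g) (lS f x) := by
  have key := ext2 (f := lS f ∘ₗ lL (lL g)) (g := lL (lL g) ∘ₗ lS f) (fun t a => by
      simp only [LinearMap.comp_apply, lLL_li, lS_tail]) x
  simpa only [LinearMap.comp_apply, LinearMap.id_apply] using key

lemma lM_nat (g : X →ₗ[ℂ] Y) (x : A ⊗[ℂ] (A ⊗[ℂ] X)) :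
    lM (lL (lL g) x) = lL g (lM x) := by
  have key := ext2 (f := lM ∘ₗ lL (lL g)) (g := lL g ∘ₗ lM) (fun t a => by
      simp only [LinearMap.comp_apply, lLL_li, lM_tail, lL_li]) x
  simpa only [LinearMap.comp_apply, LinearMap.id_apply] using key

lemma lE_nat (g : X →ₗ[ℂ] Y) (x : A ⊗[ℂ] X) : G.lE (lL g x) = g (G.lE x) := by
  have key := ext1 (f := G.lE ∘ₗ lL g) (g := g ∘ₗ G.lE) (fun t a => by
      simp only [LinearMap.comp_apply, lL_li, lE_tail, map_smul]) x
  simpa only [LinearMap.comp_apply, LinearMap.id_apply] using key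

lemma lU_nat (g : X →ₗ[ℂ] Y) (x : X) : (lU (g x) : A ⊗[ℂ] Y) = lL g (lU x) := rfl

lemma lK_nat (f : A →ₗ[ℂ] A) (g : X →ₗ[ℂ] Y) (x : A ⊗[ℂ] X) : lK f (lL g x) = lL g (lK f x) := by
  have key := ext1 (f := lK f ∘ₗ lL g) (g := lL g ∘ₗ lK f) (fun _ _ => rfl) x
  simpa only [LinearMap.comp_apply, LinearMap.id_apply] using key

lemma lS_inv (f g : T2 A →ₗ[ℂ] T2 A) (h : f ∘ₗ g = LinearMap.id) (x : A ⊗[ℂ] (A ⊗[ℂ] X)) :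
    lS f (lS g x) = x := by
  have key := ext2 (f := lS f ∘ₗ lS g) (g := LinearMap.id) (fun t a => by
      simp only [LinearMap.comp_apply, lS_tail, LinearMap.id_apply]
      rw [← LinearMap.comp_apply f, h, LinearMap.id_apply]) x
  simpa only [LinearMap.comp_apply, LinearMap.id_apply] using key

lemma lK_inv (f g : A →ₗ[ℂ] A) (h : ∀ x, f (g x) = x) (x : A ⊗[ℂ] X) :
    lK f (lK g x) = x := by
  have key := ext1 (f := lK f ∘ₗ lK g) (g := LinearMap.id) (fun t a => by
      simp only [LinearMap.comp_apply, lK_tail, LinearMap.id_apply, h]) x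
  simpa only [LinearMap.comp_apply, LinearMap.id_apply] using key

lemma l_coassoc (x : A ⊗[ℂ] X) : G.lP (G.lP x) = lL G.lP (G.lP x) := by
  have key := ext1 (f := G.lP ∘ₗ G.lP) (g := lL G.lP ∘ₗ G.lP) (fun t a => by
      simp only [LinearMap.comp_apply, lP_tail, lP_nat]
      rw [lsh (G.lP_tail t)]
      exact congrArg _ (LinearMap.congr_fun G.coassoc a)) x
  simpa only [LinearMap.comp_apply, LinearMap.id_apply] using key

lemma lE_eq (t : X) (z : T2 A) : G.lE (lL (li t) z) = li t (G.lE z) := G.lE_nat (li (A := A) t) z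

lemma l_EP (x : A ⊗[ℂ] X) : G.lE (G.lP x) = x := by
  have key := ext1 (f := G.lE ∘ₗ G.lP) (g := LinearMap.id) (fun t a => by
      simp only [LinearMap.comp_apply, lP_tail, lE_nat, LinearMap.id_apply]
      exact congrArg _ (LinearMap.congr_fun G.counit_left a)) x
  simpa only [LinearMap.comp_apply, LinearMap.id_apply] using key

lemma LE_tail (t : X) (z : T2 A) :
    lL G.lE (lL (li t) z) = li t (TensorProduct.rid ℂ A (G.ε.lTensor A z)) := by
  induction z using TensorProduct.induction_on with
  | zero => simp
  | tmul a b => simp [lL_tmul, lE, li_def]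
  | add x y hx hy => simp only [map_add, hx, hy]

lemma l_LEP (x : A ⊗[ℂ] X) : lL G.lE (G.lP x) = x := by
  have key := ext1 (f := lL G.lE ∘ₗ G.lP) (g := LinearMap.id) (fun t a => by
      simp only [LinearMap.comp_apply, lP_tail, LE_tail, LinearMap.id_apply]
      exact congrArg _ (LinearMap.congr_fun G.counit_right a)) x
  simpa only [LinearMap.comp_apply, LinearMap.id_apply] using key

lemma l_MU (x : A ⊗[ℂ] X) : lM (lU x) = x := by
  have key := ext1 (f := lM ∘ₗ lU) (g := LinearMap.id) (fun t a => by
      simp [lM, lU, li_def, mA]) x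
  simpa only [LinearMap.comp_apply, LinearMap.id_apply] using key

lemma l_MLU (x : A ⊗[ℂ] X) : lM (lL lU x) = x := by
  have key := ext1 (f := lM ∘ₗ lL lU) (g := LinearMap.id) (fun t a => by
      simp [lM, lU, li_def, mA, lL]) x
  simpa only [LinearMap.comp_apply, LinearMap.id_apply] using key

lemma l_assocM (x : A ⊗[ℂ] (A ⊗[ℂ] (A ⊗[ℂ] X))) : lM (lL lM x) = lM (lM x) := by
  have key := ext3 (f := lM ∘ₗ lL lM) (g := lM ∘ₗ lM) (fun t z => by
      simp only [LinearMap.comp_apply]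
      rw [lsh (lM_tail t), lM_tail, lM_nat, lM_tail]
      congr 1
      refine LinearMap.congr_fun (f := mA ∘ₗ lL mA) (g := mA ∘ₗ lM) ?_ z
      refine TensorProduct.ext_threefold' ?_
      intro a b c
      simp [lM, mA, lL, mul_assoc]) x
  simpa only [LinearMap.comp_apply] using key

lemma l_hexL (x : A ⊗[ℂ] (A ⊗[ℂ] (A ⊗[ℂ] X))) :
    lS G.σ (lM x) = lL lM (lS G.σ (lL (lS G.σ) x)) := by
  have key := ext3 (f := lS G.σ ∘ₗ lM) (g := lL lM ∘ₗ lS G.σ ∘ₗ lL (lS G.σ)) (fun t z => by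
      simp only [LinearMap.comp_apply, lM_nat, lS_tail]
      rw [lsh (lS_tail G.σ t), lS_nat, lsh (lM_tail t)]
      exact congrArg _ (LinearMap.congr_fun G.braid_mul_left z)) x
  simpa only [LinearMap.comp_apply, LinearMap.id_apply] using key

lemma l_hexR (x : A ⊗[ℂ] (A ⊗[ℂ] (A ⊗[ℂ] X))) :
    lS G.σ (lL lM x) = lM (lL (lS G.σ) (lS G.σ x)) := by
  have key := ext3 (f := lS G.σ ∘ₗ lL lM) (g := lM ∘ₗ lL (lS G.σ) ∘ₗ lS G.σ) (fun t z => by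
      simp only [LinearMap.comp_apply, lS_nat]
      rw [lsh (lS_tail G.σ t), lM_nat, lsh (lM_tail t), lS_tail]
      exact congrArg _ (LinearMap.congr_fun G.braid_mul_right z)) x
  simpa only [LinearMap.comp_apply, LinearMap.id_apply] using key

lemma l_comul_mul (x : A ⊗[ℂ] (A ⊗[ℂ] X)) :
    G.lP (lM x) = lM (lL (lL lM) (lL (lS G.σ) (G.lP (lL G.lP x)))) := by
  have key := ext2 (f := G.lP ∘ₗ lM) (g := lM ∘ₗ lL (lL lM) ∘ₗ lL (lS G.σ) ∘ₗ G.lP ∘ₗ lL G.lP) (fun t z => by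
      simp only [LinearMap.comp_apply, lM_tail, lP_tail]
      rw [lsh (G.lP_tail t), lP_nat, lsh (lS_nat G.σ (li (A := A) t)), lsh (lsh (lM_tail t)), lM_nat]
      exact congrArg _ (LinearMap.congr_fun G.comul_mul z)) x
  simpa only [LinearMap.comp_apply, LinearMap.id_apply] using key

lemma l_mixed (x : A ⊗[ℂ] (A ⊗[ℂ] X)) :
    lS G.σ (lL G.lP (lS G.σ' (lL G.lP x))) = lL (lL (lS G.σ)) (lL G.lP (lL (lS G.σ') (G.lP x))) := by
  have key := ext2 (f := lS G.σ ∘ₗ lL G.lP ∘ₗ lS G.σ' ∘ₗ lL G.lP)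
      (g := lL (lL (lS G.σ)) ∘ₗ lL G.lP ∘ₗ lL (lS G.σ') ∘ₗ G.lP) (fun t z => by
      simp only [LinearMap.comp_apply]
      rw [lsh (G.lP_tail t), lS_nat, lsh (G.lP_nat (li (A := A) t)), lS_nat, lP_nat, lsh (lS_tail G.σ' t),
        lsh (G.lP_nat (li (A := A) t)), lsh (lsh (lS_tail G.σ t))]
      exact congrArg _ (LinearMap.congr_fun G.mixed_coassoc z)) x
  simpa only [LinearMap.comp_apply, LinearMap.id_apply] using key

lemma tail_scalar (c : ℂ) (t : X) : (lU (c • t) : A ⊗[ℂ] X) = li t (algebraMap ℂ A c) := by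
  rw [lU_tail, li_def, li_def, Algebra.algebraMap_eq_smul_one, TensorProduct.smul_tmul]

lemma l_antL (x : A ⊗[ℂ] X) : lM (lK G.κ (G.lP x)) = lU (G.lE x) := by
  have key := ext1 (f := lM ∘ₗ lK G.κ ∘ₗ G.lP) (g := lU ∘ₗ G.lE) (fun t a => by
      simp only [LinearMap.comp_apply, lP_tail, lK_nat, lM_tail, lE_tail, tail_scalar]
      exact congrArg _ (LinearMap.congr_fun G.antipode_left a)) x
  simpa only [LinearMap.comp_apply, LinearMap.id_apply] using key

lemma l_antR (x : A ⊗[ℂ] X) : lM (lL (lK G.κ) (G.lP x)) = lU (G.lE x) := by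
  have key := ext1 (f := lM ∘ₗ lL (lK G.κ) ∘ₗ G.lP) (g := lU ∘ₗ G.lE) (fun t a => by
      simp only [LinearMap.comp_apply, lP_tail, lE_tail, tail_scalar]
      rw [lsh (lK_tail G.κ t), lM_tail]
      exact congrArg _ (LinearMap.congr_fun G.antipode_right a)) x
  simpa only [LinearMap.comp_apply, LinearMap.id_apply] using key

/-- The strand calculus with strands added on the left. -/
def leftSys : Sys.{u} where
  F X := ModuleCat.of ℂ (A ⊗[ℂ] X)
  L g := lL g
  L_comp f g x := lL_comp f g x
  L_id x := lL_id x
  P := G.lP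
  S := lS G.σ
  S' := lS G.σ'
  M := lM
  E := G.lE
  U := lU
  K := lK G.κ
  K' := lK G.κ'
  P_nat g x := G.lP_nat g x
  S_nat g x := lS_nat G.σ g x
  S'_nat g x := lS_nat G.σ' g x
  M_nat g x := lM_nat g x
  E_nat g x := G.lE_nat g x
  U_nat g x := lU_nat g x
  K_nat g x := lK_nat G.κ g x
  SS' x := lS_inv _ _ G.σ_comp x
  S'S x := lS_inv _ _ G.comp_σ x
  KK' x := lK_inv _ _ G.κκ' x
  K'K x := lK_inv _ _ G.κ'κ x
  coassoc x := G.l_coassoc x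
  EP x := G.l_EP x
  LEP x := G.l_LEP x
  MU x := l_MU x
  MLU x := l_MLU x
  assocM x := l_assocM x
  hexL x := G.l_hexL x
  hexR x := G.l_hexR x
  comul_mul x := G.l_comul_mul x
  mixed x := G.l_mixed x
  antL x := G.l_antL x
  antR x := G.l_antR x


lemma lτ_eq (x : A ⊗[ℂ] (A ⊗[ℂ] X)) :
    lS G.τ x = lL (lL G.lE) (lL (lS G.σ') (G.lP (lS G.σ x))) := by
  have key := ext2 (f := lS G.τ)
    (g := lL (lL G.lE) ∘ₗ lL (lS G.σ') ∘ₗ G.lP ∘ₗ lS G.σ) (fun t z => by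
      simp only [LinearMap.comp_apply, lS_tail]
      rw [lP_nat, lsh (lS_tail G.σ' t), lsh (f' := li t)
        (g' := (TensorProduct.rid ℂ A).toLinearMap ∘ₗ G.ε.lTensor A) (G.LE_tail t)]
      rfl) x
  simpa only [LinearMap.comp_apply] using key

lemma l_pent1 (X : ModuleCat.{u} ℂ) (x : A ⊗[ℂ] (A ⊗[ℂ] X)) :
    lL G.lP (lS G.σ x) = lS G.τ (lL (lS G.σ) (G.lP x)) := by
  rw [lτ_eq]
  have h := G.leftSys.P1 (X := X) x
  rw [Sys.αβ, Sys.β_def] at h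
  exact h

lemma l_pent3 (X : ModuleCat.{u} ℂ) (x : A ⊗[ℂ] (A ⊗[ℂ] X)) :
    lL G.lP (lS G.σ x) = lS G.σ (lL (lS G.τ) (G.lP x)) := by
  have h := G.leftSys.P3 (X := X) x
  rw [G.leftSys.sh21 (k := lS G.τ)] at h
  · exact h
  · intro y
    rw [Sys.αβ, Sys.β_def]
    exact (G.lτ_eq y).symm

/-- Forgetting a trivial tail. -/
def lr : A ⊗[ℂ] (ULift.{u} ℂ) →ₗ[ℂ] A :=
  (TensorProduct.rid ℂ A).toLinearMap ∘ₗ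
    (ULift.moduleEquiv : ULift.{u} ℂ ≃ₗ[ℂ] ℂ).toLinearMap.lTensor A

lemma lr_li (a : A) : lr (li (ULift.up 1) a) = a := by
  simp [lr, li_def]

lemma lLLi_inj {y z : A ⊗[ℂ] (A ⊗[ℂ] A)}
    (h : lL (lL (li (ULift.up.{u} (1 : ℂ)))) y = lL (lL (li (ULift.up.{u} (1 : ℂ)))) z) : y = z := by
  have e : ∀ y : A ⊗[ℂ] (A ⊗[ℂ] A), lL (lL lr) (lL (lL (li (ULift.up.{u} (1 : ℂ)))) y) = y := by
    intro y
    rw [lsh (f' := LinearMap.id) (g' := LinearMap.id), lL_id, lL_id]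
    intro y
    rw [lsh (f' := LinearMap.id) (g' := LinearMap.id), lL_id, lL_id]
    · rfl
    · exact lr_li
  rw [← e y, h, e]

lemma pent1 : G.φ2 ∘ₗ G.σ = op12 G.τ ∘ₗ op23 G.σ ∘ₗ G.φ1 := by
  refine LinearMap.ext fun z => lLLi_inj ?_
  have h := G.l_pent1 (ModuleCat.of ℂ (ULift.{u} ℂ)) (lL (li (ULift.up 1)) z)
  rw [lS_tail, lsh (G.lP_tail _), lP_nat, lsh (lS_tail G.σ _), lS_nat] at h
  exact h

lemma pent3 : G.φ2 ∘ₗ G.σ = op12 G.σ ∘ₗ op23 G.τ ∘ₗ G.φ1 := by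
  refine LinearMap.ext fun z => lLLi_inj ?_
  have h := G.l_pent3 (ModuleCat.of ℂ (ULift.{u} ℂ)) (lL (li (ULift.up 1)) z)
  rw [lS_tail, lsh (G.lP_tail _), lP_nat, lsh (lS_tail G.τ _), lS_nat] at h
  exact h

end Left

end BQG

namespace BQG

section Right

variable {A : Type u} [Ring A] [Algebra ℂ A] (G : BQG A)
variable {X Y Z W : Type u} [AddCommMonoid X] [Module ℂ X] [AddCommMonoid Y] [Module ℂ Y]
  [AddCommMonoid Z] [Module ℂ Z] [AddCommMonoid W] [Module ℂ W]

/-- Apply a map before the last strand. -/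
def rL (g : X →ₗ[ℂ] Y) : X ⊗[ℂ] A →ₗ[ℂ] Y ⊗[ℂ] A := g.rTensor A

/-- `φ` on the last strand. -/
def rP : X ⊗[ℂ] A →ₗ[ℂ] (X ⊗[ℂ] A) ⊗[ℂ] A :=
  (TensorProduct.assoc ℂ X A A).symm.toLinearMap ∘ₗ G.φ.lTensor X

/-- A two strand map on the last two strands. -/
def rS (f : T2 A →ₗ[ℂ] T2 A) : (X ⊗[ℂ] A) ⊗[ℂ] A →ₗ[ℂ] (X ⊗[ℂ] A) ⊗[ℂ] A :=
  (TensorProduct.assoc ℂ X A A).symm.toLinearMap ∘ₗ f.lTensor X ∘ₗ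
    (TensorProduct.assoc ℂ X A A).toLinearMap

/-- `m` on the last two strands. -/
def rM : (X ⊗[ℂ] A) ⊗[ℂ] A →ₗ[ℂ] X ⊗[ℂ] A :=
  (mA (A := A)).lTensor X ∘ₗ (TensorProduct.assoc ℂ X A A).toLinearMap

/-- `ε` on the last strand. -/
def rE : X ⊗[ℂ] A →ₗ[ℂ] X := (TensorProduct.rid ℂ X).toLinearMap ∘ₗ G.ε.lTensor X

/-- The unit as a new last strand. -/
def rU : X →ₗ[ℂ] X ⊗[ℂ] A := (TensorProduct.mk ℂ X A).flip 1

/-- A one strand map on the last strand. -/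
def rK (f : A →ₗ[ℂ] A) : X ⊗[ℂ] A →ₗ[ℂ] X ⊗[ℂ] A := f.lTensor X

/-- Insert a tail on the left. -/
def ri (t : X) : A →ₗ[ℂ] X ⊗[ℂ] A := TensorProduct.mk ℂ X A t

lemma rL_tmul (g : X →ₗ[ℂ] Y) (a : A) (x : X) : rL g (x ⊗ₜ[ℂ] a) = g x ⊗ₜ[ℂ] a := rfl

lemma ri_def (t : X) (a : A) : ri t a = t ⊗ₜ[ℂ] a := rfl

lemma rL_comp (f : Y →ₗ[ℂ] Z) (g : X →ₗ[ℂ] Y) (x : X ⊗[ℂ] A) :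
    rL (f ∘ₗ g) x = rL f (rL g x) := LinearMap.rTensor_comp_apply A f g x

lemma rL_id (x : X ⊗[ℂ] A) : rL (LinearMap.id : X →ₗ[ℂ] X) x = x :=
  LinearMap.rTensor_id_apply A X x

lemma rsh {f : Y →ₗ[ℂ] Z} {g : X →ₗ[ℂ] Y} {f' : W →ₗ[ℂ] Z} {g' : X →ₗ[ℂ] W}
    (h : ∀ x, f (g x) = f' (g' x)) (x : X ⊗[ℂ] A) : rL f (rL g x) = rL f' (rL g' x) := by
  rw [← rL_comp, show f ∘ₗ g = f' ∘ₗ g' from LinearMap.ext h, rL_comp]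

lemma rassoc_symm_tail (t : X) (z : T2 A) :
    (TensorProduct.assoc ℂ X A A).symm (t ⊗ₜ[ℂ] z) = rL (ri t) z := by
  induction z using TensorProduct.induction_on with
  | zero => simp
  | tmul a b => rfl
  | add x y hx hy => rw [TensorProduct.tmul_add, map_add, map_add, hx, hy]

lemma rassoc_tail (t : X) (z : T2 A) :
    (TensorProduct.assoc ℂ X A A) (rL (ri t) z) = t ⊗ₜ[ℂ] z := by
  rw [← rassoc_symm_tail, LinearEquiv.apply_symm_apply]

lemma rext1 {f g : X ⊗[ℂ] A →ₗ[ℂ] Y} (h : ∀ t a, f (ri t a) = g (ri t a)) (x : X ⊗[ℂ] A) :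
    f x = g x := by
  rw [show f = g from TensorProduct.ext' fun t a => h t a]

lemma rext2 {f g : (X ⊗[ℂ] A) ⊗[ℂ] A →ₗ[ℂ] Y}
    (h : ∀ t z, f (rL (ri t) z) = g (rL (ri t) z)) (x : (X ⊗[ℂ] A) ⊗[ℂ] A) :
    f x = g x := by
  rw [show f = g from TensorProduct.ext_threefold fun t a b => h t (a ⊗ₜ b)]

lemma rext3 {f g : ((X ⊗[ℂ] A) ⊗[ℂ] A) ⊗[ℂ] A →ₗ[ℂ] Y}
    (h : ∀ t z, f (rL (rL (ri t)) z) = g (rL (rL (ri t)) z))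
    (x : ((X ⊗[ℂ] A) ⊗[ℂ] A) ⊗[ℂ] A) : f x = g x := by
  refine rext1 (fun y a => ?_) x
  refine rext2 (f := f ∘ₗ (TensorProduct.mk ℂ _ A).flip a)
    (g := g ∘ₗ (TensorProduct.mk ℂ _ A).flip a) (fun t z => ?_) y
  exact h t (z ⊗ₜ a)

lemma rP_tail (t : X) (a : A) : G.rP (ri t a) = rL (ri t) (G.φ a) := rassoc_symm_tail t (G.φ a)

lemma rS_tail (f : T2 A →ₗ[ℂ] T2 A) (t : X) (z : T2 A) :
    rS f (rL (ri t) z) = rL (ri t) (f z) := by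
  simp only [rS, LinearMap.comp_apply, LinearEquiv.coe_coe, rassoc_tail,
    LinearMap.lTensor_tmul, rassoc_symm_tail]

lemma rM_tail (t : X) (z : T2 A) : rM (rL (ri t) z) = ri t (mA z) := by
  simp only [rM, LinearMap.comp_apply, LinearEquiv.coe_coe, rassoc_tail,
    LinearMap.lTensor_tmul, ri_def]

lemma rE_tail (t : X) (a : A) : G.rE (ri t a) = G.ε a • t := by
  simp [rE, ri_def]

lemma rU_tail (t : X) : rU t = ri t (1 : A) := rfl

lemma rK_tail (f : A →ₗ[ℂ] A) (t : X) (a : A) : rK f (ri t a) = ri t (f a) := rfl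

lemma rL_ri (g : X →ₗ[ℂ] Y) (t : X) (a : A) : rL g (ri t a) = ri (g t) a := rfl

lemma rLL_ri (g : X →ₗ[ℂ] Y) (t : X) (z : T2 A) : rL (rL g) (rL (ri t) z) = rL (ri (g t)) z := by
  rw [← rL_comp]; rfl

lemma rP_nat (g : X →ₗ[ℂ] Y) (x : X ⊗[ℂ] A) : G.rP (rL g x) = rL (rL g) (G.rP x) := by
  have key := rext1 (f := G.rP ∘ₗ rL g) (g := rL (rL g) ∘ₗ G.rP) (fun t a => by
      simp only [LinearMap.comp_apply, rL_ri, rP_tail, rLL_ri]) x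
  simpa only [LinearMap.comp_apply] using key

lemma rS_nat (f : T2 A →ₗ[ℂ] T2 A) (g : X →ₗ[ℂ] Y) (x : (X ⊗[ℂ] A) ⊗[ℂ] A) :
    rS f (rL (rL g) x) = rL (rL g) (rS f x) := by
  have key := rext2 (f := rS f ∘ₗ rL (rL g)) (g := rL (rL g) ∘ₗ rS f) (fun t a => by
      simp only [LinearMap.comp_apply, rLL_ri, rS_tail]) x
  simpa only [LinearMap.comp_apply] using key

lemma rM_nat (g : X →ₗ[ℂ] Y) (x : (X ⊗[ℂ] A) ⊗[ℂ] A) :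
    rM (rL (rL g) x) = rL g (rM x) := by
  have key := rext2 (f := rM ∘ₗ rL (rL g)) (g := rL g ∘ₗ rM) (fun t a => by
      simp only [LinearMap.comp_apply, rLL_ri, rM_tail, rL_ri]) x
  simpa only [LinearMap.comp_apply] using key

lemma rE_nat (g : X →ₗ[ℂ] Y) (x : X ⊗[ℂ] A) : G.rE (rL g x) = g (G.rE x) := by
  have key := rext1 (f := G.rE ∘ₗ rL g) (g := g ∘ₗ G.rE) (fun t a => by
      simp only [LinearMap.comp_apply, rL_ri, rE_tail, map_smul]) x
  simpa only [LinearMap.comp_apply] using key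

lemma rU_nat (g : X →ₗ[ℂ] Y) (x : X) : (rU (g x) : Y ⊗[ℂ] A) = rL g (rU x) := rfl

lemma rK_nat (f : A →ₗ[ℂ] A) (g : X →ₗ[ℂ] Y) (x : X ⊗[ℂ] A) : rK f (rL g x) = rL g (rK f x) := by
  have key := rext1 (f := rK f ∘ₗ rL g) (g := rL g ∘ₗ rK f) (fun _ _ => rfl) x
  simpa only [LinearMap.comp_apply] using key

lemma rS_inv (f g : T2 A →ₗ[ℂ] T2 A) (h : f ∘ₗ g = LinearMap.id) (x : (X ⊗[ℂ] A) ⊗[ℂ] A) :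
    rS f (rS g x) = x := by
  have key := rext2 (f := rS f ∘ₗ rS g) (g := LinearMap.id) (fun t a => by
      simp only [LinearMap.comp_apply, rS_tail, LinearMap.id_apply]
      rw [← LinearMap.comp_apply f, h, LinearMap.id_apply]) x
  simpa only [LinearMap.comp_apply, LinearMap.id_apply] using key

lemma rK_inv (f g : A →ₗ[ℂ] A) (h : ∀ x, f (g x) = x) (x : X ⊗[ℂ] A) :
    rK f (rK g x) = x := by
  have key := rext1 (f := rK f ∘ₗ rK g) (g := LinearMap.id) (fun t a => by
      simp only [LinearMap.comp_apply, rK_tail, LinearMap.id_apply, h]) x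
  simpa only [LinearMap.comp_apply, LinearMap.id_apply] using key

/-- Reassociate three strands. -/
def r3 : (A ⊗[ℂ] A) ⊗[ℂ] A ≃ₗ[ℂ] T3 A := TensorProduct.assoc ℂ A A A

/-- Reassociate four strands. -/
def r4 : ((A ⊗[ℂ] A) ⊗[ℂ] A) ⊗[ℂ] A ≃ₗ[ℂ] T4 A :=
  (TensorProduct.assoc ℂ (A ⊗[ℂ] A) A A).trans (TensorProduct.assoc ℂ A A (A ⊗[ℂ] A))

lemma r3_P (z : T2 A) : r3 (G.rP z) = G.φ.lTensor A z := by
  simp [r3, rP]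

lemma r3_LP (z : T2 A) : r3 (rL G.φ z) = G.φ1 z := rfl

lemma r3_S (f : T2 A →ₗ[ℂ] T2 A) (y : (A ⊗[ℂ] A) ⊗[ℂ] A) : r3 (rS f y) = op23 f (r3 y) := by
  simp [r3, rS, op23]

lemma r3_LS (f : T2 A →ₗ[ℂ] T2 A) (y : (A ⊗[ℂ] A) ⊗[ℂ] A) : r3 (rL f y) = op12 f (r3 y) := by
  simp [r3, rL, op12]

lemma r3_M (y : (A ⊗[ℂ] A) ⊗[ℂ] A) : rM y = m23 (r3 y) := rfl

lemma r3_LM (y : (A ⊗[ℂ] A) ⊗[ℂ] A) : rL mA y = m12 (r3 y) := by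
  simp [r3, rL, m12]

lemma r4_LP (y : (A ⊗[ℂ] A) ⊗[ℂ] A) : r4 (rL G.rP y) =
    ((TensorProduct.assoc ℂ A A A).toLinearMap ∘ₗ G.φ.rTensor A).lTensor A (r3 y) := by
  have key : r4.toLinearMap ∘ₗ rL G.rP =
    ((TensorProduct.assoc ℂ A A A).toLinearMap ∘ₗ G.φ.rTensor A).lTensor A ∘ₗ r3.toLinearMap := by
    refine TensorProduct.ext_threefold fun a b c => ?_
    simp only [LinearMap.comp_apply, LinearEquiv.coe_coe, rL_tmul, r3, TensorProduct.assoc_tmul,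
      LinearMap.lTensor_tmul, LinearMap.rTensor_tmul, rP]
    generalize G.φ b = w
    induction w using TensorProduct.induction_on with
    | zero => simp
    | tmul p q => rfl
    | add x y hx hy => simp only [TensorProduct.tmul_add, TensorProduct.add_tmul, map_add, hx, hy]
  exact LinearMap.congr_fun key y

lemma r4_S (f : T2 A →ₗ[ℂ] T2 A) (y : ((A ⊗[ℂ] A) ⊗[ℂ] A) ⊗[ℂ] A) :
    r4 (rS f y) = op34_4 f (r4 y) := by
  have key := rext2 (f := r4.toLinearMap ∘ₗ rS f) (g := op34_4 f ∘ₗ r4.toLinearMap)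
    (fun t z => by
      simp only [LinearMap.comp_apply, LinearEquiv.coe_coe, rS_tail]
      simp only [r4, LinearEquiv.trans_apply, rassoc_tail]
      induction t using TensorProduct.induction_on with
      | zero => simp
      | tmul p q => rfl
      | add x y hx hy => simp only [TensorProduct.add_tmul, map_add, hx, hy]) y
  simpa only [LinearMap.comp_apply, LinearEquiv.coe_coe] using key

lemma r4_LLS (f : T2 A →ₗ[ℂ] T2 A) (y : ((A ⊗[ℂ] A) ⊗[ℂ] A) ⊗[ℂ] A) :
    r4 (rL (rL f) y) = op12_4 f (r4 y) := by
  have key := rext2 (f := r4.toLinearMap ∘ₗ rL (rL f)) (g := op12_4 f ∘ₗ r4.toLinearMap)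
    (fun t z => by
      simp only [LinearMap.comp_apply, LinearEquiv.coe_coe, rLL_ri]
      simp only [r4, LinearEquiv.trans_apply, rassoc_tail, op12_4, LinearMap.comp_apply,
        LinearEquiv.coe_coe, LinearEquiv.symm_apply_apply, LinearMap.rTensor_tmul]) y
  simpa only [LinearMap.comp_apply, LinearEquiv.coe_coe] using key

lemma r4_LLi (a : A) (z : (A ⊗[ℂ] A) ⊗[ℂ] A) : r4 (rL (rL (ri a)) z) = a ⊗ₜ[ℂ] r3 z := by
  have key : r4.toLinearMap ∘ₗ rL (rL (ri a)) = TensorProduct.mk ℂ A _ a ∘ₗ r3.toLinearMap :=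
    TensorProduct.ext_threefold fun p q r => by
      simp [rL, ri, r3, r4]
  have := LinearMap.congr_fun key z
  simpa only [LinearMap.comp_apply, LinearEquiv.coe_coe, TensorProduct.mk_apply] using this

lemma r4_LS (f : T2 A →ₗ[ℂ] T2 A) (y : ((A ⊗[ℂ] A) ⊗[ℂ] A) ⊗[ℂ] A) :
    r4 (rL (rS f) y) = op23_4 f (r4 y) := by
  have key := rext3 (f := r4.toLinearMap ∘ₗ rL (rS f)) (g := op23_4 f ∘ₗ r4.toLinearMap)
    (fun a z => by
      simp only [LinearMap.comp_apply, LinearEquiv.coe_coe]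
      rw [rsh (rS_tail f a)]
      have e := r4_LLi a
      rw [e, e, r3_LS]
      rfl) y
  simpa only [LinearMap.comp_apply, LinearEquiv.coe_coe] using key

lemma r4_PLP (z : T2 A) : r4 (G.rP (rL G.φ z)) =
    TensorProduct.assoc ℂ A A (T2 A) (G.φ.rTensor (T2 A) (G.φ.lTensor A z)) := by
  induction z using TensorProduct.induction_on with
  | zero => simp
  | tmul a b => simp [rL_tmul, rP, r4]
  | add x y hx hy => simp only [map_add, hx, hy]

lemma r4_MM (y : ((A ⊗[ℂ] A) ⊗[ℂ] A) ⊗[ℂ] A) : rM (rL (rL mA) y) = mm (r4 y) := by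
  have key : rM ∘ₗ rL (rL mA) = mm ∘ₗ (r4 (A := A)).toLinearMap := by
    refine TensorProduct.ext_fourfold fun a b c d => ?_
    simp [rM, rL, mm, m12, r4]
  exact LinearMap.congr_fun key y

lemma r_coassoc (x : X ⊗[ℂ] A) : G.rP (G.rP x) = rL G.rP (G.rP x) := by
  have key := rext1 (f := G.rP ∘ₗ G.rP) (g := rL G.rP ∘ₗ G.rP) (fun t a => by
      simp only [LinearMap.comp_apply, rP_tail, rP_nat]
      rw [rsh (G.rP_tail t)]
      refine congrArg _ (r3.injective ?_)
      rw [r3_P, r3_LP]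
      exact (LinearMap.congr_fun G.coassoc a).symm) x
  simpa only [LinearMap.comp_apply] using key

lemma r_EP (x : X ⊗[ℂ] A) : G.rE (G.rP x) = x := by
  have key := rext1 (f := G.rE ∘ₗ G.rP) (g := LinearMap.id) (fun t a => by
      simp only [LinearMap.comp_apply, rP_tail, rE_nat, LinearMap.id_apply]
      exact congrArg _ (LinearMap.congr_fun G.counit_right a)) x
  simpa only [LinearMap.comp_apply, LinearMap.id_apply] using key

lemma rLE_tail (t : X) (z : T2 A) :
    rL G.rE (rL (ri t) z) = ri t (TensorProduct.lid ℂ A (G.ε.rTensor A z)) := by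
  induction z using TensorProduct.induction_on with
  | zero => simp
  | tmul a b => simp [rL_tmul, rE, ri_def, TensorProduct.smul_tmul]
  | add x y hx hy => simp only [map_add, hx, hy]

lemma r_LEP (x : X ⊗[ℂ] A) : rL G.rE (G.rP x) = x := by
  have key := rext1 (f := rL G.rE ∘ₗ G.rP) (g := LinearMap.id) (fun t a => by
      simp only [LinearMap.comp_apply, rP_tail, rLE_tail, LinearMap.id_apply]
      exact congrArg _ (LinearMap.congr_fun G.counit_left a)) x
  simpa only [LinearMap.comp_apply, LinearMap.id_apply] using key

lemma r_MU (x : X ⊗[ℂ] A) : rM (rU x) = x := by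
  have key := rext1 (f := rM ∘ₗ rU) (g := LinearMap.id) (fun t a => by
      simp [rM, rU, ri_def, mA]) x
  simpa only [LinearMap.comp_apply, LinearMap.id_apply] using key

lemma r_MLU (x : X ⊗[ℂ] A) : rM (rL rU x) = x := by
  have key := rext1 (f := rM ∘ₗ rL rU) (g := LinearMap.id) (fun t a => by
      simp [rM, rU, ri_def, mA, rL]) x
  simpa only [LinearMap.comp_apply, LinearMap.id_apply] using key

lemma r_assocM (x : ((X ⊗[ℂ] A) ⊗[ℂ] A) ⊗[ℂ] A) : rM (rL rM x) = rM (rM x) := by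
  have key := rext3 (f := rM ∘ₗ rL rM) (g := rM ∘ₗ rM) (fun t z => by
      simp only [LinearMap.comp_apply]
      rw [rsh (rM_tail t), rM_tail, rM_nat, rM_tail]
      congr 1
      refine LinearMap.congr_fun (f := mA ∘ₗ rL mA) (g := mA ∘ₗ rM) ?_ z
      refine TensorProduct.ext_threefold ?_
      intro a b c
      simp [rM, mA, rL, mul_assoc]) x
  simpa only [LinearMap.comp_apply] using key

lemma r_hexL (x : ((X ⊗[ℂ] A) ⊗[ℂ] A) ⊗[ℂ] A) :
    rS G.σ (rM x) = rL rM (rS G.σ (rL (rS G.σ) x)) := by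
  have key := rext3 (f := rS G.σ ∘ₗ rM) (g := rL rM ∘ₗ rS G.σ ∘ₗ rL (rS G.σ)) (fun t z => by
      simp only [LinearMap.comp_apply, rM_nat, rS_tail]
      rw [rsh (rS_tail G.σ t), rS_nat, rsh (rM_tail t)]
      refine congrArg _ ?_
      rw [r3_LM, r3_M, r3_S, r3_LS]
      exact LinearMap.congr_fun G.braid_mul_right (r3 z)) x
  simpa only [LinearMap.comp_apply] using key

lemma r_hexR (x : ((X ⊗[ℂ] A) ⊗[ℂ] A) ⊗[ℂ] A) :
    rS G.σ (rL rM x) = rM (rL (rS G.σ) (rS G.σ x)) := by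
  have key := rext3 (f := rS G.σ ∘ₗ rL rM) (g := rM ∘ₗ rL (rS G.σ) ∘ₗ rS G.σ) (fun t z => by
      simp only [LinearMap.comp_apply, rS_nat]
      rw [rsh (rS_tail G.σ t), rM_nat, rsh (rM_tail t), rS_tail]
      refine congrArg _ ?_
      rw [r3_LM, r3_M, r3_LS, r3_S]
      exact LinearMap.congr_fun G.braid_mul_left (r3 z)) x
  simpa only [LinearMap.comp_apply] using key

lemma r_comul_mul (x : (X ⊗[ℂ] A) ⊗[ℂ] A) :
    G.rP (rM x) = rM (rL (rL rM) (rL (rS G.σ) (G.rP (rL G.rP x)))) := by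
  have key := rext2 (f := G.rP ∘ₗ rM)
    (g := rM ∘ₗ rL (rL rM) ∘ₗ rL (rS G.σ) ∘ₗ G.rP ∘ₗ rL G.rP) (fun t z => by
      simp only [LinearMap.comp_apply, rM_tail, rP_tail]
      have e1 := rsh (A := A) (rS_nat G.σ (ri (A := A) t))
      rw [rsh (G.rP_tail t), rP_nat, e1, rsh (rsh (rM_tail t)), rM_nat]
      refine congrArg _ ?_
      rw [r4_MM, r4_LS, r4_PLP]
      exact LinearMap.congr_fun G.comul_mul z) x
  simpa only [LinearMap.comp_apply] using key

lemma r_mixed (x : (X ⊗[ℂ] A) ⊗[ℂ] A) :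
    rS G.σ (rL G.rP (rS G.σ' (rL G.rP x))) =
      rL (rL (rS G.σ)) (rL G.rP (rL (rS G.σ') (G.rP x))) := by
  have key := rext2 (f := rS G.σ ∘ₗ rL G.rP ∘ₗ rS G.σ' ∘ₗ rL G.rP)
    (g := rL (rL (rS G.σ)) ∘ₗ rL G.rP ∘ₗ rL (rS G.σ') ∘ₗ G.rP) (fun t z => by
      simp only [LinearMap.comp_apply]
      have e1 := rsh (A := A) (G.rP_nat (ri (A := A) t))
      rw [rsh (G.rP_tail t), rS_nat, e1, rS_nat, rP_nat,
        rsh (rS_tail G.σ' t), e1, rsh (rsh (rS_tail G.σ t))]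
      refine congrArg _ (r4.injective ?_)
      rw [r4_S, r4_LP, r3_S, r3_LP, r4_LLS, r4_LP, r3_LS, r3_P]
      exact (LinearMap.congr_fun G.mixed_coassoc z).symm) x
  simpa only [LinearMap.comp_apply] using key

lemma rtail_scalar (c : ℂ) (t : X) : (rU (c • t) : X ⊗[ℂ] A) = ri t (algebraMap ℂ A c) := by
  rw [rU_tail, ri_def, ri_def, Algebra.algebraMap_eq_smul_one, TensorProduct.smul_tmul]

lemma r_antL (x : X ⊗[ℂ] A) : rM (rK G.κ (G.rP x)) = rU (G.rE x) := by
  have key := rext1 (f := rM ∘ₗ rK G.κ ∘ₗ G.rP) (g := rU ∘ₗ G.rE) (fun t a => by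
      simp only [LinearMap.comp_apply, rP_tail, rK_nat, rM_tail, rE_tail, rtail_scalar]
      exact congrArg _ (LinearMap.congr_fun G.antipode_right a)) x
  simpa only [LinearMap.comp_apply] using key

lemma r_antR (x : X ⊗[ℂ] A) : rM (rL (rK G.κ) (G.rP x)) = rU (G.rE x) := by
  have key := rext1 (f := rM ∘ₗ rL (rK G.κ) ∘ₗ G.rP) (g := rU ∘ₗ G.rE) (fun t a => by
      simp only [LinearMap.comp_apply, rP_tail, rE_tail, rtail_scalar]
      rw [rsh (rK_tail G.κ t), rM_tail]
      exact congrArg _ (LinearMap.congr_fun G.antipode_left a)) x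
  simpa only [LinearMap.comp_apply] using key

/-- The strand calculus with strands added on the right. -/
def rightSys : Sys.{u} where
  F X := ModuleCat.of ℂ (X ⊗[ℂ] A)
  L g := rL g
  L_comp f g x := rL_comp f g x
  L_id x := rL_id x
  P := G.rP
  S := rS G.σ
  S' := rS G.σ'
  M := rM
  E := G.rE
  U := rU
  K := rK G.κ
  K' := rK G.κ'
  P_nat g x := G.rP_nat g x
  S_nat g x := rS_nat G.σ g x
  S'_nat g x := rS_nat G.σ' g x
  M_nat g x := rM_nat g x
  E_nat g x := G.rE_nat g x
  U_nat g x := rU_nat g x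
  K_nat g x := rK_nat G.κ g x
  SS' x := rS_inv _ _ G.σ_comp x
  S'S x := rS_inv _ _ G.comp_σ x
  KK' x := rK_inv _ _ G.κκ' x
  K'K x := rK_inv _ _ G.κ'κ x
  coassoc x := G.r_coassoc x
  EP x := G.r_EP x
  LEP x := G.r_LEP x
  MU x := r_MU x
  MLU x := r_MLU x
  assocM x := r_assocM x
  hexL x := G.r_hexL x
  hexR x := G.r_hexR x
  comul_mul x := G.r_comul_mul x
  mixed x := G.r_mixed x
  antL x := G.r_antL x
  antR x := G.r_antR x

lemma rE_ε3r (y : (A ⊗[ℂ] A) ⊗[ℂ] A) : G.rE y = G.ε3r (r3 y) := by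
  have key : G.rE = G.ε3r ∘ₗ (r3 (A := A)).toLinearMap := by
    refine TensorProduct.ext_threefold fun a b c => ?_
    simp [rE, ε3r, r3]
  exact LinearMap.congr_fun key y

lemma rτ_eq (x : (X ⊗[ℂ] A) ⊗[ℂ] A) :
    rS G.τ x = G.rE (rS G.σ' (rL G.rP (rS G.σ x))) := by
  have key := rext2 (f := rS G.τ)
    (g := G.rE ∘ₗ rS G.σ' ∘ₗ rL G.rP ∘ₗ rS G.σ) (fun t z => by
      simp only [LinearMap.comp_apply, rS_tail]
      rw [rsh (G.rP_tail t), rS_nat, rE_nat]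
      refine congrArg _ ?_
      rw [rE_ε3r, r3_S, r3_LP]
      rfl) x
  simpa only [LinearMap.comp_apply] using key

lemma r_pent3 (X : ModuleCat.{u} ℂ) (x : (X ⊗[ℂ] A) ⊗[ℂ] A) :
    rL G.rP (rS G.σ x) = rS G.σ (rL (rS G.τ) (G.rP x)) := by
  have h := G.rightSys.P3 (X := X) x
  rw [G.rightSys.sh21 (k := rS G.τ)] at h
  · exact h
  · intro y
    rw [Sys.α_def]
    exact (G.rτ_eq y).symm

/-- Forgetting a trivial tail. -/
def rr : (ULift.{u} ℂ) ⊗[ℂ] A →ₗ[ℂ] A :=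
  (TensorProduct.lid ℂ A).toLinearMap ∘ₗ
    (ULift.moduleEquiv : ULift.{u} ℂ ≃ₗ[ℂ] ℂ).toLinearMap.rTensor A

lemma rr_ri (a : A) : rr (ri (ULift.up 1) a) = a := by
  simp [rr, ri_def]

lemma rLLi_inj {y z : (A ⊗[ℂ] A) ⊗[ℂ] A}
    (h : rL (rL (ri (ULift.up.{u} (1 : ℂ)))) y = rL (rL (ri (ULift.up.{u} (1 : ℂ)))) z) : y = z := by
  have e : ∀ y : (A ⊗[ℂ] A) ⊗[ℂ] A, rL (rL rr) (rL (rL (ri (ULift.up.{u} (1 : ℂ)))) y) = y := by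
    intro y
    rw [rsh (f' := LinearMap.id) (g' := LinearMap.id), rL_id, rL_id]
    intro y
    rw [rsh (f' := LinearMap.id) (g' := LinearMap.id), rL_id, rL_id]
    · rfl
    · exact rr_ri
  rw [← e y, h, e]

lemma pent2 : G.φ1 ∘ₗ G.σ = op23 G.σ ∘ₗ op12 G.τ ∘ₗ G.φ2 := by
  refine LinearMap.ext fun z => ?_
  have h := G.r_pent3 (ModuleCat.of ℂ (ULift.{u} ℂ)) (rL (ri (ULift.up 1)) z)
  rw [rS_tail, rsh (G.rP_tail _), rP_nat, rsh (rS_tail G.τ _), rS_nat] at h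
  have h2 := congrArg r3 (rLLi_inj h)
  rw [r3_LP, r3_S, r3_LS, r3_P] at h2
  exact h2

end Right

end BQG

/-- Pentagonal relations `(id⊗φ)σ = (τ⊗id)(id⊗σ)(φ⊗id)`,
`(φ⊗id)σ = (id⊗σ)(τ⊗id)(id⊗φ)` and `(id⊗φ)σ = (σ⊗id)(id⊗τ)(φ⊗id)`. -/
theorem bqg_pentagon_2 {A : Type*} [Ring A] [Algebra ℂ A] (G : BQG A) :
    G.φ2 ∘ₗ G.σ = op12 G.τ ∘ₗ op23 G.σ ∘ₗ G.φ1 ∧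
    G.φ1 ∘ₗ G.σ = op23 G.σ ∘ₗ op12 G.τ ∘ₗ G.φ2 ∧
    G.φ2 ∘ₗ G.σ = op12 G.σ ∘ₗ op23 G.τ ∘ₗ G.φ1 := by
  exact ⟨G.pent1, G.pent2, G.pent3⟩
end
end

section
/- In a braided quantum group, the secondary braiding τ satisfies the pentagonal coproduct relations (φ⊗id)τ = (id⊗τ)(τ⊗id)(id⊗φ) and (id⊗φ)τ = (τ⊗id)(id⊗τ)(φ⊗id). -/
open TensorProduct LinearMap

noncomputable section

variable (A : Type*) [Ring A] [Algebra ℂ A]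

variable {A}

namespace BQG

variable {A : Type*} [Ring A] [Algebra ℂ A] (G : BQG A)

/-- `ε ⊗ id`. -/
def el (X : Type*) [AddCommGroup X] [Module ℂ X] : A ⊗[ℂ] X →ₗ[ℂ] X :=
  (TensorProduct.lid ℂ X).toLinearMap ∘ₗ G.ε.rTensor X

/-- `id ⊗ ε`. -/
def er : T2 A →ₗ[ℂ] A := (TensorProduct.rid ℂ A).toLinearMap ∘ₗ G.ε.lTensor A

/-- `φ ⊗ id`. -/
def φX (X : Type*) [AddCommGroup X] [Module ℂ X] : A ⊗[ℂ] X →ₗ[ℂ] A ⊗[ℂ] (A ⊗[ℂ] X) :=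
  (TensorProduct.assoc ℂ A A X).toLinearMap ∘ₗ G.φ.rTensor X

/-- Extension by one leg on the right. -/
def ext4 (F : T2 A →ₗ[ℂ] T3 A) : T3 A →ₗ[ℂ] T4 A :=
  (TensorProduct.assoc ℂ A A A).toLinearMap.lTensor A ∘ₗ
    (TensorProduct.assoc ℂ A (T2 A) A).toLinearMap ∘ₗ F.rTensor A ∘ₗ
    (TensorProduct.assoc ℂ A A A).symm.toLinearMap

section nat
variable {X Y : Type*} [AddCommGroup X] [Module ℂ X] [AddCommGroup Y] [Module ℂ Y]

lemma φX_nat (g : X →ₗ[ℂ] Y) : G.φX Y ∘ₗ g.lTensor A = (g.lTensor A).lTensor A ∘ₗ G.φX X := by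
  ext a x
  simp [φX]
  induction G.φ a using TensorProduct.induction_on with
  | zero => simp
  | tmul => simp
  | add u v hu hv => simp only [TensorProduct.add_tmul, map_add, hu, hv]

lemma el_nat (g : X →ₗ[ℂ] Y) : G.el Y ∘ₗ g.lTensor A = g ∘ₗ G.el X := by
  ext a x
  simp [el]

lemma el_φX : G.el (A ⊗[ℂ] X) ∘ₗ G.φX X = LinearMap.id := by
  ext a x
  have h := congrArg (fun f => f a ⊗ₜ[ℂ] x) G.counit_left
  simp [el, φX] at h ⊢
  rw [← h]
  clear h
  induction G.φ a using TensorProduct.induction_on with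
  | zero => simp
  | tmul => simp [TensorProduct.smul_tmul']
  | add u v hu hv => simp only [TensorProduct.add_tmul, map_add, hu, hv]

lemma Lel_φX : (G.el X).lTensor A ∘ₗ G.φX X = LinearMap.id := by
  ext a x
  have h := congrArg (fun f => f a ⊗ₜ[ℂ] x) G.counit_right
  simp [el, φX] at h ⊢
  conv_rhs => rw [← h]
  clear h
  induction G.φ a using TensorProduct.induction_on with
  | zero => simp
  | tmul => simp [TensorProduct.smul_tmul']
  | add u v hu hv => simp only [TensorProduct.add_tmul, map_add, hu, hv]

end nat

lemma op12_nat (f : T2 A →ₗ[ℂ] T2 A) (g : T2 A →ₗ[ℂ] A) :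
    op12 f ∘ₗ (g.lTensor A).lTensor A = (g.lTensor A).lTensor A ∘ₗ op12_4 f := by
  ext a b c d
  simp [op12, op12_4]
  induction f (a ⊗ₜ b) using TensorProduct.induction_on with
  | zero => simp
  | tmul => simp
  | add u v hu hv => simp only [TensorProduct.add_tmul, map_add, hu, hv]

lemma op12_nat' (f : T2 A →ₗ[ℂ] T2 A) (g : A →ₗ[ℂ] T2 A) :
    op12_4 f ∘ₗ (g.lTensor A).lTensor A = (g.lTensor A).lTensor A ∘ₗ op12 f := by
  ext a b c
  simp [op12, op12_4]
  induction f (a ⊗ₜ b) using TensorProduct.induction_on with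
  | zero => simp
  | tmul => simp
  | add u v hu hv => simp only [TensorProduct.add_tmul, map_add, hu, hv]

lemma er_op12 (f : T2 A →ₗ[ℂ] T2 A) :
    G.er.lTensor A ∘ₗ op12 f = f ∘ₗ G.er.lTensor A := by
  ext a b c
  simp [op12, er]
  induction f (a ⊗ₜ b) using TensorProduct.induction_on with
  | zero => simp
  | tmul => simp
  | add u v hu hv => simp only [TensorProduct.add_tmul, map_add, hu, hv, smul_add]

lemma er_φ1 : G.er.lTensor A ∘ₗ G.φX A = G.φ ∘ₗ G.er := by
  ext a c
  simp [φX, er]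
  induction G.φ a using TensorProduct.induction_on with
  | zero => simp
  | tmul => simp
  | add u v hu hv => simp only [TensorProduct.add_tmul, map_add, hu, hv, smul_add]

lemma er_φ : G.er ∘ₗ G.φ = LinearMap.id := G.counit_right

lemma φX_coassoc : G.φX (T2 A) ∘ₗ G.φX A = (G.φX A).lTensor A ∘ₗ G.φX A := by
  ext a c
  have h := congrArg (fun f => (TensorProduct.assoc ℂ A A A).toLinearMap.lTensor A
    ((TensorProduct.assoc ℂ A (T2 A) A) (f a ⊗ₜ[ℂ] c))) G.coassoc
  simp [φX] at h ⊢
  have h1 : ∀ z : T2 A, (TensorProduct.assoc ℂ A A (T2 A))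
      (G.φ.rTensor (T2 A) ((TensorProduct.assoc ℂ A A A) (z ⊗ₜ[ℂ] c))) =
      (TensorProduct.assoc ℂ A A A).toLinearMap.lTensor A
      ((TensorProduct.assoc ℂ A (T2 A) A)
        ((TensorProduct.assoc ℂ A A A) (G.φ.rTensor A z) ⊗ₜ[ℂ] c)) := by
    intro z
    induction z using TensorProduct.induction_on with
    | zero => simp
    | tmul x y =>
      simp
      induction G.φ x using TensorProduct.induction_on with
      | zero => simp
      | tmul => simp
      | add u v hu hv => simp only [TensorProduct.add_tmul, map_add, hu, hv]
    | add u v hu hv => simp only [TensorProduct.add_tmul, map_add, hu, hv]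
  have h2 : ∀ z : T2 A, ((TensorProduct.assoc ℂ A A A).toLinearMap.lTensor A)
      ((G.φ.rTensor A).lTensor A ((TensorProduct.assoc ℂ A A A) (z ⊗ₜ[ℂ] c))) =
      (TensorProduct.assoc ℂ A A A).toLinearMap.lTensor A
      ((TensorProduct.assoc ℂ A (T2 A) A) (G.φ.lTensor A z ⊗ₜ[ℂ] c)) := by
    intro z
    induction z using TensorProduct.induction_on with
    | zero => simp
    | tmul x y => simp
    | add u v hu hv => simp only [TensorProduct.add_tmul, map_add, hu, hv]
  rw [h1, h, ← h2]
  simp [LinearMap.lTensor_comp]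

lemma ext4_comp (F : T2 A →ₗ[ℂ] T3 A) (g : T2 A →ₗ[ℂ] T2 A) :
    ext4 (F ∘ₗ g) = ext4 F ∘ₗ op12 g := by
  ext a b c
  simp [ext4, op12]

lemma ext4_op12 (F : T2 A →ₗ[ℂ] T3 A) (f : T2 A →ₗ[ℂ] T2 A) :
    ext4 (op12 f ∘ₗ F) = op12_4 f ∘ₗ ext4 F := by
  ext a b c
  simp [ext4]
  induction F (a ⊗ₜ b) using TensorProduct.induction_on with
  | zero => simp
  | add u v hu hv => simp only [TensorProduct.add_tmul, map_add, hu, hv]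
  | tmul x w =>
    induction w using TensorProduct.induction_on with
    | zero => simp
    | add u v hu hv => simp only [TensorProduct.tmul_add, TensorProduct.add_tmul, map_add, hu, hv]
    | tmul y z =>
      simp [op12, op12_4]
      induction f (x ⊗ₜ y) using TensorProduct.induction_on with
      | zero => simp
      | add u v hu hv => simp only [TensorProduct.add_tmul, map_add, hu, hv]
      | tmul => simp

lemma ext4_op23 (F : T2 A →ₗ[ℂ] T3 A) (f : T2 A →ₗ[ℂ] T2 A) :
    ext4 (f.lTensor A ∘ₗ F) = (op12 f).lTensor A ∘ₗ ext4 F := by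
  ext a b c
  simp [ext4]
  induction F (a ⊗ₜ b) using TensorProduct.induction_on with
  | zero => simp
  | add u v hu hv => simp only [TensorProduct.add_tmul, map_add, hu, hv]
  | tmul x w => simp [op12]

lemma ext4_φ2 : ext4 (G.φ.lTensor A) = (G.φX A).lTensor A := by
  ext a b c
  simp [ext4, φX]

lemma ext4_φ1 : ext4 (G.φX A) = G.φX (T2 A) := by
  ext a b c
  simp [ext4, φX]
  induction G.φ a using TensorProduct.induction_on with
  | zero => simp
  | add u v hu hv => simp only [TensorProduct.add_tmul, map_add, hu, hv]
  | tmul x w => simp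

lemma el_ext4 (F : T2 A →ₗ[ℂ] T3 A) : G.el (T3 A) ∘ₗ ext4 F = op12 (G.el (T2 A) ∘ₗ F) := by
  ext a b c
  simp [ext4, op12, el]
  induction F (a ⊗ₜ b) using TensorProduct.induction_on with
  | zero => simp
  | add u v hu hv => simp only [TensorProduct.add_tmul, map_add, hu, hv]
  | tmul x w => 
    simp only [LinearMap.rTensor_tmul, LinearMap.lTensor_tmul,
      TensorProduct.assoc_tmul, LinearEquiv.coe_coe, TensorProduct.lid_tmul]
    rw [← TensorProduct.smul_tmul', map_smul]

/-- The inverse of `τ`. -/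
def T : T2 A →ₗ[ℂ] T2 A := G.er.lTensor A ∘ₗ G.σ.lTensor A ∘ₗ G.φX A ∘ₗ (G.σ' : T2 A →ₗ[ℂ] T2 A)

/-- `id ⊗ ε m`. -/
def n : T3 A →ₗ[ℂ] A := G.er ∘ₗ m23

/-- `ε m ⊗ id`. -/
def μ3 : T3 A →ₗ[ℂ] A := G.el A ∘ₗ m12


lemma op12_comp (f g : T2 A →ₗ[ℂ] T2 A) : op12 (f ∘ₗ g) = op12 f ∘ₗ op12 g := by
  ext a b c
  simp [op12]

lemma op12_id : op12 (LinearMap.id : T2 A →ₗ[ℂ] T2 A) = LinearMap.id := by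
  ext a b c
  simp [op12]

lemma mixed :
    op12_4 G.σ ∘ₗ (G.φX A).lTensor A ∘ₗ op12 G.σ' ∘ₗ G.φ.lTensor A
      = (G.σ.lTensor A).lTensor A ∘ₗ (G.φX A).lTensor A ∘ₗ G.σ'.lTensor A ∘ₗ G.φX A :=
  G.mixed_coassoc

lemma ap {X Y Z W : Type*} [AddCommGroup X] [Module ℂ X] [AddCommGroup Y] [Module ℂ Y]
    [AddCommGroup Z] [Module ℂ Z] [AddCommGroup W] [Module ℂ W]
    {f : Y →ₗ[ℂ] Z} {g : X →ₗ[ℂ] Y} {h : W →ₗ[ℂ] Z} {k : X →ₗ[ℂ] W}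
    (e : f ∘ₗ g = h ∘ₗ k) (z : X) : f (g z) = h (k z) := LinearMap.congr_fun e z

lemma apL {X Y Z W : Type*} [AddCommGroup X] [Module ℂ X] [AddCommGroup Y] [Module ℂ Y]
    [AddCommGroup Z] [Module ℂ Z] [AddCommGroup W] [Module ℂ W]
    {f : Y →ₗ[ℂ] Z} {g : X →ₗ[ℂ] Y} {h : W →ₗ[ℂ] Z} {k : X →ₗ[ℂ] W}
    (e : f ∘ₗ g = h ∘ₗ k) (z : A ⊗[ℂ] X) :
    f.lTensor A (g.lTensor A z) = h.lTensor A (k.lTensor A z) := by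
  rw [← LinearMap.lTensor_comp_apply, e, LinearMap.lTensor_comp_apply]

lemma I : op12 G.σ ∘ₗ G.φ.lTensor A ∘ₗ G.σ' = G.T.lTensor A ∘ₗ G.φX A := by
  refine LinearMap.ext fun z => ?_
  have h := congrArg ((G.er.lTensor A).lTensor A) (LinearMap.congr_fun G.mixed z)
  simp only [T, LinearMap.lTensor_comp, LinearMap.comp_apply] at h ⊢
  rw [← h, ← ap (op12_nat G.σ G.er), apL G.er_φ1, ap (G.er_op12 G.σ'),
    ← LinearMap.lTensor_comp_apply A G.er G.φ, er_φ, LinearMap.lTensor_id, LinearMap.id_apply]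

lemma extT : G.el (T3 A) ∘ₗ op12_4 G.σ ∘ₗ (G.φX A).lTensor A ∘ₗ op12 G.σ' =
    op12 (G.el (T2 A) ∘ₗ op12 G.σ ∘ₗ G.φ.lTensor A ∘ₗ G.σ') := by
  rw [← el_ext4, ext4_op12, ext4_comp, ext4_φ2]

lemma S_eq : G.el (T2 A) ∘ₗ op12 G.σ ∘ₗ G.φ.lTensor A ∘ₗ G.σ' = G.T := by
  rw [I, ← LinearMap.comp_assoc, el_nat, LinearMap.comp_assoc, el_φX, LinearMap.comp_id]

lemma II : op12 G.T ∘ₗ G.φ.lTensor A = G.σ.lTensor A ∘ₗ G.φX A ∘ₗ G.σ' := by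
  refine LinearMap.ext fun z => ?_
  have h := congrArg (G.el (T3 A)) (LinearMap.congr_fun G.mixed z)
  have h2 := G.extT
  rw [S_eq] at h2
  rw [← h2]
  have h3 : G.el (T2 A) (G.φX A z) = z := LinearMap.congr_fun G.el_φX z
  simp only [LinearMap.comp_apply] at h ⊢
  rw [h, ap (G.el_nat _), ap (G.el_nat _), ap (G.el_nat _), h3]

lemma I' : G.T.lTensor A ∘ₗ G.φX A ∘ₗ G.σ = op12 G.σ ∘ₗ G.φ.lTensor A := by
  rw [← LinearMap.comp_assoc, ← I, LinearMap.comp_assoc, LinearMap.comp_assoc, G.comp_σ]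
  rfl

lemma II' : op12 G.T ∘ₗ G.φ.lTensor A ∘ₗ G.σ = G.σ.lTensor A ∘ₗ G.φX A := by
  rw [← LinearMap.comp_assoc, II, LinearMap.comp_assoc, LinearMap.comp_assoc, G.comp_σ]
  rfl

lemma φ1T : G.φX A ∘ₗ G.T = G.T.lTensor A ∘ₗ op12 G.T ∘ₗ G.φ.lTensor A := by
  rw [II]
  have : G.T.lTensor A ∘ₗ G.σ.lTensor A =
      (G.er.lTensor A).lTensor A ∘ₗ (G.σ.lTensor A).lTensor A ∘ₗ (G.φX A).lTensor A := by
    simp only [← LinearMap.lTensor_comp]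
    rw [T]
    simp only [LinearMap.comp_assoc, G.comp_σ, LinearMap.comp_id]
  refine LinearMap.ext fun z => ?_
  simp only [LinearMap.comp_apply]
  rw [ap this]
  simp only [T, LinearMap.comp_apply]
  rw [ap (G.φX_nat _), ap (G.φX_nat _), ap G.φX_coassoc]

lemma φ2T : G.φ.lTensor A ∘ₗ G.T = op12 G.T ∘ₗ G.T.lTensor A ∘ₗ G.φX A := by
  rw [← I]
  have h2 := G.extT
  rw [S_eq] at h2
  have h3 : op12 G.T ∘ₗ op12 G.σ = G.el (T3 A) ∘ₗ op12_4 G.σ ∘ₗ (G.φX A).lTensor A := by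
    rw [← h2]
    simp only [LinearMap.comp_assoc]
    rw [← op12_comp, G.comp_σ, op12_id]
    rfl
  have h4 : (G.φ.lTensor A).lTensor A ∘ₗ G.φ.lTensor A = (G.φX A).lTensor A ∘ₗ G.φ.lTensor A := by
    rw [← LinearMap.lTensor_comp, ← LinearMap.lTensor_comp, ← G.coassoc]
    rfl
  refine LinearMap.ext fun z => ?_
  simp only [LinearMap.comp_apply]
  rw [ap h3]
  conv_lhs => rw [← S_eq]
  simp only [LinearMap.comp_apply]
  rw [← ap (G.el_nat _), ← ap (op12_nat' G.σ G.φ), ap h4]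

/-- `N = (id⊗εm)(σ⊗id)(id⊗φ)`. -/
def N : T2 A →ₗ[ℂ] A := G.n ∘ₗ op12 G.σ ∘ₗ G.φ.lTensor A

lemma m_eq : mA = mA ∘ₗ G.N.lTensor A ∘ₗ G.φX A := by
  have h := congrArg (fun f => G.er ∘ₗ f) G.comul_mul
  have h1 : G.er ∘ₗ mm = mA ∘ₗ G.n.lTensor A := by
    ext a b c d
    simp [er, mm, mA, n, m12, m23]
  rw [← LinearMap.comp_assoc, er_φ, LinearMap.id_comp, ← LinearMap.comp_assoc, h1] at h
  conv_lhs => rw [h]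
  simp only [N, LinearMap.lTensor_comp, LinearMap.comp_assoc]
  rw [← φX_nat]
  rfl

lemma k_eq : (mA ∘ₗ G.κ.rTensor A) ∘ₗ mA.lTensor A ∘ₗ G.φX A = G.el A := by
  ext a b
  have h := congrArg (fun f => f a * b) G.antipode_left
  simp [φX, el, mA, Algebra.smul_def] at h ⊢
  rw [← h]
  clear h
  induction G.φ a using TensorProduct.induction_on with
  | zero => simp
  | add u v hu hv => simp only [TensorProduct.add_tmul, map_add, hu, hv, add_mul]
  | tmul x w => simp [mul_assoc]

lemma N_eq : G.N = G.el A := by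
  have h : G.el A ∘ₗ G.N.lTensor A ∘ₗ G.φX A = G.el A := by
    refine LinearMap.ext fun z => ?_
    have k := fun z => LinearMap.congr_fun G.k_eq z
    have hm : (mA (A := A)).lTensor A
        = mA.lTensor A ∘ₗ (G.N.lTensor A).lTensor A ∘ₗ (G.φX A).lTensor A := by
      rw [← LinearMap.lTensor_comp, ← LinearMap.lTensor_comp, ← m_eq]
    rw [← k]
    conv_rhs => rw [hm]
    simp only [LinearMap.comp_apply] at k ⊢
    rw [← k, ap (G.φX_nat _), ap G.φX_coassoc]
  rw [← h, ← LinearMap.comp_assoc, el_nat, LinearMap.comp_assoc, el_φX, LinearMap.comp_id]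

/-- `Q = Tσ`. -/
def Q : T2 A →ₗ[ℂ] T2 A := G.T ∘ₗ G.σ

lemma Q_eq : G.Q = G.el (T2 A) ∘ₗ op12 G.σ ∘ₗ G.φ.lTensor A := by
  rw [Q, ← S_eq]
  simp only [LinearMap.comp_assoc, G.comp_σ, LinearMap.comp_id]

lemma φ1Q : G.φX A ∘ₗ G.Q = G.Q.lTensor A ∘ₗ G.φX A := by
  rw [Q, ← LinearMap.comp_assoc, φ1T, LinearMap.comp_assoc, LinearMap.comp_assoc, II',
    LinearMap.lTensor_comp, LinearMap.comp_assoc]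

lemma φ2Q : G.φ.lTensor A ∘ₗ G.Q = op12 G.Q ∘ₗ G.φ.lTensor A := by
  rw [Q, ← LinearMap.comp_assoc, φ2T, LinearMap.comp_assoc, LinearMap.comp_assoc, I',
    op12_comp, LinearMap.comp_assoc]

lemma μQ : G.ε ∘ₗ mA ∘ₗ G.Q = G.ε ∘ₗ G.el A := by
  rw [← N_eq, N, Q_eq]
  have : G.ε ∘ₗ mA ∘ₗ G.el (T2 A) = G.ε ∘ₗ G.n := by
    ext a b c
    simp [n, el, er, m23, mA, mul_comm]
  simp only [← LinearMap.comp_assoc] at this ⊢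
  rw [this]

lemma μ3Q : G.μ3 ∘ₗ op12 G.Q = G.el A ∘ₗ G.el (T2 A) := by
  ext a b c
  have h := congrArg (fun f => f (a ⊗ₜ b) • c) G.μQ
  simp [μ3, op12, el, m12, mul_smul] at h ⊢
  exact h

lemma R_eq : ((G.μ3 ∘ₗ G.φ.lTensor A).lTensor A ∘ₗ G.φX A) ∘ₗ G.Q = LinearMap.id := by
  rw [LinearMap.comp_assoc, φ1Q, ← LinearMap.comp_assoc, ← LinearMap.lTensor_comp,
    LinearMap.comp_assoc, φ2Q, ← LinearMap.comp_assoc, μ3Q, LinearMap.comp_assoc, el_nat,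
    ← LinearMap.comp_assoc]
  have : G.el A ∘ₗ G.φ = LinearMap.id := G.counit_left
  rw [this, LinearMap.id_comp, Lel_φX]

lemma R_T : ((G.μ3 ∘ₗ G.φ.lTensor A).lTensor A ∘ₗ G.φX A) ∘ₗ G.T = G.σ' := by
  have h := congrArg (fun f => f ∘ₗ G.σ') G.R_eq
  simpa only [Q, LinearMap.comp_assoc, G.σ_comp, LinearMap.comp_id, LinearMap.id_comp] using h

lemma τ_eq : G.τ = G.n.lTensor A ∘ₗ (G.φX A).lTensor A ∘ₗ op12 G.σ ∘ₗ G.φ.lTensor A := by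
  have h0 : G.τ = G.er.lTensor A ∘ₗ G.σ'.lTensor A ∘ₗ G.φX A ∘ₗ G.σ := rfl
  have h1 : G.er ∘ₗ (G.μ3 ∘ₗ G.φ.lTensor A).lTensor A = G.n := by
    ext a b c
    have h : G.el A ∘ₗ G.φ = LinearMap.id := G.counit_left
    have h2 := congrArg (fun x => G.ε (b * x)) (LinearMap.congr_fun G.counit_right c)
    have h3 : ∀ w : T2 A, G.ε (G.μ3 (b ⊗ₜ w)) = G.ε (b * G.er w) := by
      intro w
      induction w using TensorProduct.induction_on with
      | zero => simp
      | tmul => simp [μ3, el, m12, er, mA, mul_comm]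
      | add u v hu hv => simp only [TensorProduct.tmul_add, map_add, mul_add, hu, hv]
    have h4 := LinearMap.congr_fun G.er_φ c
    simp only [LinearMap.comp_apply, LinearMap.id_apply] at h4
    have h5 : ∀ x y : A, G.er (x ⊗ₜ y) = G.ε y • x := fun x y => by simp [er]
    simp [n, m23, h3, mA, h4, h5]
  rw [h0, ← R_T, ← I']
  simp only [LinearMap.lTensor_comp, LinearMap.comp_assoc]
  rw [← h1]
  simp only [LinearMap.lTensor_comp, LinearMap.comp_assoc]

lemma T_τ : G.T ∘ₗ G.τ = LinearMap.id := by
  have h1 : G.T ∘ₗ G.n.lTensor A = G.n.lTensor A ∘ₗ op12_4 G.T := by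
    ext a b c d
    simp [op12_4, n, er, m23]
    induction G.T (a ⊗ₜ b) using TensorProduct.induction_on with
    | zero => simp
    | tmul => simp
    | add u v hu hv => simp only [TensorProduct.add_tmul, map_add, hu, hv, smul_add]
  have h2 := congrArg ext4 G.II'
  rw [ext4_op12, ext4_comp, ext4_φ2, ext4_op23, ext4_φ1] at h2
  rw [τ_eq, ← LinearMap.comp_assoc, h1]
  have h3 : G.n.lTensor A ∘ₗ (op12_4 G.T ∘ₗ (G.φX A).lTensor A ∘ₗ op12 G.σ) ∘ₗ G.φ.lTensor A
      = LinearMap.id := by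
    rw [h2, LinearMap.comp_assoc, φX_nat]
    have := G.Lel_φX (X := A)
    rw [← N_eq, N] at this
    simpa only [LinearMap.lTensor_comp, LinearMap.comp_assoc] using this
  simpa only [LinearMap.comp_assoc] using h3

lemma τ_T : G.τ ∘ₗ G.T = LinearMap.id := by
  have h : (G.σ ∘ₗ ((G.μ3 ∘ₗ G.φ.lTensor A).lTensor A ∘ₗ G.φX A)) ∘ₗ G.T = LinearMap.id := by
    rw [LinearMap.comp_assoc, R_T, G.σ_comp]
  have h2 := congrArg (fun f => f ∘ₗ G.τ) h
  simp only [LinearMap.comp_assoc _ G.T, T_τ, LinearMap.comp_id, LinearMap.id_comp] at h2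
  rw [← h2, h]

end BQG

/-- Pentagonal relations for `τ` alone:
`(φ⊗id)τ = (id⊗τ)(τ⊗id)(id⊗φ)` and `(id⊗φ)τ = (τ⊗id)(id⊗τ)(φ⊗id)`. -/
theorem bqg_pentagon_tau {A : Type*} [Ring A] [Algebra ℂ A] (G : BQG A) :
    G.φ1 ∘ₗ G.τ = op23 G.τ ∘ₗ op12 G.τ ∘ₗ G.φ2 ∧
    G.φ2 ∘ₗ G.τ = op12 G.τ ∘ₗ op23 G.τ ∘ₗ G.φ1 := by
  have e12 : op12 G.τ ∘ₗ op12 G.T = LinearMap.id := by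
    rw [← BQG.op12_comp, G.τ_T, BQG.op12_id]
  have e23 : op23 G.τ ∘ₗ G.T.lTensor A = LinearMap.id := by
    rw [op23, ← LinearMap.lTensor_comp, G.τ_T, LinearMap.lTensor_id]
  have a1 := G.φ1T
  have a2 := G.φ2T
  have d1 : G.φ1 = G.φX A := rfl
  have d2 : G.φ2 = G.φ.lTensor A := rfl
  rw [d1, d2]
  have ht := G.T_τ
  have e12' : ∀ z, op12 G.τ (op12 G.T z) = z := LinearMap.congr_fun e12
  have e23' : ∀ z, op23 G.τ (G.T.lTensor A z) = z := LinearMap.congr_fun e23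
  have ht' : ∀ z, G.T (G.τ z) = z := LinearMap.congr_fun ht
  constructor
  · refine LinearMap.ext fun z => ?_
    have := LinearMap.congr_fun a2 (G.τ z)
    simp only [LinearMap.comp_apply, ht'] at this ⊢
    rw [this, e12', e23']
  · refine LinearMap.ext fun z => ?_
    have := LinearMap.congr_fun a1 (G.τ z)
    simp only [LinearMap.comp_apply, ht'] at this ⊢
    rw [this, e23', e12']
end
end

section
/- In a braided quantum group, the secondary braiding τ satisfies the hexagon-type multiplication relations τ(m⊗id) = (id⊗τ)(τ⊗id)(id⊗m) and τ(id⊗m) = (τ⊗id)(id⊗τ)(m⊗id). -/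
open TensorProduct LinearMap

noncomputable section

variable (A : Type*) [Ring A] [Algebra ℂ A]

variable {A}

/-! ## String diagram calculus

A monoid `M` of operators with a shift endomorphism (tensoring with the identity on the left).
A generator with `a` inputs and `b` outputs is an operator `g` such that
`g * s^a f = s^b f * g` for all `f`. -/

namespace BQGProof

/-- Generators of a braided quantum group, acting on an infinite tensor power. -/
structure Sys (M : Type*) [Monoid M] where
  /-- the shift: tensoring with the identity of the first factor -/
  shift : M →* M
  m : M
  p : M
  e : M
  k : M
  j : M
  u : M
  s : M
  r : M
  nat_m : ∀ f, m * shift (shift f) = shift f * m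
  nat_p : ∀ f, p * shift f = shift (shift f) * p
  nat_e : ∀ f, e * shift f = f * e
  nat_k : ∀ f, k * shift f = shift f * k
  nat_j : ∀ f, j * shift f = shift f * j
  nat_u : ∀ f, u * f = shift f * u
  nat_s : ∀ f, s * shift (shift f) = shift (shift f) * s
  nat_r : ∀ f, r * shift (shift f) = shift (shift f) * r
  ax_sr : s * r = 1
  ax_rs : r * s = 1
  ax_jk : j * k = 1
  ax_ca : p * p = shift p * p
  ax_cl : e * p = 1
  ax_cr : shift e * p = 1
  ax_hl : s * m = shift m * (s * shift s)
  ax_hr : s * shift m = m * (shift s * s)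
  ax_as : m * m = m * shift m
  ax_ul : m * u = 1
  ax_ur : m * shift u = 1
  ax_mul : p * m = m * (shift (shift m) * (shift s * (p * shift p)))
  ax_mx : s * (shift p * (r * shift p)) = shift (shift s) * (shift p * (shift r * p))
  ax_al : m * (k * p) = u * e
  ax_ar : m * (shift k * p) = u * e

namespace Sys

variable {M : Type*} [Monoid M] (S : Sys M)

/-- Iterated shift. -/
def sh : ℕ → M → M
  | 0, f => f
  | n + 1, f => S.shift (sh n f)

theorem sh_mul (n : ℕ) (f g : M) : S.sh n (f * g) = S.sh n f * S.sh n g := by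
  induction n with
  | zero => rfl
  | succ n ih => simp only [sh, ih, map_mul]

theorem sh_one (n : ℕ) : S.sh n 1 = 1 := by
  induction n with
  | zero => rfl
  | succ n ih => simp only [sh, ih, map_one]

theorem sh_add (n k : ℕ) (f : M) : S.sh (n + k) f = S.sh n (S.sh k f) := by
  induction n with
  | zero => simp only [sh, Nat.zero_add]
  | succ n ih => rw [Nat.succ_add]; simp only [sh, ih]

/-- Shifting an equation and composing it with an arbitrary operator. -/
theorem lift {a b : M} (h : a = b) (n : ℕ) (x : M) : S.sh n a * x = S.sh n b * x := by rw [h]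

/-- Shifting an interchange law. -/
theorem lift_nat (g : M) (a b : ℕ) (h : ∀ f, g * S.sh a f = S.sh b f * g) (n k : ℕ) (f x : M) :
    S.sh n g * (S.sh (n + a + k) f * x) = S.sh (n + b + k) f * (S.sh n g * x) := by
  rw [← mul_assoc, ← mul_assoc, Nat.add_assoc, Nat.add_assoc, S.sh_add n (a + k),
    S.sh_add n (b + k), ← sh_mul, ← sh_mul, S.sh_add a, S.sh_add b, h]

section Letters

local notation "μ[" n "]" => S.sh n S.m
local notation "φ[" n "]" => S.sh n S.p
local notation "ε[" n "]" => S.sh n S.e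
local notation "κ[" n "]" => S.sh n S.k
local notation "γ[" n "]" => S.sh n S.j
local notation "η[" n "]" => S.sh n S.u
local notation "σ[" n "]" => S.sh n S.s
local notation "ρ[" n "]" => S.sh n S.r

theorem xm (n k : ℕ) (f x : M) :
    S.sh n S.m * (S.sh (n + 2 + k) f * x) = S.sh (n + 1 + k) f * (S.sh n S.m * x) :=
  S.lift_nat S.m 2 1 S.nat_m n k f x

theorem xp (n k : ℕ) (f x : M) :
    S.sh n S.p * (S.sh (n + 1 + k) f * x) = S.sh (n + 2 + k) f * (S.sh n S.p * x) :=
  S.lift_nat S.p 1 2 S.nat_p n k f x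

theorem xe (n k : ℕ) (f x : M) :
    S.sh n S.e * (S.sh (n + 1 + k) f * x) = S.sh (n + k) f * (S.sh n S.e * x) :=
  by simpa only [Nat.add_zero] using S.lift_nat S.e 1 0 S.nat_e n k f x

theorem xez (n : ℕ) (f x : M) :
    S.sh n S.e * (S.sh (n + 1) f * x) = S.sh (n) f * (S.sh n S.e * x) :=
  S.xe n 0 f x

theorem xk (n k : ℕ) (f x : M) :
    S.sh n S.k * (S.sh (n + 1 + k) f * x) = S.sh (n + 1 + k) f * (S.sh n S.k * x) :=
  S.lift_nat S.k 1 1 S.nat_k n k f x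

theorem xj (n k : ℕ) (f x : M) :
    S.sh n S.j * (S.sh (n + 1 + k) f * x) = S.sh (n + 1 + k) f * (S.sh n S.j * x) :=
  S.lift_nat S.j 1 1 S.nat_j n k f x

theorem xu (n k : ℕ) (f x : M) :
    S.sh n S.u * (S.sh (n + k) f * x) = S.sh (n + 1 + k) f * (S.sh n S.u * x) :=
  by simpa only [Nat.add_zero] using S.lift_nat S.u 0 1 S.nat_u n k f x

theorem xuz (n : ℕ) (f x : M) :
    S.sh n S.u * (S.sh (n) f * x) = S.sh (n + 1) f * (S.sh n S.u * x) :=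
  S.xu n 0 f x

theorem xs (n k : ℕ) (f x : M) :
    S.sh n S.s * (S.sh (n + 2 + k) f * x) = S.sh (n + 2 + k) f * (S.sh n S.s * x) :=
  S.lift_nat S.s 2 2 S.nat_s n k f x

theorem xr (n k : ℕ) (f x : M) :
    S.sh n S.r * (S.sh (n + 2 + k) f * x) = S.sh (n + 2 + k) f * (S.sh n S.r * x) :=
  S.lift_nat S.r 2 2 S.nat_r n k f x

theorem add_one_sh (n : ℕ) (f : M) : S.sh n (S.shift f) = S.sh (n + 1) f :=
  (S.sh_add n 1 f).symm

theorem sr (n : ℕ) (x : M) : σ[n] * (ρ[n] * x) = x := by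
  simpa only [sh_mul, sh_one, add_one_sh, mul_assoc, one_mul] using S.lift S.ax_sr n x

theorem rs (n : ℕ) (x : M) : ρ[n] * (σ[n] * x) = x := by
  simpa only [sh_mul, sh_one, add_one_sh, mul_assoc, one_mul] using S.lift S.ax_rs n x

theorem jk (n : ℕ) (x : M) : γ[n] * (κ[n] * x) = x := by
  simpa only [sh_mul, sh_one, add_one_sh, mul_assoc, one_mul] using S.lift S.ax_jk n x

theorem ca (n : ℕ) (x : M) : φ[n] * (φ[n] * x) = φ[n+1] * (φ[n] * x) := by
  simpa only [sh_mul, sh_one, add_one_sh, mul_assoc, one_mul] using S.lift S.ax_ca n x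

theorem cl (n : ℕ) (x : M) : ε[n] * (φ[n] * x) = x := by
  simpa only [sh_mul, sh_one, add_one_sh, mul_assoc, one_mul] using S.lift S.ax_cl n x

theorem cr (n : ℕ) (x : M) : ε[n+1] * (φ[n] * x) = x := by
  simpa only [sh_mul, sh_one, add_one_sh, mul_assoc, one_mul] using S.lift S.ax_cr n x

theorem hl (n : ℕ) (x : M) : σ[n] * (μ[n] * x) = μ[n+1] * (σ[n] * (σ[n+1] * x)) := by
  simpa only [sh_mul, sh_one, add_one_sh, mul_assoc, one_mul] using S.lift S.ax_hl n x

theorem hr (n : ℕ) (x : M) : σ[n] * (μ[n+1] * x) = μ[n] * (σ[n+1] * (σ[n] * x)) := by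
  simpa only [sh_mul, sh_one, add_one_sh, mul_assoc, one_mul] using S.lift S.ax_hr n x

theorem as_ (n : ℕ) (x : M) : μ[n] * (μ[n] * x) = μ[n] * (μ[n+1] * x) := by
  simpa only [sh_mul, sh_one, add_one_sh, mul_assoc, one_mul] using S.lift S.ax_as n x

theorem ul (n : ℕ) (x : M) : μ[n] * (η[n] * x) = x := by
  simpa only [sh_mul, sh_one, add_one_sh, mul_assoc, one_mul] using S.lift S.ax_ul n x

theorem ur (n : ℕ) (x : M) : μ[n] * (η[n+1] * x) = x := by
  simpa only [sh_mul, sh_one, add_one_sh, mul_assoc, one_mul] using S.lift S.ax_ur n x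

theorem mul (n : ℕ) (x : M) : φ[n] * (μ[n] * x) = μ[n] * (μ[n+2] * (σ[n+1] * (φ[n] * (φ[n+1] * x)))) := by
  simpa only [sh_mul, sh_one, add_one_sh, mul_assoc, one_mul] using S.lift S.ax_mul n x

theorem mx (n : ℕ) (x : M) : σ[n] * (φ[n+1] * (ρ[n] * (φ[n+1] * x))) = σ[n+2] * (φ[n+1] * (ρ[n+1] * (φ[n] * x))) := by
  simpa only [sh_mul, sh_one, add_one_sh, mul_assoc, one_mul] using S.lift S.ax_mx n x

theorem al (n : ℕ) (x : M) : μ[n] * (κ[n] * (φ[n] * x)) = η[n] * (ε[n] * x) := by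
  simpa only [sh_mul, sh_one, add_one_sh, mul_assoc, one_mul] using S.lift S.ax_al n x

theorem ar (n : ℕ) (x : M) : μ[n] * (κ[n+1] * (φ[n] * x)) = η[n] * (ε[n] * x) := by
  simpa only [sh_mul, sh_one, add_one_sh, mul_assoc, one_mul] using S.lift S.ax_ar n x

/-- The operator `θ = (id² ⊗ ε)(id ⊗ σ)(φ ⊗ id)σ⁻¹`. -/
def t : M := S.sh 2 S.e * (S.sh 1 S.s * (S.p * S.r))

/-- A convolution inverse of `ε κ`. -/
def v : M := S.e * (S.j * (S.sh 1 S.e * (S.sh 1 S.e * (S.sh 1 S.m * (S.p * (S.sh 1 S.p *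
  (S.k * S.p)))))))

/-- The inverse of `θ`. -/
def y : M := S.s * (S.sh 2 S.e * (S.sh 1 S.s * (S.sh 1 S.k * (S.p * (S.sh 1 S.v * S.p)))))

local notation "θ[" n "]" => S.sh n S.t
local notation "ν[" n "]" => S.sh n S.v
local notation "τ[" n "]" => S.sh n S.y

theorem td (n : ℕ) (x : M) : θ[n] * x = ε[n+2] * (σ[n+1] * (φ[n] * (ρ[n] * x))) := by
  simp only [t, sh_mul, ← sh_add, mul_assoc]

theorem vd (n : ℕ) (x : M) : ν[n] * x = ε[n] * (γ[n] * (ε[n+1] * (ε[n+1] * (μ[n+1] * (φ[n] *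
    (φ[n+1] * (κ[n] * (φ[n] * x)))))))) := by
  simp only [v, sh_mul, ← sh_add, mul_assoc]

theorem yd (n : ℕ) (x : M) : τ[n] * x = σ[n] * (ε[n+2] * (σ[n+1] * (κ[n+1] * (φ[n] *
    (ν[n+1] * (φ[n] * x)))))) := by
  simp only [y, sh_mul, ← sh_add, mul_assoc]

theorem xt (n k : ℕ) (f x : M) :
    S.sh n S.t * (S.sh (n + 2 + k) f * x) = S.sh (n + 2 + k) f * (S.sh n S.t * x) := by
  rw [td, td, S.xr n k f, show n + 2 + k = n + 1 + (1 + k) by omega, S.xp n (1 + k) f,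
    show n + 2 + (1 + k) = n + 1 + 2 + k by omega, S.xs (n + 1) k f,
    show n + 1 + 2 + k = n + 2 + 1 + k by omega, S.xe (n + 2) k f]
  rw [show n + 2 + k = n + 1 + (1 + k) by omega]

theorem xv (n k : ℕ) (f x : M) :
    S.sh n S.v * (S.sh (n + 1 + k) f * x) = S.sh (n + k) f * (S.sh n S.v * x) := by
  rw [vd, vd, S.xp n k f, show n + 2 + k = n + 1 + (1 + k) by omega, S.xk n (1 + k) f,
    show n + 1 + (1 + k) = n + 1 + 1 + k by omega, S.xp (n + 1) k f,
    show n + 1 + 2 + k = n + 1 + (2 + k) by omega, S.xp n (2 + k) f,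
    show n + 2 + (2 + k) = n + 1 + 2 + (1 + k) by omega, S.xm (n + 1) (1 + k) f,
    S.xe (n + 1) (1 + k) f,
    show n + 1 + (1 + k) = n + 1 + 1 + k by omega, S.xe (n + 1) k f,
    S.xj n k f, S.xe n k f]

theorem xvz (n : ℕ) (f x : M) :
    S.sh n S.v * (S.sh (n + 1) f * x) = S.sh (n) f * (S.sh n S.v * x) :=
  S.xv n 0 f x

theorem xy (n k : ℕ) (f x : M) :
    S.sh n S.y * (S.sh (n + 2 + k) f * x) = S.sh (n + 2 + k) f * (S.sh n S.y * x) := by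
  rw [yd, yd, show n + 2 + k = n + 1 + (1 + k) by omega, S.xp n (1 + k) f,
    show n + 2 + (1 + k) = n + 1 + 1 + (1 + k) by omega, S.xv (n + 1) (1 + k) f,
    show n + 1 + (1 + k) = n + 1 + (1 + k) by omega, S.xp n (1 + k) f,
    show n + 2 + (1 + k) = n + 1 + 1 + (1 + k) by omega, S.xk (n + 1) (1 + k) f,
    show n + 1 + 1 + (1 + k) = n + 1 + 2 + k by omega, S.xs (n + 1) k f,
    show n + 1 + 2 + k = n + 2 + 1 + k by omega, S.xe (n + 2) k f,
    S.xs n k f,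
    show n + 1 + (1 + k) = n + 2 + k by omega]

/-- First pentagonal relation for the inverse braiding. -/
theorem p1a (n : ℕ) (x : M) :
    σ[n] * (φ[n+1] * (ρ[n] * x)) =
    θ[n+1] * (φ[n] * x) := by
  calc _ = ε[n+3] * (σ[n] * (φ[n+1] * (ρ[n] * (φ[n+1] * x)))) := by
        symm; rw [← S.xs n 1 S.e, ← S.xp (n+1) 0 S.e, ← S.xr n 0 S.e, S.cr (n+1)]
    _ = _ := by
        rw [S.mx n, ← S.td (n+1)]

theorem p2z (n : ℕ) (x : M) :
    σ[n+1] * (φ[n] * (ρ[n] * x)) =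
    ε[n] * (σ[n] * (φ[n+1] * (ρ[n] * (φ[n+1] * x)))) := by
  calc _ = ε[n] * (σ[n+2] * (φ[n+1] * (ρ[n+1] * (φ[n] * x)))) := by
        symm; rw [S.xe n 1 S.s, S.xez n S.p, S.xez n S.r, S.cl n]
    _ = _ := by
        rw [← S.mx n]

/-- The two expressions of the secondary braiding of the inverse agree. -/
theorem td2 (n : ℕ) (x : M) :
    θ[n] * x =
    ε[n] * (σ[n] * (φ[n+1] * (ρ[n] * x))) := by
  rw [S.td n, S.p2z n, ← S.xe n 2 S.e, ← S.xs n 1 S.e, ← S.xp (n+1) 0 S.e, ← S.xr n 0 S.e,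
    S.cr (n+1)]

/-- Second pentagonal relation for the inverse braiding. -/
theorem p2a (n : ℕ) (x : M) :
    σ[n+1] * (φ[n] * (ρ[n] * x)) =
    θ[n] * (φ[n+1] * x) := by
  rw [S.p2z n, ← S.td2 n]

theorem p1b (n : ℕ) (x : M) :
    σ[n] * (φ[n+1] * x) =
    θ[n+1] * (φ[n] * (σ[n] * x)) := by
  calc _ = σ[n] * (φ[n+1] * (ρ[n] * (σ[n] * x))) := by
        symm; rw [S.rs n]
    _ = _ := by
        rw [S.p1a n]

theorem p2b (n : ℕ) (x : M) :
    σ[n+1] * (φ[n] * x) =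
    θ[n] * (φ[n+1] * (σ[n] * x)) := by
  calc _ = σ[n+1] * (φ[n] * (ρ[n] * (σ[n] * x))) := by
        symm; rw [S.rs n]
    _ = _ := by
        rw [S.p2a n]

theorem p1c (n : ℕ) (x : M) :
    φ[n+1] * (ρ[n] * x) =
    ρ[n] * (θ[n+1] * (φ[n] * x)) := by
  calc _ = ρ[n] * (σ[n] * (φ[n+1] * (ρ[n] * x))) := by
        symm; rw [S.rs n]
    _ = _ := by
        rw [S.p1a n]

theorem p2c (n : ℕ) (x : M) :
    φ[n] * (ρ[n] * x) =
    ρ[n+1] * (θ[n] * (φ[n+1] * x)) := by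
  calc _ = ρ[n+1] * (σ[n+1] * (φ[n] * (ρ[n] * x))) := by
        symm; rw [S.rs (n+1)]
    _ = _ := by
        rw [S.p2a n]

theorem et0 (n : ℕ) (x : M) :
    ε[n] * (θ[n] * x) =
    ε[n+1] * x := by
  rw [S.td n, S.xe n 1 S.e, S.xez n S.s, S.cl n, S.sr n]

theorem et1 (n : ℕ) (x : M) :
    ε[n+1] * (θ[n] * x) =
    ε[n] * x := by
  rw [S.td2 n, ← S.xe n 1 S.e, ← S.xs n 0 S.e, S.cr (n+1), S.sr n]

theorem pt0 (n : ℕ) (x : M) :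
    φ[n] * (θ[n] * x) =
    θ[n+1] * (θ[n] * (φ[n+1] * x)) := by
  rw [S.td n, S.xp n 1 S.e, S.xp n 0 S.s, S.ca n, S.p2c n, ← S.td (n+1)]

theorem pt1 (n : ℕ) (x : M) :
    φ[n+1] * (θ[n] * x) =
    θ[n] * (θ[n+1] * (φ[n] * x)) := by
  rw [S.td2 n, ← S.xe n 1 S.p, ← S.xs n 0 S.p, ← S.ca (n+1), S.p1c n, ← S.td2 n]

theorem hri (n : ℕ) (x : M) :
    ρ[n] * (μ[n+1] * x) =
    μ[n] * (ρ[n+1] * (ρ[n] * x)) := by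
  calc _ = ρ[n] * (μ[n+1] * (σ[n] * (σ[n+1] * (ρ[n+1] * (ρ[n] * x))))) := by
        symm; rw [S.sr (n+1), S.sr n]
    _ = _ := by
        rw [← S.hl n, S.rs n]

theorem hli (n : ℕ) (x : M) :
    ρ[n] * (μ[n] * x) =
    μ[n+1] * (ρ[n] * (ρ[n+1] * x)) := by
  calc _ = ρ[n] * (μ[n] * (σ[n+1] * (σ[n] * (ρ[n] * (ρ[n+1] * x))))) := by
        symm; rw [S.sr n, S.sr (n+1)]
    _ = _ := by
        rw [← S.hr n, S.rs n]

/-- Hexagon relation for the operator `θ`. -/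
theorem ht0 (n : ℕ) (x : M) :
    θ[n] * (μ[n] * x) =
    μ[n+1] * (θ[n] * (θ[n+1] * x)) := by
  calc _ = ε[n+2] * (σ[n+1] * (ρ[n+1] * (θ[n] * (μ[n] * (φ[n+2] * x))))) := by
        symm; rw [S.sr (n+1), ← S.xt n 0 S.e, ← S.xm n 1 S.e, S.cr (n+2)]
    _ = _ := by
        rw [S.xm n 0 S.p, ← S.p2c n, S.hli n, S.xp n 0 S.m, S.p2c n, S.p2c (n+1), S.xt n 0 S.r,
          ← S.hli (n+1), S.sr (n+1), ← S.xm (n+1) 0 S.e, ← S.xt n 1 S.e, ← S.xt (n+1) 0 S.e,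
          S.cr (n+2)]

theorem ht1 (n : ℕ) (x : M) :
    θ[n] * (μ[n+1] * x) =
    μ[n] * (θ[n+1] * (θ[n] * x)) := by
  calc _ = ε[n] * (σ[n] * (ρ[n] * (θ[n+1] * (μ[n+2] * (φ[n] * x))))) := by
        symm; rw [S.sr n, S.xez n S.t, S.xe n 1 S.m, S.cl n]
    _ = _ := by
        rw [← S.xp n 0 S.m, ← S.p1c n, S.hri n, ← S.xm n 0 S.p, S.p1c (n+1), S.p1c n, ← S.xr n 0 S.t,
          ← S.hri n, S.sr n, S.xez n S.m, S.xe n 1 S.t, S.xez n S.t, S.cl n]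

/-- The braiding is compatible with the unit. -/
theorem suz (n : ℕ) (x : M) :
    μ[n+1] * (σ[n] * (η[n] * x)) =
    x := by
  calc _ = μ[n+1] * (σ[n] * (η[n] * (σ[n] * (ρ[n] * x)))) := by
        symm; rw [S.sr n]
    _ = _ := by
        rw [S.xuz n S.s, ← S.hl n, S.ul n, S.sr n]

theorem su0 (n : ℕ) (x : M) :
    σ[n] * (η[n] * x) =
    η[n+1] * x := by
  calc _ = μ[n+1] * (η[n+2] * (σ[n] * (η[n] * x))) := by
        symm; rw [S.ur (n+1)]
    _ = _ := by
        rw [← S.xs n 0 S.u, ← S.xu n 1 S.u, S.suz n]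

theorem suy (n : ℕ) (x : M) :
    μ[n] * (σ[n+1] * (η[n+2] * x)) =
    x := by
  calc _ = μ[n] * (σ[n+1] * (η[n+2] * (σ[n] * (ρ[n] * x)))) := by
        symm; rw [S.sr n]
    _ = _ := by
        rw [← S.xs n 0 S.u, ← S.hr n, S.ur (n+1), S.sr n]

theorem su1 (n : ℕ) (x : M) :
    σ[n] * (η[n+1] * x) =
    η[n] * x := by
  calc _ = μ[n] * (η[n] * (σ[n] * (η[n+1] * x))) := by
        symm; rw [S.ul n]
    _ = _ := by
        rw [S.xuz n S.s, S.xu n 1 S.u, S.suy n]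

theorem ru0 (n : ℕ) (x : M) :
    ρ[n] * (η[n] * x) =
    η[n+1] * x := by
  rw [← S.su1 n, S.rs n]

theorem ru1 (n : ℕ) (x : M) :
    ρ[n] * (η[n+1] * x) =
    η[n] * x := by
  rw [← S.su0 n, S.rs n]

theorem tu0 (n : ℕ) (x : M) :
    θ[n] * (η[n] * x) =
    η[n+1] * x := by
  rw [S.td n, S.ru0 n, S.xp n 0 S.u, S.su1 (n+1), ← S.xuz (n+1) S.e, S.cr n]

theorem tu1 (n : ℕ) (x : M) :
    θ[n] * (η[n+1] * x) =
    η[n] * x := by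
  rw [S.td2 n, S.ru1 n, ← S.xuz n S.p, S.su0 n, S.xez n S.u, S.cl n]

theorem tkz (n : ℕ) (x : M) :
    μ[n] * (θ[n+1] * (κ[n+2] * (θ[n] * (φ[n+1] * x)))) =
    η[n] * (ε[n+1] * x) := by
  rw [← S.xt n 0 S.k, ← S.ht1 n, S.ar (n+1), S.tu1 n]

/-- The antipode commutes with the operator `θ`. -/
theorem tk (n : ℕ) (x : M) :
    θ[n] * (κ[n+1] * x) =
    κ[n] * (θ[n] * x) := by
  calc _ = θ[n] * (κ[n+1] * (ε[n+1] * (φ[n+1] * x))) := by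
        symm; rw [S.cl (n+1)]
    _ = ε[n] * (θ[n+1] * (κ[n+2] * (θ[n] * (φ[n+1] * x)))) := by
        rw [← S.et0 n, ← S.xe n 1 S.k, ← S.xez n S.t]
    _ = μ[n] * (η[n] * (ε[n] * (θ[n+1] * (κ[n+2] * (θ[n] * (φ[n+1] * x)))))) := by
        symm; rw [S.ul n]
    _ = _ := by
        rw [← S.al n, S.xp n 0 S.t, S.xp n 1 S.k, S.pt0 n, S.as_ n, ← S.xk n 0 S.m, S.ca (n+1),
          S.xt n 0 S.p, S.tkz (n+1), ← S.xt n 0 S.e, S.xk n 0 S.u, S.ur n, S.cr (n+1)]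

/-- The map `p ⊗ q b₂` with `p ⊗ q = σ (a ⊗ b₁)` in terms of the antipode. -/
theorem nf (n : ℕ) (x : M) :
    μ[n+1] * (σ[n] * (φ[n+1] * x)) =
    μ[n] * (κ[n] * (φ[n+1] * (μ[n+1] * (φ[n] * x)))) := by
  calc _ = μ[n+1] * (σ[n] * (ε[n] * (φ[n] * (φ[n+1] * x)))) := by
        symm; rw [S.cl n]
    _ = ε[n] * (μ[n+2] * (σ[n+1] * (φ[n] * (φ[n+1] * x)))) := by
        rw [← S.xez n S.s, ← S.xe n 1 S.m]
    _ = μ[n] * (η[n] * (ε[n] * (μ[n+2] * (σ[n+1] * (φ[n] * (φ[n+1] * x)))))) := by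
        symm; rw [S.ul n]
    _ = _ := by
        rw [← S.al n, S.xp n 1 S.m, S.xp n 0 S.s, S.ca n, S.as_ n, ← S.xk n 0 S.m, S.xp n 0 S.p,
          ← S.mul (n+1)]

theorem k0 (n : ℕ) (x : M) :
    ε[n+1] * (μ[n+1] * (σ[n] * (φ[n+1] * x))) =
    ε[n] * x := by
  rw [S.nf n, ← S.xm n 0 S.e, ← S.xk n 1 S.e, S.cr (n+1), S.xk n 0 S.m, ← S.as_ n, S.al n,
    S.ul n]

theorem tc1 (n : ℕ) (x : M) :
    θ[n] * (σ[n] * x) =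
    ε[n+2] * (σ[n+1] * (φ[n] * x)) := by
  rw [S.td n, S.rs n]

theorem tc2 (n : ℕ) (x : M) :
    θ[n] * (σ[n] * x) =
    ε[n] * (σ[n] * (φ[n+1] * x)) := by
  rw [S.td2 n, S.rs n]

/-- The counit is normalised on the unit. -/
theorem eu (n : ℕ) (x : M) :
    ε[n] * (η[n] * x) =
    x := by
  rw [← S.k0 n, ← S.xuz n S.p, S.su0 n, S.ul (n+1), S.cr n]

theorem puz (n : ℕ) (x : M) :
    μ[n+1] * (σ[n] * (φ[n+1] * (η[n+1] * x))) =
    η[n] * x := by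
  rw [S.nf n, S.xp n 0 S.u, S.ur (n+1), ← S.ca n, S.al n, S.cl n]

/-- The coproduct preserves the unit. -/
theorem pu (n : ℕ) (x : M) :
    φ[n] * (η[n] * x) =
    η[n] * (η[n] * x) := by
  calc _ = μ[n+1] * (η[n+1] * (φ[n] * (η[n] * x))) := by
        symm; rw [S.ul (n+1)]
    _ = _ := by
        rw [← S.su0 n, S.xuz n S.p, S.xuz n S.u, S.puz n, S.xuz n S.u]

theorem qd (n : ℕ) (x : M) :
    μ[n] * (θ[n] * (σ[n] * x)) =
    ε[n] * (μ[n+1] * (σ[n] * (φ[n+1] * x))) := by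
  rw [S.tc2 n, ← S.xez n S.m]

theorem eq (n : ℕ) (x : M) :
    ε[n] * (μ[n] * (θ[n] * (σ[n] * x))) =
    ε[n] * (ε[n] * x) := by
  rw [S.qd n, ← S.xez n S.e, S.k0 n]

/-- The operator `θ σ` is left colinear. -/
theorem cpl (n : ℕ) (x : M) :
    φ[n] * (θ[n] * (σ[n] * x)) =
    θ[n+1] * (σ[n+1] * (φ[n] * x)) := by
  rw [S.tc1 n, S.xp n 1 S.e, S.xp n 0 S.s, S.ca n, ← S.tc1 (n+1)]

/-- The operator `θ σ` is right colinear. -/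
theorem cpr (n : ℕ) (x : M) :
    φ[n+1] * (θ[n] * (σ[n] * x)) =
    θ[n] * (σ[n] * (φ[n+1] * x)) := by
  rw [S.tc2 n, ← S.xe n 1 S.p, ← S.xs n 0 S.p, ← S.ca (n+1), ← S.tc2 n]

/-- A left inverse of `θ σ`. -/
theorem vc (n : ℕ) (x : M) :
    ε[n+1] * (μ[n+1] * (φ[n] * (φ[n+1] * (θ[n] * (σ[n] * x))))) =
    x := by
  rw [S.cpr n, S.cpl n, S.eq (n+1), S.cr n, S.cl (n+1)]

theorem np (n : ℕ) (x : M) :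
    μ[n+1] * (σ[n] * (φ[n+1] * (ρ[n+1] * (ρ[n] * x)))) =
    ρ[n+1] * (θ[n] * (μ[n+2] * (σ[n+1] * (φ[n+2] * x)))) := by
  rw [S.nf n, S.xp n 0 S.r, S.p2c n, ← S.hri (n+1), S.p2c (n+1), ← S.xt n 0 S.m,
    ← S.xt n 0 S.p, S.xk n 1 S.r, S.xk n 0 S.t, ← S.tk n, S.xm n 0 S.r, ← S.ht1 n,
    ← S.nf (n+1)]

theorem qpz (n : ℕ) (x : M) :
    μ[n] * (θ[n] * (σ[n] * (ρ[n+1] * (ρ[n] * x)))) =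
    ρ[n] * (μ[n+1] * (θ[n+1] * (σ[n+1] * x))) := by
  rw [S.qd n, S.np n, S.xez n S.r, S.et0 n, ← S.qd (n+1)]

theorem qp (n : ℕ) (x : M) :
    σ[n] * (μ[n] * (θ[n] * (σ[n] * x))) =
    μ[n+1] * (θ[n+1] * (σ[n+1] * (σ[n] * (σ[n+1] * x)))) := by
  calc _ = σ[n] * (μ[n] * (θ[n] * (σ[n] * (ρ[n+1] * (ρ[n] * (σ[n] * (σ[n+1] * x))))))) := by
        symm; rw [S.rs n, S.rs (n+1)]
    _ = _ := by
        rw [S.qpz n, S.sr n]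

/-- The map `(id ⊗ ε) σ` is an action of the deformed product `m θ σ`. -/
theorem act (n : ℕ) (x : M) :
    ε[n+1] * (σ[n] * (μ[n] * (θ[n] * (σ[n] * x)))) =
    ε[n+1] * (σ[n] * (ε[n+2] * (σ[n+1] * x))) := by
  rw [S.qp n, S.eq (n+1), ← S.xez (n+1) S.e, ← S.xs n 0 S.e]

theorem kaz (n : ℕ) (x : M) :
    μ[n+1] * (μ[n] * (σ[n+1] * (φ[n] * (κ[n] * (φ[n] * (φ[n] * x)))))) =
    η[n] * (η[n] * (ε[n] * x)) := by
  rw [← S.xm n 0 S.m, S.ca n, S.xk n 0 S.p, ← S.mul n, S.al n, S.pu n]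

theorem kay (n : ℕ) (x : M) :
    μ[n] * (σ[n+1] * (φ[n] * (κ[n] * (φ[n] * x)))) =
    η[n] * (κ[n] * x) := by
  calc _ = μ[n] * (σ[n+1] * (φ[n] * (κ[n] * (φ[n] * (ε[n+1] * (φ[n] * x)))))) := by
        symm; rw [S.cr n]
    _ = ε[n+2] * (μ[n] * (σ[n+1] * (φ[n] * (κ[n] * (φ[n] * (φ[n] * x)))))) := by
        rw [S.xp n 0 S.e, S.xk n 1 S.e, S.xp n 1 S.e, S.xs (n+1) 0 S.e, S.xm n 1 S.e]
    _ = μ[n+1] * (η[n+2] * (ε[n+2] * (μ[n] * (σ[n+1] * (φ[n] * (κ[n] * (φ[n] * (φ[n] * x)))))))) := by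
        symm; rw [S.ur (n+1)]
    _ = _ := by
        rw [← S.ar (n+2), ← S.xm n 1 S.p, ← S.xs (n+1) 0 S.p, ← S.xp n 1 S.p, ← S.xk n 1 S.p,
          ← S.xp n 0 S.p, ← S.as_ (n+1), ← S.ca n, S.xm (n+1) 0 S.k, S.kaz n, S.cl n,
          ← S.xu n 1 S.k, ← S.xuz n S.k, ← S.xuz n S.m, S.ul n]

theorem ka (n : ℕ) (x : M) :
    μ[n] * (θ[n] * (σ[n] * (κ[n] * (φ[n] * x)))) =
    η[n] * (ε[n] * (κ[n] * x)) := by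
  rw [S.tc1 n, S.xm n 0 S.e, S.kay n, ← S.xuz n S.e]

theorem kby (n : ℕ) (x : M) :
    μ[n+1] * (σ[n] * (φ[n+1] * (κ[n+1] * (φ[n] * x)))) =
    η[n+1] * (κ[n] * x) := by
  rw [S.nf n, S.xp n 0 S.k, S.ca n, S.ar (n+1), S.cr n, S.pu (n+1), S.xk n 0 S.u, S.xk n 0 S.u,
    S.xuz (n+1) S.u, S.xm n 0 S.u, S.ur n]

theorem kb (n : ℕ) (x : M) :
    μ[n] * (θ[n] * (σ[n] * (κ[n+1] * (φ[n] * x)))) =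
    η[n] * (ε[n] * (κ[n] * x)) := by
  rw [S.qd n, S.kby n, S.xez n S.u]

theorem k3z (n : ℕ) (x : M) :
    μ[n] * (ε[n] * (σ[n] * (κ[n] * (φ[n] * (φ[n] * x))))) =
    η[n] * (ε[n] * (κ[n] * x)) := by
  rw [S.ca n, S.xk n 0 S.p, ← S.tc2 n, S.ka n]

theorem k3 (n : ℕ) (x : M) :
    ε[n] * (σ[n] * (κ[n] * (φ[n] * x))) =
    ε[n] * (κ[n] * (κ[n+1] * (φ[n] * x))) := by
  calc _ = ε[n] * (σ[n] * (κ[n] * (φ[n] * (ε[n+1] * (φ[n] * x))))) := by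
        symm; rw [S.cr n]
    _ = ε[n+1] * (ε[n] * (σ[n] * (κ[n] * (φ[n] * (φ[n] * x))))) := by
        rw [S.xp n 0 S.e, S.xk n 1 S.e, S.xs n 0 S.e, S.xe n 1 S.e]
    _ = μ[n] * (η[n+1] * (ε[n+1] * (ε[n] * (σ[n] * (κ[n] * (φ[n] * (φ[n] * x))))))) := by
        symm; rw [S.ur n]
    _ = _ := by
        rw [← S.ar (n+1), ← S.xe n 1 S.p, ← S.xs n 0 S.p, ← S.xk n 1 S.p, ← S.xp n 0 S.p, ← S.as_ n,
          S.xm n 0 S.k, ← S.ca n, S.k3z n, ← S.xuz n S.k, S.ul n, ← S.xez n S.k, ← S.xk n 0 S.k]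

theorem ck (n : ℕ) (x : M) :
    θ[n] * (σ[n] * (κ[n] * (φ[n] * x))) =
    ε[n] * (κ[n] * (κ[n+1] * (φ[n] * (φ[n] * x)))) := by
  rw [S.tc2 n, ← S.xk n 0 S.p, ← S.ca n, S.k3 n]

theorem nuz (n : ℕ) (x : M) :
    ε[n] * (κ[n] * (ε[n+2] * (ε[n+2] * (μ[n+2] * (φ[n+1] * (φ[n+2] * (κ[n+1] * (φ[n+1] * (φ[n] * x))))))))) =
    κ[n] * x := by
  rw [← S.ca n, S.xk n 1 S.e, S.xk n 1 S.e, S.xk n 1 S.m, S.xk n 0 S.p, S.xk n 1 S.p,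
    S.xe n 1 S.e, S.xe n 1 S.e, S.xe n 1 S.m, S.xez n S.p, S.xe n 1 S.p, ← S.ck n, S.vc n,
    ← S.xk n 0 S.e, S.cr n]

/-- The functional `ε κ` is convolution invertible. -/
theorem nv (n : ℕ) (x : M) :
    ε[n] * (κ[n] * (ν[n+1] * (φ[n] * x))) =
    ε[n] * x := by
  rw [S.vd (n+1), S.xk n 0 S.e, S.xk n 0 S.j, S.xez n S.e, S.xez n S.j, S.nuz n, S.jk n]

theorem cw (n : ℕ) (x : M) :
    θ[n] * (σ[n] * (ε[n+2] * (σ[n+1] * (κ[n+1] * (φ[n] * x))))) =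
    ε[n+1] * (κ[n+1] * (φ[n] * x)) := by
  rw [S.tc1 n, S.xp n 1 S.e, S.xp n 0 S.s, S.xp n 0 S.k, S.ca n, ← S.act (n+1), S.kb (n+1),
    S.su0 (n+1), S.eu (n+2)]

theorem crw (n : ℕ) (x : M) :
    θ[n] * (σ[n] * (ε[n+2] * (σ[n+1] * (κ[n+1] * (φ[n] * (ν[n+1] * (φ[n] * x))))))) =
    x := by
  rw [S.cw n, S.xp n 0 S.v, S.ca n, S.nv (n+1), S.cr n]

/-- The operator `τ` is a right inverse of `θ`. -/
theorem ty (n : ℕ) (x : M) :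
    θ[n] * (τ[n] * x) =
    x := by
  rw [S.yd n, S.crw n]

theorem wt (n : ℕ) (x : M) :
    σ[n] * (ε[n+1] * (μ[n+1] * (φ[n] * (φ[n+1] * (θ[n] * x))))) =
    x := by
  calc _ = σ[n] * (ε[n+1] * (μ[n+1] * (φ[n] * (φ[n+1] * (θ[n] * (σ[n] * (ρ[n] * x))))))) := by
        symm; rw [S.sr n]
    _ = _ := by
        rw [S.vc n, S.sr n]

/-- The operator `τ` is a left inverse of `θ`. -/
theorem yt (n : ℕ) (x : M) :
    τ[n] * (θ[n] * x) =
    x := by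
  calc _ = σ[n] * (ε[n+1] * (μ[n+1] * (φ[n] * (φ[n+1] * (θ[n] * (τ[n] * (θ[n] * x))))))) := by
        symm; rw [S.wt n]
    _ = _ := by
        rw [S.ty n, S.wt n]

theorem thz (n : ℕ) (x : M) :
    μ[n] * (σ[n+1] * (κ[n+2] * (θ[n+1] * (φ[n] * x)))) =
    η[n] * (ε[n+1] * (ρ[n] * x)) := by
  calc _ = μ[n] * (σ[n+1] * (κ[n+2] * (θ[n+1] * (φ[n] * (σ[n] * (ρ[n] * x)))))) := by
        symm; rw [S.sr n]
    _ = _ := by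
        rw [← S.p1b n, ← S.xs n 0 S.k, ← S.hr n, S.ar (n+1), S.su1 n]

/-- Crossing the antipode by means of the braiding. -/
theorem th (n : ℕ) (x : M) :
    σ[n] * (κ[n+1] * (θ[n] * x)) =
    κ[n] * (ε[n+2] * (ρ[n+1] * (φ[n] * x))) := by
  calc _ = σ[n] * (κ[n+1] * (θ[n] * (ε[n] * (φ[n] * x)))) := by
        symm; rw [S.cl n]
    _ = ε[n] * (σ[n+1] * (κ[n+2] * (θ[n+1] * (φ[n] * x)))) := by
        rw [← S.xez n S.t, ← S.xe n 1 S.k, ← S.xez n S.s]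
    _ = μ[n] * (η[n] * (ε[n] * (σ[n+1] * (κ[n+2] * (θ[n+1] * (φ[n] * x)))))) := by
        symm; rw [S.ul n]
    _ = _ := by
        rw [← S.al n, S.xp n 0 S.s, S.xp n 1 S.k, S.xp n 0 S.t, S.ca n, S.as_ n, ← S.xk n 0 S.m,
          S.thz (n+1), S.xk n 0 S.u, S.ur n]

theorem sa (n : ℕ) (x : M) :
    μ[n+2] * (μ[n+1] * (σ[n] * (φ[n+1] * (σ[n+1] * (φ[n] * (φ[n+1] * x)))))) =
    φ[n+1] * (μ[n+1] * (σ[n] * (φ[n+1] * x))) := by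
  rw [S.nf n, ← S.xm n 1 S.m, ← S.xk n 2 S.m, S.xp n 0 S.s, S.ca n, ← S.xp (n+1) 0 S.m,
    ← S.xm (n+1) 0 S.m, S.xp n 0 S.p, ← S.mul (n+1), S.ca (n+1), S.xk n 1 S.p, S.xm n 0 S.p,
    ← S.nf n]

theorem sb (n : ℕ) (x : M) :
    φ[n+1] * (μ[n+1] * (σ[n] * (φ[n+1] * x))) =
    μ[n+2] * (μ[n+1] * (σ[n+2] * (φ[n+1] * (σ[n] * (φ[n+1] * (φ[n+1] * x)))))) := by
  rw [S.mul (n+1), ← S.xs n 0 S.p, S.xm (n+1) 0 S.m, ← S.ca (n+1)]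

theorem sta (n : ℕ) (x : M) :
    μ[n+1] * (σ[n] * (φ[n+1] * (σ[n+1] * (φ[n] * x)))) =
    μ[n+2] * (κ[n+3] * (φ[n+1] * (μ[n+1] * (σ[n] * (φ[n+1] * (φ[n+1] * x)))))) := by
  calc _ = μ[n+1] * (σ[n] * (φ[n+1] * (σ[n+1] * (φ[n] * (ε[n+2] * (φ[n+1] * x)))))) := by
        symm; rw [S.cr (n+1)]
    _ = ε[n+3] * (μ[n+1] * (σ[n] * (φ[n+1] * (σ[n+1] * (φ[n] * (φ[n+1] * x)))))) := by
        rw [S.xp n 1 S.e, S.xs (n+1) 0 S.e, S.xp (n+1) 1 S.e, S.xs n 2 S.e, S.xm (n+1) 1 S.e]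
    _ = μ[n+2] * (η[n+3] * (ε[n+3] * (μ[n+1] * (σ[n] * (φ[n+1] * (σ[n+1] * (φ[n] * (φ[n+1] * x)))))))) := by
        symm; rw [S.ur (n+2)]
    _ = _ := by
        rw [← S.ar (n+3), ← S.xm (n+1) 1 S.p, ← S.xs n 2 S.p, ← S.xp (n+1) 1 S.p, ← S.xs (n+1) 0 S.p,
          ← S.xp n 1 S.p, ← S.as_ (n+2), ← S.ca (n+1), S.xm (n+2) 0 S.k, S.sa n]

theorem stb (n : ℕ) (x : M) :
    μ[n+1] * (σ[n+2] * (φ[n+1] * (σ[n] * (φ[n+1] * x)))) =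
    μ[n+2] * (κ[n+3] * (φ[n+1] * (μ[n+1] * (σ[n] * (φ[n+1] * (φ[n+1] * x)))))) := by
  calc _ = μ[n+1] * (σ[n+2] * (φ[n+1] * (σ[n] * (φ[n+1] * (ε[n+2] * (φ[n+1] * x)))))) := by
        symm; rw [S.cr (n+1)]
    _ = ε[n+3] * (μ[n+1] * (σ[n+2] * (φ[n+1] * (σ[n] * (φ[n+1] * (φ[n+1] * x)))))) := by
        rw [S.xp (n+1) 0 S.e, S.xs n 1 S.e, S.xp (n+1) 1 S.e, S.xs (n+2) 0 S.e, S.xm (n+1) 1 S.e]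
    _ = μ[n+2] * (η[n+3] * (ε[n+3] * (μ[n+1] * (σ[n+2] * (φ[n+1] * (σ[n] * (φ[n+1] * (φ[n+1] * x)))))))) := by
        symm; rw [S.ur (n+2)]
    _ = _ := by
        rw [← S.ar (n+3), ← S.xm (n+1) 1 S.p, ← S.xs (n+2) 0 S.p, ← S.xp (n+1) 1 S.p, ← S.xs n 1 S.p,
          ← S.xp (n+1) 0 S.p, ← S.as_ (n+2), ← S.ca (n+1), S.xm (n+2) 0 S.k, ← S.sb n]

/-- Coassociativity of the coproduct on a product, with the outer factors cancelled. -/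
theorem star (n : ℕ) (x : M) :
    μ[n+1] * (σ[n] * (φ[n+1] * (σ[n+1] * (φ[n] * x)))) =
    μ[n+1] * (σ[n+2] * (φ[n+1] * (σ[n] * (φ[n+1] * x)))) := by
  rw [S.sta n, ← S.stb n]

theorem e1 (n : ℕ) (x : M) :
    μ[n+1] * (σ[n] * (φ[n+1] * (θ[n] * (σ[n] * x)))) =
    μ[n+1] * (θ[n+1] * (σ[n+1] * (σ[n] * (φ[n+1] * x)))) := by
  rw [S.tc1 n, S.xp (n+1) 0 S.e, S.xs n 1 S.e, S.xm (n+1) 0 S.e, S.star n, ← S.xm (n+1) 0 S.e,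
    ← S.tc1 (n+1)]

theorem k5 (n : ℕ) (x : M) :
    μ[n] * (κ[n+1] * (μ[n+1] * (σ[n] * (φ[n+1] * x)))) =
    κ[n] * (ε[n+1] * (μ[n+1] * (φ[n] * x))) := by
  rw [S.nf n, ← S.xm n 0 S.k, S.as_ n, ← S.xk n 1 S.k, ← S.xk n 0 S.m, S.ar (n+1),
    S.xk n 0 S.u, S.ur n]

theorem lt (n : ℕ) (x : M) :
    ε[n+1] * (μ[n+1] * (φ[n] * (θ[n] * x))) =
    ε[n+1] * (ρ[n] * x) := by
  calc _ = ε[n+1] * (μ[n+1] * (φ[n] * (θ[n] * (σ[n] * (ρ[n] * x))))) := by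
        symm; rw [S.sr n]
    _ = _ := by
        rw [S.cpl n, S.eq (n+1), S.cr n]

theorem nt (n : ℕ) (x : M) :
    μ[n+1] * (σ[n] * (φ[n+1] * (θ[n] * x))) =
    μ[n+1] * (θ[n+1] * (σ[n+1] * (θ[n+1] * (φ[n] * x)))) := by
  calc _ = μ[n+1] * (σ[n] * (φ[n+1] * (θ[n] * (σ[n] * (ρ[n] * x))))) := by
        symm; rw [S.sr n]
    _ = _ := by
        rw [S.e1 n, S.p1a n]

theorem opz (n : ℕ) (x : M) :
    κ[n+1] * (ε[n+2] * (μ[n+2] * (φ[n+1] * (ρ[n+1] * (φ[n] * (σ[n] * (θ[n] * x))))))) =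
    κ[n+1] * (ε[n+2] * (ρ[n+1] * (φ[n] * x))) := by
  rw [← S.k5 (n+1), S.p1a (n+1), ← S.ca n, ← S.xp n 0 S.t, ← S.xp n 0 S.m, ← S.p1b n, S.nt n,
    S.xp n 0 S.m, S.xp n 0 S.t, S.xp n 0 S.s, S.xp n 0 S.t, S.ca n, ← S.nt (n+1), S.k5 (n+1),
    S.lt (n+1)]

theorem op (n : ℕ) (x : M) :
    ε[n+2] * (μ[n+2] * (φ[n+1] * (ρ[n+1] * (φ[n] * (σ[n] * (θ[n] * x)))))) =
    ε[n+2] * (ρ[n+1] * (φ[n] * x)) := by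
  calc _ = γ[n+1] * (κ[n+1] * (ε[n+2] * (μ[n+2] * (φ[n+1] * (ρ[n+1] * (φ[n] * (σ[n] * (θ[n] * x)))))))) := by
        symm; rw [S.jk (n+1)]
    _ = _ := by
        rw [S.opz n, S.jk (n+1)]

theorem oi (n : ℕ) (x : M) :
    σ[n] * (γ[n+1] * (ρ[n] * (κ[n] * (ε[n+2] * (μ[n+2] * (φ[n+1] * (ρ[n+1] * (φ[n] * x)))))))) =
    x := by
  calc _ = σ[n] * (γ[n+1] * (ρ[n] * (κ[n] * (ε[n+2] * (μ[n+2] * (φ[n+1] * (ρ[n+1] * (φ[n] * (σ[n] * (θ[n] * (τ[n] * (ρ[n] * x)))))))))))) := by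
        symm; rw [S.ty n, S.sr n]
    _ = _ := by
        rw [S.op n, ← S.th n, S.rs n, S.jk (n+1), S.ty n, S.sr n]

/-- The operator `σ θ` is left colinear. -/
theorem psi (n : ℕ) (x : M) :
    φ[n] * (σ[n] * (θ[n] * x)) =
    σ[n+1] * (θ[n+1] * (φ[n] * x)) := by
  calc _ = σ[n+1] * (γ[n+2] * (ρ[n+1] * (κ[n+1] * (ε[n+3] * (μ[n+3] * (φ[n+2] * (ρ[n+2] * (φ[n+1] * (φ[n] * (σ[n] * (θ[n] * x))))))))))) := by
        symm; rw [S.oi (n+1)]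
    _ = _ := by
        rw [← S.ca n, ← S.xp n 0 S.r, ← S.xp n 0 S.p, ← S.xp n 1 S.m, ← S.xp n 1 S.e, S.op n,
          S.xp n 1 S.e, S.xp n 0 S.r, S.ca n, ← S.th (n+1), S.rs (n+1), S.jk (n+2)]

theorem fin (n : ℕ) (x : M) :
    ε[n+2] * (ρ[n+1] * (φ[n] * (σ[n] * (θ[n] * x)))) =
    x := by
  rw [S.psi n, S.rs (n+1), S.et1 (n+1), S.cr n]

/-- The operator `τ` is the secondary braiding. -/
theorem yw (n : ℕ) (x : M) :
    ε[n+2] * (ρ[n+1] * (φ[n] * (σ[n] * x))) =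
    τ[n] * x := by
  calc _ = ε[n+2] * (ρ[n+1] * (φ[n] * (σ[n] * (θ[n] * (τ[n] * x))))) := by
        symm; rw [S.ty n]
    _ = _ := by
        rw [S.fin n]

theorem hy1 (n : ℕ) (x : M) :
    τ[n] * (μ[n+1] * x) =
    μ[n] * (τ[n+1] * (τ[n] * x)) := by
  calc _ = τ[n] * (μ[n+1] * (θ[n] * (θ[n+1] * (τ[n+1] * (τ[n] * x))))) := by
        symm; rw [S.ty (n+1), S.ty n]
    _ = _ := by
        rw [← S.ht0 n, S.yt n]

theorem hy0 (n : ℕ) (x : M) :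
    τ[n] * (μ[n] * x) =
    μ[n+1] * (τ[n] * (τ[n+1] * x)) := by
  calc _ = τ[n] * (μ[n] * (θ[n+1] * (θ[n] * (τ[n] * (τ[n+1] * x))))) := by
        symm; rw [S.ty n, S.ty (n+1)]
    _ = _ := by
        rw [← S.ht1 n, S.yt n]

end Letters

end Sys

/-! ## The concrete operators -/

section Concrete

open TensorProduct

variable {A : Type*} [Ring A] [Algebra ℂ A] {W : Type*} [AddCommGroup W] [Module ℂ W]

/-- Prepend a tensor factor. -/
def up (α : A ⊗[ℂ] W ≃ₗ[ℂ] W) {X : Type*} [AddCommGroup X] [Module ℂ X] (L : X →ₗ[ℂ] W) :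
    A ⊗[ℂ] X →ₗ[ℂ] W := α.toLinearMap ∘ₗ L.lTensor A

/-- Insert an element in front of a given vector. -/
def J1 (α : A ⊗[ℂ] W ≃ₗ[ℂ] W) (w : W) : A →ₗ[ℂ] W :=
  α.toLinearMap ∘ₗ (TensorProduct.mk ℂ A W).flip w

/-- Insert a two-fold tensor in front of a given vector. -/
def J2 (α : A ⊗[ℂ] W ≃ₗ[ℂ] W) (w : W) : T2 A →ₗ[ℂ] W := up α (J1 α w)

/-- Insert a three-fold tensor in front of a given vector. -/
def J3 (α : A ⊗[ℂ] W ≃ₗ[ℂ] W) (w : W) : T3 A →ₗ[ℂ] W := up α (J2 α w)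

/-- Insert a four-fold tensor in front of a given vector. -/
def J4 (α : A ⊗[ℂ] W ≃ₗ[ℂ] W) (w : W) : T4 A →ₗ[ℂ] W := up α (J3 α w)

/-- The double absorption isomorphism. -/
def abs2 (α : A ⊗[ℂ] W ≃ₗ[ℂ] W) : T2 A ⊗[ℂ] W ≃ₗ[ℂ] W :=
  (TensorProduct.assoc ℂ A A W) ≪≫ₗ (LinearEquiv.lTensor A α) ≪≫ₗ α

variable (α : A ⊗[ℂ] W ≃ₗ[ℂ] W)

theorem up_tmul {X : Type*} [AddCommGroup X] [Module ℂ X] (L : X →ₗ[ℂ] W) (a : A) (x : X) :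
    up α L (a ⊗ₜ x) = J1 α (L x) a := rfl

theorem J2_tmul (w : W) (a b : A) : J2 α w (a ⊗ₜ b) = J1 α (J1 α w b) a := rfl

theorem J3_tmul (w : W) (a : A) (t : T2 A) : J3 α w (a ⊗ₜ t) = J1 α (J2 α w t) a := rfl

theorem J4_tmul (w : W) (a : A) (t : T3 A) : J4 α w (a ⊗ₜ t) = J1 α (J3 α w t) a := rfl

theorem abs2_tmul (t : T2 A) (w : W) : abs2 α (t ⊗ₜ w) = J2 α w t := by
  induction t using TensorProduct.induction_on with
  | zero => simp
  | tmul a b => rfl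
  | add x y hx hy => rw [TensorProduct.add_tmul, map_add, map_add, hx, hy]

theorem J3_assoc (w : W) (t : T2 A) (c : A) :
    J3 α w (TensorProduct.assoc ℂ A A A (t ⊗ₜ c)) = J2 α (J1 α w c) t := by
  induction t using TensorProduct.induction_on with
  | zero => simp
  | tmul a b => rfl
  | add x y hx hy => rw [TensorProduct.add_tmul, map_add, map_add, map_add, hx, hy]

theorem J4_assoc (w : W) (t z : T2 A) :
    J4 α w (TensorProduct.assoc ℂ A A (T2 A) (t ⊗ₜ z)) = J2 α (J2 α w z) t := by
  induction t using TensorProduct.induction_on with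
  | zero => simp
  | tmul a b => rfl
  | add x y hx hy => rw [TensorProduct.add_tmul, map_add, map_add, map_add, hx, hy]

/-- Operators on `W` are determined by their values on inserted vectors. -/
theorem ext1 {N : Type*} [AddCommGroup N] [Module ℂ N] {f g : W →ₗ[ℂ] N}
    (h : ∀ w a, f (J1 α w a) = g (J1 α w a)) : f = g := by
  have : f ∘ₗ α.toLinearMap = g ∘ₗ α.toLinearMap := TensorProduct.ext' fun a w => h w a
  ext x
  obtain ⟨z, rfl⟩ := α.surjective x
  exact LinearMap.congr_fun this z

/-- Insertion at a fixed element, as an operator. -/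
def ins (a : A) : Module.End ℂ W := α.toLinearMap ∘ₗ TensorProduct.mk ℂ A W a

theorem ext2 {N : Type*} [AddCommGroup N] [Module ℂ N] {f g : W →ₗ[ℂ] N}
    (h : ∀ w t, f (J2 α w t) = g (J2 α w t)) : f = g := by
  refine ext1 α fun w a => ?_
  have : f ∘ₗ ins α a = g ∘ₗ ins α a := ext1 α fun w b => h w (a ⊗ₜ b)
  exact LinearMap.congr_fun this w

theorem ext3 {N : Type*} [AddCommGroup N] [Module ℂ N] {f g : W →ₗ[ℂ] N}
    (h : ∀ w t, f (J3 α w t) = g (J3 α w t)) : f = g := by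
  refine ext1 α fun w a => ?_
  have : f ∘ₗ ins α a = g ∘ₗ ins α a := ext2 α fun w b => h w (a ⊗ₜ b)
  exact LinearMap.congr_fun this w

/-- The shift. -/
def shiftHom : Module.End ℂ W →* Module.End ℂ W where
  toFun f := α.toLinearMap ∘ₗ f.lTensor A ∘ₗ α.symm.toLinearMap
  map_one' := by
    refine LinearMap.ext fun x => ?_
    simp [Module.End.one_eq_id]
  map_mul' f g := by
    refine LinearMap.ext fun x => ?_
    simp [Module.End.mul_eq_comp, LinearMap.lTensor_comp]

theorem shift_J1 (f : Module.End ℂ W) (w : W) (a : A) :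
    shiftHom α f (J1 α w a) = J1 α (f w) a := by
  simp [shiftHom, J1]

theorem shift_up {X Y : Type*} [AddCommGroup X] [Module ℂ X] [AddCommGroup Y] [Module ℂ Y]
    (f : Module.End ℂ W) (L : X →ₗ[ℂ] W) (L' : Y →ₗ[ℂ] W) (F : X →ₗ[ℂ] Y)
    (h : ∀ x, f (L x) = L' (F x)) (z : A ⊗[ℂ] X) :
    shiftHom α f (up α L z) = up α L' (F.lTensor A z) := by
  induction z using TensorProduct.induction_on with
  | zero => simp
  | tmul a b => rw [up_tmul, shift_J1, h, LinearMap.lTensor_tmul, up_tmul]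
  | add x y hx hy => simp only [map_add, hx, hy]

theorem shift2_J2 (f : Module.End ℂ W) (w : W) (t : T2 A) :
    shiftHom α (shiftHom α f) (J2 α w t) = J2 α (f w) t := by
  have := shift_up α (shiftHom α f) (J1 α w) (J1 α (f w)) LinearMap.id
    (fun x => shift_J1 α f w x) t
  simpa [J2] using this

/-- Operators from maps `A → A`. -/
def o11 (F : A →ₗ[ℂ] A) : Module.End ℂ W :=
  α.toLinearMap ∘ₗ F.rTensor W ∘ₗ α.symm.toLinearMap

/-- Operators from maps `A → A ⊗ A`. -/
def o12 (F : A →ₗ[ℂ] T2 A) : Module.End ℂ W :=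
  (abs2 α).toLinearMap ∘ₗ F.rTensor W ∘ₗ α.symm.toLinearMap

/-- Operators from functionals. -/
def o10 (F : A →ₗ[ℂ] ℂ) : Module.End ℂ W :=
  (TensorProduct.lid ℂ W).toLinearMap ∘ₗ F.rTensor W ∘ₗ α.symm.toLinearMap

/-- Operators from maps `A ⊗ A → A`. -/
def o21 (F : T2 A →ₗ[ℂ] A) : Module.End ℂ W :=
  α.toLinearMap ∘ₗ F.rTensor W ∘ₗ (abs2 α).symm.toLinearMap

/-- Operators from maps `A ⊗ A → A ⊗ A`. -/
def o22 (F : T2 A →ₗ[ℂ] T2 A) : Module.End ℂ W :=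
  (abs2 α).toLinearMap ∘ₗ F.rTensor W ∘ₗ (abs2 α).symm.toLinearMap

theorem o11_J1 (F : A →ₗ[ℂ] A) (w : W) (a : A) : o11 α F (J1 α w a) = J1 α w (F a) := by
  simp [o11, J1]

theorem o12_J1 (F : A →ₗ[ℂ] T2 A) (w : W) (a : A) : o12 α F (J1 α w a) = J2 α w (F a) := by
  simp [o12, J1, abs2_tmul]

theorem o10_J1 (F : A →ₗ[ℂ] ℂ) (w : W) (a : A) : o10 α F (J1 α w a) = F a • w := by
  simp [o10, J1]

theorem o21_J2 (F : T2 A →ₗ[ℂ] A) (w : W) (t : T2 A) : o21 α F (J2 α w t) = J1 α w (F t) := by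
  simp [o21, J1, ← abs2_tmul]

theorem o22_J2 (F : T2 A →ₗ[ℂ] T2 A) (w : W) (t : T2 A) :
    o22 α F (J2 α w t) = J2 α w (F t) := by
  simp [o22, ← abs2_tmul]

theorem o11_J2 (F : A →ₗ[ℂ] A) (w : W) (t : T2 A) :
    o11 α F (J2 α w t) = J2 α w (F.rTensor A t) := by
  induction t using TensorProduct.induction_on with
  | zero => simp
  | tmul a b => rw [J2_tmul, o11_J1, LinearMap.rTensor_tmul, J2_tmul]
  | add x y hx hy => simp only [map_add, hx, hy]

theorem o10_J2 (F : A →ₗ[ℂ] ℂ) (w : W) (t : T2 A) :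
    o10 α F (J2 α w t) = J1 α w (TensorProduct.lid ℂ A (F.rTensor A t)) := by
  induction t using TensorProduct.induction_on with
  | zero => simp
  | tmul a b => rw [J2_tmul, o10_J1, LinearMap.rTensor_tmul, TensorProduct.lid_tmul, map_smul]
  | add x y hx hy => simp only [map_add, hx, hy]

theorem o12_J2 (F : A →ₗ[ℂ] T2 A) (w : W) (t : T2 A) :
    o12 α F (J2 α w t) = J3 α w (TensorProduct.assoc ℂ A A A (F.rTensor A t)) := by
  induction t using TensorProduct.induction_on with
  | zero => simp
  | tmul a b => rw [J2_tmul, o12_J1, LinearMap.rTensor_tmul, J3_assoc]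
  | add x y hx hy => simp only [map_add, hx, hy]

theorem o12_J3 (F : A →ₗ[ℂ] T2 A) (w : W) (t : T3 A) :
    o12 α F (J3 α w t) = J4 α w (TensorProduct.assoc ℂ A A (T2 A) (F.rTensor (T2 A) t)) := by
  induction t using TensorProduct.induction_on with
  | zero => simp
  | tmul a b => rw [J3_tmul, o12_J1, LinearMap.rTensor_tmul, J4_assoc]
  | add x y hx hy => simp only [map_add, hx, hy]

theorem o22_J3 (F : T2 A →ₗ[ℂ] T2 A) (w : W) (z : T3 A) :
    o22 α F (J3 α w z) = J3 α w (op12 F z) := by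
  obtain ⟨z, rfl⟩ := (TensorProduct.assoc ℂ A A A).surjective z
  induction z using TensorProduct.induction_on with
  | zero => simp
  | tmul t c => rw [J3_assoc, o22_J2, ← J3_assoc]; simp [op12]
  | add x y hx hy => simp only [map_add, hx, hy]

theorem o22_J4 (F : T2 A →ₗ[ℂ] T2 A) (w : W) (z : T4 A) :
    o22 α F (J4 α w z) = J4 α w (op12_4 F z) := by
  obtain ⟨z, rfl⟩ := (TensorProduct.assoc ℂ A A (T2 A)).surjective z
  induction z using TensorProduct.induction_on with
  | zero => simp
  | tmul t c => rw [J4_assoc, o22_J2, ← J4_assoc]; simp [op12_4]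
  | add x y hx hy => simp only [map_add, hx, hy]

theorem o21_J3 (F : T2 A →ₗ[ℂ] A) (w : W) (z : T3 A) :
    o21 α F (J3 α w z) = J2 α w (F.rTensor A ((TensorProduct.assoc ℂ A A A).symm z)) := by
  obtain ⟨z, rfl⟩ := (TensorProduct.assoc ℂ A A A).surjective z
  induction z using TensorProduct.induction_on with
  | zero => simp
  | tmul t c => rw [J3_assoc, o21_J2]; simp [J2_tmul]
  | add x y hx hy => simp only [map_add, hx, hy]

theorem so10_J2 (F : A →ₗ[ℂ] ℂ) (w : W) (t : T2 A) :
    shiftHom α (o10 α F) (J2 α w t) = J1 α w (TensorProduct.rid ℂ A (F.lTensor A t)) := by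
  induction t using TensorProduct.induction_on with
  | zero => simp
  | tmul a b =>
    rw [J2_tmul, shift_J1, o10_J1, LinearMap.lTensor_tmul, TensorProduct.rid_tmul, map_smul]
    simp [J1]
  | add x y hx hy => simp only [map_add, hx, hy]

theorem so11_J2 (F : A →ₗ[ℂ] A) (w : W) (t : T2 A) :
    shiftHom α (o11 α F) (J2 α w t) = J2 α w (F.lTensor A t) :=
  shift_up α _ _ _ F (o11_J1 α F w) t

theorem so12_J2 (F : A →ₗ[ℂ] T2 A) (w : W) (t : T2 A) :
    shiftHom α (o12 α F) (J2 α w t) = J3 α w (F.lTensor A t) :=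
  shift_up α _ _ _ F (o12_J1 α F w) t

theorem so12_J3 (F : A →ₗ[ℂ] T2 A) (w : W) (t : T3 A) :
    shiftHom α (o12 α F) (J3 α w t) =
      J4 α w (((TensorProduct.assoc ℂ A A A).toLinearMap ∘ₗ F.rTensor A).lTensor A t) :=
  shift_up α _ _ _ _ (o12_J2 α F w) t

theorem so21_J3 (F : T2 A →ₗ[ℂ] A) (w : W) (t : T3 A) :
    shiftHom α (o21 α F) (J3 α w t) = J2 α w (F.lTensor A t) :=
  shift_up α _ _ _ F (o21_J2 α F w) t

theorem so22_J3 (F : T2 A →ₗ[ℂ] T2 A) (w : W) (t : T3 A) :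
    shiftHom α (o22 α F) (J3 α w t) = J3 α w (op23 F t) :=
  shift_up α _ _ _ F (o22_J2 α F w) t

theorem so22_J4 (F : T2 A →ₗ[ℂ] T2 A) (w : W) (t : T4 A) :
    shiftHom α (o22 α F) (J4 α w t) = J4 α w (op23_4 F t) :=
  shift_up α _ _ _ (op12 F) (o22_J3 α F w) t

theorem sso22_J4 (F : T2 A →ₗ[ℂ] T2 A) (w : W) (t : T4 A) :
    shiftHom α (shiftHom α (o22 α F)) (J4 α w t) = J4 α w (op34_4 F t) :=
  shift_up α _ _ _ (F.lTensor A) (so22_J3 α F w) t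

theorem sso21_J4 (F : T2 A →ₗ[ℂ] A) (w : W) (t : T4 A) :
    shiftHom α (shiftHom α (o21 α F)) (J4 α w t) = J3 α w ((F.lTensor A).lTensor A t) :=
  shift_up α _ _ _ (F.lTensor A) (so21_J3 α F w) t

theorem sso10_J3 (F : A →ₗ[ℂ] ℂ) (w : W) (t : T3 A) :
    shiftHom α (shiftHom α (o10 α F)) (J3 α w t) =
      J2 α w (((TensorProduct.rid ℂ A).toLinearMap ∘ₗ F.lTensor A).lTensor A t) :=
  shift_up α _ _ _ _ (so10_J2 α F w) t

theorem mA_J3 (w : W) (t : T3 A) : o21 α mA (J3 α w t) = J2 α w (m12 t) := o21_J3 α mA w t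

theorem smA_J3 (w : W) (t : T3 A) : shiftHom α (o21 α mA) (J3 α w t) = J2 α w (m23 t) :=
  so21_J3 α mA w t

theorem mA_assoc : mA ∘ₗ m12 (A := A) = mA ∘ₗ m23 := by
  refine TensorProduct.ext' fun a t => ?_
  induction t using TensorProduct.induction_on with
  | zero => simp
  | tmul b c => simp [m12, m23, mA, mul_assoc]
  | add x y hx hy => simp only [TensorProduct.tmul_add, map_add, hx, hy]

/-- The inverse of the antipode. -/
def κinv (G : BQG A) : A →ₗ[ℂ] A := (LinearEquiv.ofBijective G.κ G.κ_bij).symm.toLinearMap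

theorem κinv_κ (G : BQG A) (a : A) : κinv G (G.κ a) = a :=
  (LinearEquiv.ofBijective G.κ G.κ_bij).symm_apply_apply a

/-- The system of operators of a braided quantum group. -/
def sys (G : BQG A) : Sys (Module.End ℂ W) where
  shift := shiftHom α
  m := o21 α mA
  p := o12 α G.φ
  e := o10 α G.ε
  k := o11 α G.κ
  j := o11 α (κinv G)
  u := ins α 1
  s := o22 α G.σ
  r := o22 α G.σ'
  nat_m f := ext2 α fun w t => by
    simp only [Module.End.mul_apply, shift2_J2, o21_J2, shift_J1]
  nat_p f := ext1 α fun w t => by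
    simp only [Module.End.mul_apply, shift2_J2, o12_J1, shift_J1]
  nat_e f := ext1 α fun w t => by
    simp only [Module.End.mul_apply, o10_J1, shift_J1, map_smul]
  nat_k f := ext1 α fun w t => by
    simp only [Module.End.mul_apply, o11_J1, shift_J1]
  nat_j f := ext1 α fun w t => by
    simp only [Module.End.mul_apply, o11_J1, shift_J1]
  nat_u f := LinearMap.ext fun w => (shift_J1 α f w 1).symm
  nat_s f := ext2 α fun w t => by
    simp only [Module.End.mul_apply, shift2_J2, o22_J2]
  nat_r f := ext2 α fun w t => by
    simp only [Module.End.mul_apply, shift2_J2, o22_J2]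
  ax_sr := ext2 α fun w t => by
    simp only [Module.End.mul_apply, o22_J2, Module.End.one_apply]
    exact congrArg (J2 α w) (LinearMap.congr_fun G.σ_comp t)
  ax_rs := ext2 α fun w t => by
    simp only [Module.End.mul_apply, o22_J2, Module.End.one_apply]
    exact congrArg (J2 α w) (LinearMap.congr_fun G.comp_σ t)
  ax_jk := ext1 α fun w t => by
    simp only [Module.End.mul_apply, o11_J1, Module.End.one_apply, κinv_κ]
  ax_ca := ext1 α fun w t => by
    simp only [Module.End.mul_apply, o12_J1, o12_J2, so12_J2]
    exact congrArg (J3 α w) (LinearMap.congr_fun G.coassoc t)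
  ax_cl := ext1 α fun w t => by
    simp only [Module.End.mul_apply, o12_J1, o10_J2, Module.End.one_apply]
    exact congrArg (J1 α w) (LinearMap.congr_fun G.counit_left t)
  ax_cr := ext1 α fun w t => by
    simp only [Module.End.mul_apply, o12_J1, so10_J2, Module.End.one_apply]
    exact congrArg (J1 α w) (LinearMap.congr_fun G.counit_right t)
  ax_hl := ext3 α fun w t => by
    simp only [Module.End.mul_apply, mA_J3, smA_J3, o22_J2, o22_J3, so22_J3]
    exact congrArg (J2 α w) (LinearMap.congr_fun G.braid_mul_left t)
  ax_hr := ext3 α fun w t => by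
    simp only [Module.End.mul_apply, mA_J3, smA_J3, o22_J2, o22_J3, so22_J3]
    exact congrArg (J2 α w) (LinearMap.congr_fun G.braid_mul_right t)
  ax_as := ext3 α fun w t => by
    simp only [Module.End.mul_apply, mA_J3, smA_J3, o21_J2]
    exact congrArg (J1 α w) (LinearMap.congr_fun mA_assoc t)
  ax_ul := ext1 α fun w a => by
    have h : ins α 1 (J1 α w a) = J2 α w (1 ⊗ₜ a) := rfl
    simp [Module.End.mul_apply, h, o21_J2, mA]
  ax_ur := ext1 α fun w a => by
    have h : shiftHom α (ins α 1) (J1 α w a) = J2 α w (a ⊗ₜ 1) := by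
      rw [shift_J1]; rfl
    simp [Module.End.mul_apply, h, o21_J2, mA]
  ax_mul := ext2 α fun w t => by
    simp only [Module.End.mul_apply, o21_J2, o12_J1, so12_J2, o12_J3, so22_J4, sso21_J4, mA_J3]
    exact congrArg (J2 α w) (LinearMap.congr_fun G.comul_mul t)
  ax_mx := ext2 α fun w t => by
    simp only [Module.End.mul_apply, so12_J2, o22_J3, so12_J3, o22_J4, o12_J2, so22_J3, sso22_J4]
    exact congrArg (J4 α w) (LinearMap.congr_fun G.mixed_coassoc t)
  ax_al := ext1 α fun w a => by
    simp only [Module.End.mul_apply, o12_J1, o11_J2, o21_J2, o10_J1]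
    refine (congrArg (J1 α w) (LinearMap.congr_fun G.antipode_left a)).trans ?_
    simp [Algebra.algebraMap_eq_smul_one, J1, ins]
  ax_ar := ext1 α fun w a => by
    simp only [Module.End.mul_apply, o12_J1, so11_J2, o21_J2, o10_J1]
    refine (congrArg (J1 α w) (LinearMap.congr_fun G.antipode_right a)).trans ?_
    simp [Algebra.algebraMap_eq_smul_one, J1, ins]

/-- The operator `y` is given by the secondary braiding. -/
theorem y_eq (G : BQG A) : (sys α G).y = o22 α G.τ := by
  refine ext2 α fun w t => ?_
  have h := (sys α G).yw 0 1
  simp only [Sys.sh, mul_one] at h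
  rw [← h]
  simp only [sys, Module.End.mul_apply, o22_J2, o12_J2, so22_J3, sso10_J3]
  rfl

theorem J1_injective (w : W) (hw : w ≠ 0) : Function.Injective (J1 α w) := by
  have h : Function.Injective (LinearMap.toSpanSingleton ℂ W w) :=
    LinearMap.ker_eq_bot.mp (LinearMap.ker_toSpanSingleton ℂ hw)
  have h2 := Module.Flat.lTensor_preserves_injective_linearMap (M := A) _ h
  intro a b hab
  have h3 : (LinearMap.toSpanSingleton ℂ W w).lTensor A (a ⊗ₜ 1) =
      (LinearMap.toSpanSingleton ℂ W w).lTensor A (b ⊗ₜ 1) := by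
    simpa [J1] using hab
  simpa using congrArg (TensorProduct.rid ℂ A) (h2 h3)

theorem J2_injective (w : W) (hw : w ≠ 0) : Function.Injective (J2 α w) :=
  α.injective.comp (Module.Flat.lTensor_preserves_injective_linearMap _ (J1_injective α w hw))

theorem main_aux (α : A ⊗[ℂ] W ≃ₗ[ℂ] W) [Nontrivial W] (G : BQG A) :
    G.τ ∘ₗ m12 = m23 ∘ₗ op12 G.τ ∘ₗ op23 G.τ ∧
    G.τ ∘ₗ m23 = m12 ∘ₗ op23 G.τ ∘ₗ op12 G.τ := by
  obtain ⟨w, hw⟩ := exists_ne (0 : W)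
  have h0 := (sys α G).hy0 0 1
  have h1 := (sys α G).hy1 0 1
  simp only [Sys.sh, mul_one, y_eq] at h0 h1
  simp only [sys] at h0 h1
  constructor <;> refine LinearMap.ext fun t => J2_injective α w hw ?_
  · have h := LinearMap.congr_fun h0 (J3 α w t)
    simpa only [Module.End.mul_apply, mA_J3, smA_J3, o22_J2, o22_J3, so22_J3,
      LinearMap.comp_apply] using h
  · have h := LinearMap.congr_fun h1 (J3 α w t)
    simpa only [Module.End.mul_apply, mA_J3, smA_J3, o22_J2, o22_J3, so22_J3,
      LinearMap.comp_apply] using h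

/-- Sequences absorb one more entry. -/
def consEquiv (ι : Type*) : ι × (ℕ → ι) ≃ (ℕ → ι) where
  toFun q := fun n => Nat.casesOn n q.1 q.2
  invFun f := (f 0, fun n => f (n + 1))
  left_inv q := rfl
  right_inv f := by
    funext n
    cases n <;> rfl

/-- The infinite tensor power absorbs one more tensor factor. -/
def absorb {ι : Type*} (b : Module.Basis ι ℂ A) :
    A ⊗[ℂ] ((ℕ → ι) →₀ ℂ) ≃ₗ[ℂ] ((ℕ → ι) →₀ ℂ) :=
  (TensorProduct.congr b.repr (LinearEquiv.refl ℂ _)) ≪≫ₗ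
    (finsuppTensorFinsupp' ℂ ι (ℕ → ι)) ≪≫ₗ
    (Finsupp.domLCongr (consEquiv ι))

end Concrete

end BQGProof

/-- Hexagon-type multiplication relations for the secondary braiding:
`τ(m⊗id) = (id⊗m)(τ⊗id)(id⊗τ)` and `τ(id⊗m) = (m⊗id)(id⊗τ)(τ⊗id)`. -/
theorem bqg_tau_mul {A : Type*} [Ring A] [Algebra ℂ A] (G : BQG A) :
    G.τ ∘ₗ m12 = m23 ∘ₗ op12 G.τ ∘ₗ op23 G.τ ∧
    G.τ ∘ₗ m23 = m12 ∘ₗ op23 G.τ ∘ₗ op12 G.τ := by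
  rcases subsingleton_or_nontrivial A with h | h
  · have : Subsingleton (T2 A) := ⟨fun a b => by
      have hz : ∀ c : T2 A, c = 0 := fun c => by
        induction c using TensorProduct.induction_on with
        | zero => rfl
        | tmul a b => rw [Subsingleton.elim a 0, TensorProduct.zero_tmul]
        | add x y hx hy => rw [hx, hy, add_zero]
      rw [hz a, hz b]⟩
    exact ⟨LinearMap.ext fun _ => Subsingleton.elim _ _,
      LinearMap.ext fun _ => Subsingleton.elim _ _⟩
  · have hi := (Module.Basis.ofVectorSpace ℂ A).index_nonempty
    exact BQGProof.main_aux (BQGProof.absorb (Module.Basis.ofVectorSpace ℂ A)) G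
end
end

section
/- In a braided quantum group, the antipode is braided anticomultiplicative: φκ = σ(κ⊗κ)φ. -/
open TensorProduct LinearMap

noncomputable section

variable (A : Type*) [Ring A] [Algebra ℂ A]

variable {A}

namespace BQG

variable {A : Type*} [Ring A] [Algebra ℂ A] (G : BQG A)

/-- The two-sided multiplication `x ↦ a x d` on `A ⊗ A`. -/
def sand (a d : A) : T2 A →ₗ[ℂ] T2 A :=
  TensorProduct.map (LinearMap.mulLeft ℂ a) (LinearMap.mulRight ℂ d)

theorem sand_tmul (a d x y : A) : sand a d (x ⊗ₜ[ℂ] y) = (a * x) ⊗ₜ[ℂ] (y * d) := by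
  simp [sand]

theorem sand_sand (a a' d d' : A) (x : T2 A) :
    sand a d (sand a' d' x) = sand (a * a') (d' * d) x := by
  induction x using TensorProduct.induction_on with
  | zero => simp
  | tmul x y => simp [sand_tmul, mul_assoc]
  | add x y hx hy => simp only [map_add, hx, hy]

theorem sand_one (x : T2 A) : sand 1 1 x = x := by
  induction x using TensorProduct.induction_on with
  | zero => simp
  | tmul x y => simp [sand_tmul]
  | add x y hx hy => simp only [map_add, hx, hy]

theorem sand_add_left (a a' d : A) (x : T2 A) :
    sand (a + a') d x = sand a d x + sand a' d x := by
  induction x using TensorProduct.induction_on with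
  | zero => simp
  | tmul x y => simp [sand_tmul, add_mul, TensorProduct.add_tmul]
  | add x y hx hy =>
    simp only [map_add, hx, hy]
    abel

theorem sand_smul_left (c : ℂ) (a d : A) (x : T2 A) :
    sand (c • a) d x = c • sand a d x := by
  induction x using TensorProduct.induction_on with
  | zero => simp
  | tmul x y => simp [sand_tmul, TensorProduct.smul_tmul']
  | add x y hx hy => simp only [map_add, smul_add, hx, hy]

/-- The braided product on `A ⊗ A`. -/
def M : T2 A →ₗ[ℂ] T2 A →ₗ[ℂ] T2 A :=
  TensorProduct.curry (mm ∘ₗ op23_4 G.σ ∘ₗ (TensorProduct.assoc ℂ A A (T2 A)).toLinearMap)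

theorem M_tmul (a b c d : A) :
    G.M (a ⊗ₜ[ℂ] b) (c ⊗ₜ[ℂ] d) = sand a d (G.σ (b ⊗ₜ[ℂ] c)) := by
  simp only [M, op23_4, op12, TensorProduct.curry_apply, LinearMap.comp_apply,
    LinearEquiv.coe_coe, TensorProduct.assoc_tmul, LinearMap.lTensor_tmul,
    TensorProduct.assoc_symm_tmul, LinearMap.rTensor_tmul]
  generalize G.σ (b ⊗ₜ[ℂ] c) = x
  induction x using TensorProduct.induction_on with
  | zero => simp
  | tmul x y => simp [sand_tmul, mm, m12, mA]
  | add x y hx hy => simp only [map_add, TensorProduct.add_tmul, TensorProduct.tmul_add, hx, hy]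

theorem σ_mul_left (a b c : A) :
    G.σ ((a * b) ⊗ₜ[ℂ] c) = G.M (1 ⊗ₜ[ℂ] a) (G.σ (b ⊗ₜ[ℂ] c)) := by
  have h := LinearMap.congr_fun G.braid_mul_left (a ⊗ₜ[ℂ] (b ⊗ₜ[ℂ] c))
  simp only [m12, op23, LinearMap.comp_apply, LinearEquiv.coe_coe, mA,
    TensorProduct.assoc_symm_tmul, LinearMap.rTensor_tmul, LinearMap.lTensor_tmul,
    LinearMap.mul'_apply] at h
  rw [h]
  generalize G.σ (b ⊗ₜ[ℂ] c) = x
  induction x using TensorProduct.induction_on with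
  | zero => simp
  | tmul x y =>
    rw [M_tmul]
    simp only [op12, LinearMap.comp_apply, LinearEquiv.coe_coe,
      TensorProduct.assoc_symm_tmul, LinearMap.rTensor_tmul]
    generalize G.σ (a ⊗ₜ[ℂ] x) = z
    induction z using TensorProduct.induction_on with
    | zero => simp
    | tmul u v => simp [sand_tmul, m23, mA]
    | add x y hx hy => simp only [map_add, TensorProduct.add_tmul, hx, hy]
  | add x y hx hy => simp only [map_add, TensorProduct.tmul_add, hx, hy]

theorem σ_mul_right (a b c : A) :
    G.σ (a ⊗ₜ[ℂ] (b * c)) = G.M (G.σ (a ⊗ₜ[ℂ] b)) (c ⊗ₜ[ℂ] 1) := by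
  have h := LinearMap.congr_fun G.braid_mul_right (a ⊗ₜ[ℂ] (b ⊗ₜ[ℂ] c))
  simp only [m23, op12, LinearMap.comp_apply, LinearEquiv.coe_coe, mA,
    TensorProduct.assoc_symm_tmul, LinearMap.rTensor_tmul, LinearMap.lTensor_tmul,
    LinearMap.mul'_apply] at h
  rw [h]
  generalize G.σ (a ⊗ₜ[ℂ] b) = x
  induction x using TensorProduct.induction_on with
  | zero => simp
  | tmul x y =>
    rw [M_tmul]
    simp only [op23, TensorProduct.assoc_tmul, LinearMap.lTensor_tmul]
    generalize G.σ (y ⊗ₜ[ℂ] c) = z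
    induction z using TensorProduct.induction_on with
    | zero => simp
    | tmul u v => simp [sand_tmul, m12, mA]
    | add x y hx hy => simp only [map_add, TensorProduct.tmul_add, hx, hy]
  | add x y hx hy =>
    simp only [map_add, TensorProduct.add_tmul, LinearMap.add_apply, hx, hy]

theorem σ_σ' (x : T2 A) : G.σ (G.σ' x) = x := LinearMap.congr_fun G.σ_comp x

theorem M_one_left_aux (x : T2 A) : G.M (1 ⊗ₜ[ℂ] 1) x = x := by
  rw [← G.σ_σ' x]
  generalize G.σ' x = z
  induction z using TensorProduct.induction_on with
  | zero => simp
  | tmul u v => rw [← σ_mul_left, one_mul]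
  | add x y hx hy => simp only [map_add, hx, hy]

theorem M_one_right_aux (x : T2 A) : G.M x (1 ⊗ₜ[ℂ] 1) = x := by
  rw [← G.σ_σ' x]
  generalize G.σ' x = z
  induction z using TensorProduct.induction_on with
  | zero => simp
  | tmul u v => rw [← σ_mul_right, mul_one]
  | add x y hx hy => simp only [map_add, LinearMap.add_apply, hx, hy]

theorem σ_one_left (a : A) : G.σ (1 ⊗ₜ[ℂ] a) = a ⊗ₜ[ℂ] 1 := by
  have h := G.M_one_left_aux (a ⊗ₜ[ℂ] 1)
  rwa [M_tmul, sand_one] at h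

theorem M_sand_left (a d e f : A) (x : T2 A) :
    G.M (sand a d x) (e ⊗ₜ[ℂ] f) = sand a f (G.M x (G.σ (d ⊗ₜ[ℂ] e))) := by
  induction x using TensorProduct.induction_on with
  | zero => simp
  | tmul p q =>
    rw [sand_tmul, M_tmul, σ_mul_left]
    generalize G.σ (d ⊗ₜ[ℂ] e) = y
    induction y using TensorProduct.induction_on with
    | zero => simp
    | tmul r s => simp only [M_tmul, sand_sand, mul_one]
    | add x y hx hy => simp only [map_add, hx, hy]
  | add x y hx hy => simp only [map_add, LinearMap.add_apply, hx, hy]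

theorem M_sand_right (a b c f : A) (y : T2 A) :
    G.M (a ⊗ₜ[ℂ] b) (sand c f y) = sand a f (G.M (G.σ (b ⊗ₜ[ℂ] c)) y) := by
  induction y using TensorProduct.induction_on with
  | zero => simp
  | tmul r s =>
    rw [sand_tmul, M_tmul, σ_mul_right]
    generalize G.σ (b ⊗ₜ[ℂ] c) = y
    induction y using TensorProduct.induction_on with
    | zero => simp
    | tmul p q => simp only [M_tmul, sand_sand, one_mul]
    | add x y hx hy => simp only [map_add, LinearMap.add_apply, hx, hy]
  | add x y hx hy => simp only [map_add, hx, hy]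

theorem M_assoc (x y z : T2 A) : G.M (G.M x y) z = G.M x (G.M y z) := by
  induction x using TensorProduct.induction_on with
  | zero => simp
  | add x y hx hy => simp only [map_add, LinearMap.add_apply, hx, hy]
  | tmul a b =>
  induction y using TensorProduct.induction_on with
  | zero => simp
  | add x y hx hy => simp only [map_add, LinearMap.add_apply, hx, hy]
  | tmul c d =>
  induction z using TensorProduct.induction_on with
  | zero => simp
  | add x y hx hy => simp only [map_add, hx, hy]
  | tmul e f => rw [M_tmul, M_sand_left, M_tmul, M_sand_right]

theorem φ_mul (a b : A) : G.φ (a * b) = G.M (G.φ a) (G.φ b) := by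
  have h := LinearMap.congr_fun G.comul_mul (a ⊗ₜ[ℂ] b)
  simpa [mA, M] using h

theorem M_σ (a b c d : A) :
    G.M (a ⊗ₜ[ℂ] b) (G.σ (c ⊗ₜ[ℂ] d)) = sand a 1 (G.σ ((b * c) ⊗ₜ[ℂ] d)) := by
  rw [σ_mul_left]
  generalize G.σ (c ⊗ₜ[ℂ] d) = y
  induction y using TensorProduct.induction_on with
  | zero => simp
  | tmul r s => simp only [M_tmul, sand_sand, mul_one]
  | add x y hx hy => simp only [map_add, hx, hy]

/-- `ψ = σ(κ⊗κ)φ`. -/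
def ψ : A →ₗ[ℂ] T2 A := G.σ ∘ₗ TensorProduct.map G.κ G.κ ∘ₗ G.φ

theorem coassoc_apply (a : A) :
    TensorProduct.assoc ℂ A A A (G.φ.rTensor A (G.φ a)) = G.φ.lTensor A (G.φ a) :=
  LinearMap.congr_fun G.coassoc a

/-- convolution of `f g : A → A ⊗ A` -/
def conv (f g : A →ₗ[ℂ] T2 A) : A →ₗ[ℂ] T2 A :=
  TensorProduct.lift G.M ∘ₗ TensorProduct.map f g ∘ₗ G.φ

theorem conv_assoc (f g h : A →ₗ[ℂ] T2 A) :
    G.conv (G.conv f g) h = G.conv f (G.conv g h) := by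
  ext a
  let T : T3 A →ₗ[ℂ] T2 A := TensorProduct.lift G.M ∘ₗ
    TensorProduct.map f (TensorProduct.lift G.M ∘ₗ TensorProduct.map g h)
  have h1 : ∀ t : T2 A, TensorProduct.lift G.M (TensorProduct.map (G.conv f g) h t)
      = T (TensorProduct.assoc ℂ A A A (G.φ.rTensor A t)) := by
    intro t
    induction t using TensorProduct.induction_on with
    | zero => simp
    | add x y hx hy => simp only [map_add, hx, hy]
    | tmul u v =>
      simp only [conv, TensorProduct.map_tmul, LinearMap.comp_apply, LinearMap.rTensor_tmul,
        TensorProduct.lift.tmul]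
      generalize G.φ u = s
      induction s using TensorProduct.induction_on with
      | zero => simp
      | add x y hx hy =>
        simp only [map_add, LinearMap.add_apply, TensorProduct.add_tmul, hx, hy]
      | tmul p q => simp [T, M_assoc]
  have h2 : ∀ t : T2 A, TensorProduct.lift G.M (TensorProduct.map f (G.conv g h) t)
      = T (G.φ.lTensor A t) := by
    intro t
    induction t using TensorProduct.induction_on with
    | zero => simp
    | add x y hx hy => simp only [map_add, hx, hy]
    | tmul u v => simp [T, conv]
  have := h1 (G.φ a)
  rw [coassoc_apply, ← h2] at this
  exact this

/-- `a ↦ ε(a) x` -/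
def ez (x : T2 A) : A →ₗ[ℂ] T2 A := LinearMap.toSpanSingleton ℂ (T2 A) x ∘ₗ G.ε

theorem ez_apply (x : T2 A) (a : A) : G.ez x a = G.ε a • x := by simp [ez]

theorem conv_ez_left (x : T2 A) (f : A →ₗ[ℂ] T2 A) : G.conv (G.ez x) f = G.M x ∘ₗ f := by
  ext a
  have h1 : ∀ t : T2 A, TensorProduct.lift G.M (TensorProduct.map (G.ez x) f t)
      = G.M x (f (TensorProduct.lid ℂ A (G.ε.rTensor A t))) := by
    intro t
    induction t using TensorProduct.induction_on with
    | zero => simp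
    | add x y hx hy => simp only [map_add, hx, hy]
    | tmul u v => simp [ez_apply]
  have h2 := h1 (G.φ a)
  have h3 := LinearMap.congr_fun G.counit_left a
  simp only [LinearMap.comp_apply, LinearEquiv.coe_coe, LinearMap.id_apply] at h3
  rw [h3] at h2
  exact h2

theorem conv_ez_right (x : T2 A) (f : A →ₗ[ℂ] T2 A) : G.conv f (G.ez x) = G.M.flip x ∘ₗ f := by
  ext a
  have h1 : ∀ t : T2 A, TensorProduct.lift G.M (TensorProduct.map f (G.ez x) t)
      = G.M (f (TensorProduct.rid ℂ A (G.ε.lTensor A t))) x := by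
    intro t
    induction t using TensorProduct.induction_on with
    | zero => simp
    | add x y hx hy => simp only [map_add, LinearMap.add_apply, hx, hy]
    | tmul u v => simp [ez_apply]
  have h2 := h1 (G.φ a)
  have h3 := LinearMap.congr_fun G.counit_right a
  simp only [LinearMap.comp_apply, LinearEquiv.coe_coe, LinearMap.id_apply] at h3
  rw [h3] at h2
  exact h2

theorem key_aux (u b : A) :
    TensorProduct.lift G.M (TensorProduct.map G.φ (G.σ ∘ₗ TensorProduct.map G.κ G.κ)
      (TensorProduct.assoc ℂ A A A (G.φ u ⊗ₜ[ℂ] b))) = (u * G.κ b) ⊗ₜ[ℂ] 1 := by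
  -- `a ⊗ w ↦ a σ(w ⊗ κ b)`
  let R : T2 A →ₗ[ℂ] T2 A := TensorProduct.lift
    (LinearMap.mk₂ ℂ (fun a w => sand a 1 (G.σ (w ⊗ₜ[ℂ] G.κ b)))
      (by intro a a' w; exact sand_add_left _ _ _ _)
      (by intro c a w; exact sand_smul_left _ _ _ _)
      (by intro a w w'; simp [TensorProduct.add_tmul])
      (by intro c a w; simp [← TensorProduct.smul_tmul']))
  let Q : T3 A →ₗ[ℂ] T2 A := R ∘ₗ (mA ∘ₗ G.κ.lTensor A).lTensor A
  have h1 : ∀ t : T2 A, TensorProduct.lift G.M (TensorProduct.map G.φ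
      (G.σ ∘ₗ TensorProduct.map G.κ G.κ) (TensorProduct.assoc ℂ A A A (t ⊗ₜ[ℂ] b)))
      = Q (TensorProduct.assoc ℂ A A A (G.φ.rTensor A t)) := by
    intro t
    induction t using TensorProduct.induction_on with
    | zero => simp
    | add x y hx hy => simp only [map_add, TensorProduct.add_tmul, hx, hy]
    | tmul u v =>
      simp only [TensorProduct.assoc_tmul, TensorProduct.map_tmul, LinearMap.comp_apply,
        TensorProduct.lift.tmul, LinearMap.rTensor_tmul]
      generalize G.φ u = s
      induction s using TensorProduct.induction_on with
      | zero => simp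
      | add x y hx hy =>
        simp only [map_add, LinearMap.add_apply, TensorProduct.add_tmul, hx, hy]
      | tmul p q => simp [Q, R, M_σ, mA]
  have h2 : ∀ t : T2 A, Q (G.φ.lTensor A t)
      = ((TensorProduct.rid ℂ A (G.ε.lTensor A t)) * G.κ b) ⊗ₜ[ℂ] 1 := by
    intro t
    induction t using TensorProduct.induction_on with
    | zero => simp
    | add x y hx hy => simp only [map_add, add_mul, TensorProduct.add_tmul, hx, hy]
    | tmul u v =>
      have h := LinearMap.congr_fun G.antipode_right v
      simp only [LinearMap.comp_apply] at h
      simp only [Q, LinearMap.comp_apply, LinearMap.lTensor_tmul, h]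
      simp [R, Algebra.algebraMap_eq_smul_one, ← TensorProduct.smul_tmul', σ_one_left, sand_tmul]
  rw [h1, coassoc_apply, h2]
  have h3 := LinearMap.congr_fun G.counit_right u
  simp only [LinearMap.comp_apply, LinearEquiv.coe_coe, LinearMap.id_apply] at h3
  rw [h3]

theorem conv_φ_ψ : G.conv G.φ G.ψ = G.ez (1 ⊗ₜ[ℂ] 1) := by
  ext a
  have h1 : ∀ t : T2 A, TensorProduct.lift G.M (TensorProduct.map G.φ G.ψ t)
      = TensorProduct.lift G.M (TensorProduct.map G.φ (G.σ ∘ₗ TensorProduct.map G.κ G.κ)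
        (G.φ.lTensor A t)) := by
    intro t
    induction t using TensorProduct.induction_on with
    | zero => simp
    | add x y hx hy => simp only [map_add, hx, hy]
    | tmul u v => simp [ψ]
  have h2 : ∀ t : T2 A, TensorProduct.lift G.M (TensorProduct.map G.φ
        (G.σ ∘ₗ TensorProduct.map G.κ G.κ)
        (TensorProduct.assoc ℂ A A A (G.φ.rTensor A t)))
      = (mA (G.κ.lTensor A t)) ⊗ₜ[ℂ] 1 := by
    intro t
    induction t using TensorProduct.induction_on with
    | zero => simp
    | add x y hx hy => simp only [map_add, TensorProduct.add_tmul, hx, hy]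
    | tmul u v => rw [LinearMap.rTensor_tmul, key_aux]; simp [mA]
  have h := LinearMap.congr_fun G.antipode_right a
  simp only [LinearMap.comp_apply] at h
  have h3 := h1 (G.φ a)
  rw [← coassoc_apply, h2, h] at h3
  simp only [conv, LinearMap.comp_apply, h3, ez_apply]
  simp [Algebra.algebraMap_eq_smul_one, ← TensorProduct.smul_tmul']

theorem conv_κ_φ : G.conv (G.φ ∘ₗ G.κ) G.φ = G.ez (G.φ 1) := by
  ext a
  have h1 : ∀ t : T2 A, TensorProduct.lift G.M (TensorProduct.map (G.φ ∘ₗ G.κ) G.φ t)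
      = G.φ (mA (G.κ.rTensor A t)) := by
    intro t
    induction t using TensorProduct.induction_on with
    | zero => simp
    | add x y hx hy => simp only [map_add, hx, hy]
    | tmul u v => simp [mA, φ_mul]
  have h := LinearMap.congr_fun G.antipode_left a
  simp only [LinearMap.comp_apply] at h
  have h3 := h1 (G.φ a)
  rw [h] at h3
  simp only [conv, LinearMap.comp_apply, h3, ez_apply]
  simp [Algebra.algebraMap_eq_smul_one]

theorem conv_M_left (x : T2 A) (f g : A →ₗ[ℂ] T2 A) :
    G.conv (G.M x ∘ₗ f) g = G.M x ∘ₗ G.conv f g := by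
  rw [← conv_ez_left, ← conv_ez_left, conv_assoc]

theorem ez_φ_one : G.ez (G.φ 1) = G.ez (1 ⊗ₜ[ℂ] 1) := by
  have h : G.M (G.φ 1) ∘ₗ G.φ = G.φ := by
    ext a
    rw [LinearMap.comp_apply, ← φ_mul, one_mul]
  have h1 := G.conv_M_left (G.φ 1) G.φ G.ψ
  rw [h, conv_φ_ψ] at h1
  rw [h1]
  ext a
  simp [ez_apply, M_one_right_aux]

end BQG

/-- The antipode is braided anticomultiplicative: `φκ = σ(κ⊗κ)φ`. -/
theorem bqg_antipode_anticomul {A : Type*} [Ring A] [Algebra ℂ A] (G : BQG A) :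
    G.φ ∘ₗ G.κ = G.σ ∘ₗ TensorProduct.map G.κ G.κ ∘ₗ G.φ := by
  have h := G.conv_assoc (G.φ ∘ₗ G.κ) G.φ G.ψ
  rw [G.conv_κ_φ, G.ez_φ_one, G.conv_φ_ψ, G.conv_ez_left, G.conv_ez_right] at h
  have h1 : G.M (1 ⊗ₜ[ℂ] 1) ∘ₗ G.ψ = G.ψ := by
    ext a
    simp [BQG.M_one_left_aux]
  have h2 : G.M.flip (1 ⊗ₜ[ℂ] 1) ∘ₗ (G.φ ∘ₗ G.κ) = G.φ ∘ₗ G.κ := by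
    ext a
    simp [BQG.M_one_right_aux]
  rw [h1, h2] at h
  rw [← h]
  rfl
end
end
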